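/- Comparison of derivatives of the Poisson integral and the Poisson-type integral: Let 1 < p < ∞ and f ∈ L^p(ℝ^d; ℝ^d). Set F = (f, 0) : ℝ^d → ℝ^{d+1}, let u(x,t) = (p_t ∗ F)(x) and U(x,t) = (ℙ_t ∗ F)(x). Then there exists a constant C = C(d,p) > 0 such that for every t > 0: ‖∂_t u(·,t)‖_{L^p(ℝ^d)} ≤ C ‖∂_t U(·,t)‖_{L^p(ℝ^d)}, and for each k = 1, …, d: ‖∂_{x_k} u(·,t)‖_{L^p(ℝ^d)} ≤ C ‖∂_{x_k} U(·,t)‖_{L^p(ℝ^d)}. -/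

import Mathlib

open MeasureTheory Filter Set
open scoped ENNReal NNReal Topology

noncomputable section

abbrev Ed (d : ℕ) : Type := EuclideanSpace ℝ (Fin d)

/-- The surface measure `ω_d` of the unit sphere in `ℝ^{d+1}`. -/
def sphereVol (d : ℕ) : ℝ :=
  ((d : ℝ) + 1) * (volume (Metric.ball (0 : EuclideanSpace ℝ (Fin (d+1))) 1)).toReal

/-- The Poisson kernel `p_t(x)` for the upper half-space `ℝ^d × (0,∞)`. -/
def halfSpacePoissonKernel (d : ℕ) (t : ℝ) (x : Ed d) : ℝ :=
  (2 / sphereVol d) * t / (‖x‖ ^ 2 + t ^ 2) ^ (((d : ℝ) + 1) / 2)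

/-- The (componentwise) Poisson integral `u(x,t) = (p_t ∗ f)(x)` of a vector field. -/
def poissonInt (d m : ℕ) (f : Ed d → Ed m) (x : Ed d) (t : ℝ) : Ed m :=
  ∫ y, halfSpacePoissonKernel d t y • f (x - y)

/-- The vector `(x, t) ∈ ℝ^{d+1}`. -/
def snocVec (d : ℕ) (x : Ed d) (t : ℝ) : Fin (d + 1) → ℝ := Fin.snoc (fun i => x i) t

/-- The entries `𝔭_t^{jk}(x)` of the Poisson-type matrix kernel `ℙ_t`. -/
def pEntry (d : ℕ) (t : ℝ) (j k : Fin (d + 1)) (x : Ed d) : ℝ :=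
  (2 * ((d : ℝ) + 1) / sphereVol d) * t * snocVec d x t j *
    snocVec d x t k / (‖x‖ ^ 2 + t ^ 2) ^ (((d : ℝ) + 3) / 2)

/-- The Poisson-type integral `U(x,t) = (ℙ_t ∗ F)(x)`, the convolution taken in the sense of
matrix–vector multiplication. -/
def pConv (d : ℕ) (t : ℝ) (F : Ed d → Ed (d + 1)) (x : Ed d) : Ed (d + 1) :=
  (EuclideanSpace.equiv (Fin (d + 1)) ℝ).symm
    (fun i => ∫ y, ∑ j, pEntry d t i j y * F (x - y) j)

/-- The field `F = (f, 0) : ℝ^d → ℝ^{d+1}` obtained by appending a zero component. -/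
def appendZero (d : ℕ) (f : Ed d → Ed d) : Ed d → Ed (d + 1) :=
  fun y => (EuclideanSpace.equiv (Fin (d + 1)) ℝ).symm (Fin.snoc (fun i => f y i) 0)

open scoped ContDiff in
/-- smooth away from the origin and homogeneous of degree `-n` -/
structure HomK (d n : ℕ) (Ψ : Ed d × ℝ → ℝ) : Prop where
  smooth : ContDiffOn ℝ ∞ Ψ {0}ᶜ
  hom : ∀ l : ℝ, 0 < l → ∀ z, z ≠ 0 → l ^ n * Ψ (l • z) = Ψ z

namespace HomK
variable {d n m : ℕ} {Ψ Φ : Ed d × ℝ → ℝ}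

lemma bound_aux {F : Type*} [NormedAddCommGroup F] [NormedSpace ℝ F] {G : Ed d × ℝ → F}
    (hcont : ContinuousOn G {0}ᶜ)
    (hom : ∀ l : ℝ, 0 < l → ∀ z, z ≠ 0 → l ^ n • G (l • z) = G z) :
    ∃ C, 0 ≤ C ∧ ∀ z, z ≠ 0 → ‖G z‖ * ‖z‖ ^ n ≤ C := by
  have hc : IsCompact (Metric.sphere (0 : Ed d × ℝ) 1) := isCompact_sphere _ _
  have hcont : ContinuousOn G (Metric.sphere (0 : Ed d × ℝ) 1) := by
    refine hcont.mono ?_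
    intro z hz h0
    simp at hz h0
    simp [h0] at hz
  obtain ⟨C, hC⟩ := hc.exists_bound_of_continuousOn hcont
  refine ⟨|C|, abs_nonneg _, fun z hz => ?_⟩
  have hn : 0 < ‖z‖ := norm_pos_iff.2 hz
  have h1 := hom (‖z‖⁻¹) (inv_pos.2 hn) z hz
  have h2 := hC (‖z‖⁻¹ • z) (by simp [norm_smul, hn.ne'])
  rw [← h1, norm_smul, Real.norm_of_nonneg (by positivity), inv_pow]
  have h3 : (‖z‖ ^ n)⁻¹ * ‖G (‖z‖⁻¹ • z)‖ * ‖z‖ ^ n = ‖G (‖z‖⁻¹ • z)‖ := by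
    have : ‖z‖ ^ n ≠ 0 := by positivity
    generalize ‖G (‖z‖⁻¹ • z)‖ = a
    field_simp
  rw [h3]
  exact h2.trans (le_abs_self _)

lemma bound (h : HomK d n Ψ) : ∃ C, 0 ≤ C ∧ ∀ z, z ≠ 0 → |Ψ z| * ‖z‖ ^ n ≤ C :=
  bound_aux h.smooth.continuousOn h.hom

open scoped ContDiff in
lemma diffAt (h : HomK d n Ψ) {z} (hz : z ≠ 0) : DifferentiableAt ℝ Ψ z :=
  ((h.smooth.contDiffAt (isOpen_compl_singleton.mem_nhds hz)).differentiableAt (by simp))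

lemma contOn (h : HomK d n Ψ) : ContinuousOn Ψ {0}ᶜ := h.smooth.continuousOn

open scoped ContDiff in
lemma deriv (h : HomK d n Ψ) (e : Ed d × ℝ) : HomK d (n+1) (fun z => fderiv ℝ Ψ z e) := by
  constructor
  · have := h.smooth.fderiv_of_isOpen (m := ∞) isOpen_compl_singleton (by simp)
    exact this.clm_apply contDiffOn_const
  · intro l hl z hz
    have hlz : l • z ≠ 0 := smul_ne_zero hl.ne' hz
    have h1 : HasFDerivAt (fun z => l ^ n * Ψ (l • z))
        (l ^ n • ((fderiv ℝ Ψ (l • z)).comp (l • ContinuousLinearMap.id ℝ (Ed d × ℝ)))) z := by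
      have := (h.diffAt hlz).hasFDerivAt.comp z ((hasFDerivAt_id z).const_smul l)
      exact this.const_mul _
    have h2 : (fun z => l ^ n * Ψ (l • z)) =ᶠ[𝓝 z] Ψ := by
      filter_upwards [isOpen_compl_singleton.mem_nhds hz] with w hw using h.hom l hl w hw
    have h3 := (h1.congr_of_eventuallyEq h2.symm).fderiv
    simp only [h3]
    simp [pow_succ]
    ring

open scoped ContDiff in
lemma contOn_fderiv (h : HomK d n Ψ) : ContinuousOn (fun z => fderiv ℝ Ψ z) {0}ᶜ :=
  (h.smooth.fderiv_of_isOpen (m := ∞) isOpen_compl_singleton (by simp)).continuousOn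

lemma fderiv_bound (h : HomK d n Ψ) :
    ∃ C, 0 ≤ C ∧ ∀ z, z ≠ 0 → ‖fderiv ℝ Ψ z‖ * ‖z‖ ^ (n+1) ≤ C :=
  bound_aux h.contOn_fderiv (by
    intro l hl z hz
    refine ContinuousLinearMap.ext fun e => ?_
    simpa using (h.deriv e).hom l hl z hz)

lemma mul (h : HomK d n Ψ) (h' : HomK d m Φ) : HomK d (n+m) (fun z => Ψ z * Φ z) := by
  refine ⟨h.smooth.mul h'.smooth, fun l hl z hz => ?_⟩
  rw [← h.hom l hl z hz, ← h'.hom l hl z hz]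
  ring

lemma add (h : HomK d n Ψ) (h' : HomK d n Φ) : HomK d n (fun z => Ψ z + Φ z) := by
  refine ⟨h.smooth.add h'.smooth, fun l hl z hz => ?_⟩
  rw [← h.hom l hl z hz, ← h'.hom l hl z hz]
  ring

lemma const_mul (h : HomK d n Ψ) (c : ℝ) : HomK d n (fun z => c * Ψ z) := by
  refine ⟨contDiffOn_const.mul h.smooth, fun l hl z hz => ?_⟩
  rw [← h.hom l hl z hz]
  ring

lemma sum {ι : Type*} (s : Finset ι) {Ψ : ι → Ed d × ℝ → ℝ} (h : ∀ i ∈ s, HomK d n (Ψ i)) :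
    HomK d n (fun z => ∑ i ∈ s, Ψ i z) := by
  refine ⟨ContDiffOn.sum fun i hi => (h i hi).smooth, fun l hl z hz => ?_⟩
  rw [Finset.mul_sum]
  exact Finset.sum_congr rfl fun i hi => (h i hi).hom l hl z hz

/-- multiplication by a linear functional lowers the index -/
lemma lin_mul (h : HomK d (n+1) Ψ) (L : Ed d × ℝ →L[ℝ] ℝ) : HomK d n (fun z => L z * Ψ z) := by
  refine ⟨L.contDiff.contDiffOn.mul h.smooth, fun l hl z hz => ?_⟩
  rw [← h.hom l hl z hz, map_smul, smul_eq_mul]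
  ring

lemma normPow (d n : ℕ) : HomK d n (fun z => (‖z.1‖ ^ 2 + z.2 ^ 2) ^ (-(n:ℝ)/2)) := by
  have hpos : ∀ z : Ed d × ℝ, z ≠ 0 → 0 < ‖z.1‖ ^ 2 + z.2 ^ 2 := by
    intro z hz
    by_contra hcon
    have h1 : ‖z.1‖ ^ 2 = 0 := by nlinarith [sq_nonneg ‖z.1‖, sq_nonneg z.2]
    have h2 : z.2 ^ 2 = 0 := by nlinarith [sq_nonneg ‖z.1‖, sq_nonneg z.2]
    apply hz
    ext1
    · simpa using h1
    · simpa using h2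
  constructor
  · intro z hz
    have := hpos z hz
    refine ContDiffAt.contDiffWithinAt ?_
    refine ContDiffAt.rpow_const_of_ne ?_ this.ne'
    exact ((contDiff_fst.norm_sq ℝ).add (contDiff_snd.pow 2)).contDiffAt
  · intro l hl z hz
    have h0 := hpos z hz
    have : ‖(l • z).1‖ ^ 2 + (l • z).2 ^ 2 = l ^ 2 * (‖z.1‖ ^ 2 + z.2 ^ 2) := by
      simp [norm_smul, mul_pow]; ring
    rw [this, Real.mul_rpow (by positivity) h0.le, ← mul_assoc]
    have h2 : l ^ n * (l ^ 2) ^ (-(n:ℝ)/2) = 1 := by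
      rw [← Real.rpow_natCast, ← Real.rpow_natCast, ← Real.rpow_mul hl.le, ← Real.rpow_add hl]
      simp; ring_nf; simp
    rw [h2, one_mul]

end HomK

lemma memLp_dec {d m : ℕ} {q : ℝ} (hq : 1 ≤ q) (h : (d:ℝ) < m * q) :
    MemLp (fun v : Ed d => ((1 + ‖v‖) ^ m)⁻¹) (ENNReal.ofReal q) volume := by
  have hcont : Continuous (fun v : Ed d => ((1 + ‖v‖) ^ m)⁻¹) := by
    refine Continuous.inv₀ (by fun_prop) (fun v => by positivity)
  rw [← integrable_norm_rpow_iff hcont.aestronglyMeasurable (by simp; linarith) (by simp)]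
  have := integrable_one_add_norm (E := Ed d) (μ := volume) (r := m * q) (by simpa using h)
  refine this.congr (Eventually.of_forall fun v => ?_)
  have hv : 0 < 1 + ‖v‖ := by positivity
  simp only
  rw [ENNReal.toReal_ofReal (by linarith), norm_inv, norm_pow, Real.norm_of_nonneg hv.le,
    ← Real.rpow_natCast, ← Real.rpow_neg hv.le, ← Real.rpow_mul hv.le]
  ring_nf

/-- points with positive height are non-zero -/
lemma ne_zero_of_pos {d : ℕ} {z : Ed d × ℝ} (h : 0 < z.2) : z ≠ 0 := by
  rintro rfl; simp at h

namespace HomK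
variable {d n m : ℕ} {Ψ Φ : Ed d × ℝ → ℝ}

lemma dom_aux (d n : ℕ) (x₀ : Ed d) {t₀ : ℝ} (ht₀ : 0 < t₀) : ∃ C, 0 ≤ C ∧
    ∀ z ∈ Metric.ball (x₀, t₀) (t₀/2), ∀ y : Ed d, 0 < (z - (y, 0)).2 ∧
      (‖z - (y, 0)‖ ^ n)⁻¹ ≤ C * ((1 + ‖x₀ - y‖) ^ n)⁻¹ := by
  set a := min 1 t₀ with ha
  have ha0 : 0 < a := lt_min one_pos ht₀
  refine ⟨(4 / a) ^ n, by positivity, ?_⟩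
  intro z hz y
  rw [Metric.mem_ball, dist_eq_norm, Prod.norm_def, max_lt_iff] at hz
  obtain ⟨h1, h2⟩ := hz
  simp only [Prod.fst_sub, Prod.snd_sub, Real.norm_eq_abs] at h1 h2
  have h3 := abs_lt.1 h2
  refine ⟨by simp; linarith, ?_⟩
  have h4 : ‖z.1 - y‖ ≤ ‖z - (y, 0)‖ := by
    have := norm_fst_le (z - (y, (0:ℝ)))
    rwa [Prod.fst_sub] at this
  have h5 : |z.2| ≤ ‖z - (y, 0)‖ := by
    have := norm_snd_le (z - (y, (0:ℝ)))
    rwa [Prod.snd_sub, sub_zero] at this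
  have h6 : z.2 ≤ |z.2| := le_abs_self _
  have h7 : ‖x₀ - y‖ ≤ ‖z.1 - y‖ + ‖z.1 - x₀‖ := by
    have : x₀ - y = (z.1 - y) - (z.1 - x₀) := by abel
    rw [this]; exact norm_sub_le _ _
  have ha1 : a ≤ 1 := min_le_left _ _
  have ha2 : a ≤ t₀ := min_le_right _ _
  have hn := norm_nonneg (x₀ - y)
  have h8 : a / 4 * (1 + ‖x₀ - y‖) ≤ ‖z - (y, 0)‖ := by nlinarith
  have h9 : (a / 4 * (1 + ‖x₀ - y‖)) ^ n ≤ ‖z - (y, 0)‖ ^ n := by gcongr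
  have h10 := inv_anti₀ (by positivity) h9
  refine h10.trans (le_of_eq ?_)
  rw [mul_pow, mul_inv, ← inv_pow, inv_div]

lemma dom (h : HomK d n Ψ) (x₀ : Ed d) {t₀ : ℝ} (ht₀ : 0 < t₀) : ∃ C, 0 ≤ C ∧
    ∀ z ∈ Metric.ball (x₀, t₀) (t₀/2), ∀ y : Ed d,
      |Ψ (z - (y, 0))| ≤ C * ((1 + ‖x₀ - y‖) ^ n)⁻¹ := by
  obtain ⟨C, hC0, hC⟩ := h.bound
  obtain ⟨C', hC0', hC'⟩ := dom_aux d n x₀ ht₀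
  refine ⟨C * C', by positivity, fun z hz y => ?_⟩
  obtain ⟨h1, h2⟩ := hC' z hz y
  have hz0 := ne_zero_of_pos h1
  have h3 := hC _ hz0
  have hp : 0 < ‖z - (y, 0)‖ ^ n := by have := norm_pos_iff.2 hz0; positivity
  rw [← le_div_iff₀ hp, div_eq_mul_inv] at h3
  refine h3.trans ?_
  rw [mul_assoc]; gcongr

lemma dom_fderiv (h : HomK d n Ψ) (x₀ : Ed d) {t₀ : ℝ} (ht₀ : 0 < t₀) : ∃ C, 0 ≤ C ∧
    ∀ z ∈ Metric.ball (x₀, t₀) (t₀/2), ∀ y : Ed d,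
      ‖fderiv ℝ Ψ (z - (y, 0))‖ ≤ C * ((1 + ‖x₀ - y‖) ^ n)⁻¹ := by
  obtain ⟨C, hC0, hC⟩ := h.fderiv_bound
  obtain ⟨C', hC0', hC'⟩ := dom_aux d (n+1) x₀ ht₀
  refine ⟨C * C', by positivity, fun z hz y => ?_⟩
  obtain ⟨h1, h2⟩ := hC' z hz y
  have hz0 := ne_zero_of_pos h1
  have h3 := hC _ hz0
  have hp : 0 < ‖z - (y, 0)‖ ^ (n+1) := by have := norm_pos_iff.2 hz0; positivity
  rw [← le_div_iff₀ hp, div_eq_mul_inv] at h3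
  refine h3.trans ?_
  rw [mul_assoc]
  have h4 : ((1 + ‖x₀ - y‖) ^ (n+1))⁻¹ ≤ ((1 + ‖x₀ - y‖) ^ n)⁻¹ := by
    apply inv_anti₀ (by positivity)
    apply pow_le_pow_right₀ _ (Nat.le_succ n)
    linarith [norm_nonneg (x₀ - y)]
  have := h2.trans (mul_le_mul_of_nonneg_left h4 hC0')
  gcongr

lemma cont_sub (h : HomK d n Ψ) {z : Ed d × ℝ} (hz : 0 < z.2) :
    Continuous (fun y : Ed d => Ψ (z - (y, 0))) := by
  refine h.contOn.comp_continuous (by fun_prop) fun y => ?_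
  exact ne_zero_of_pos (by simpa using hz)

lemma cont_slice (h : HomK d n Ψ) {t : ℝ} (ht : 0 < t) :
    Continuous (fun y : Ed d => Ψ (y, t)) := by
  refine h.contOn.comp_continuous (by fun_prop) fun y => ?_
  exact ne_zero_of_pos (by simpa using ht)

lemma memLp_slice (h : HomK d n Ψ) {t : ℝ} (ht : 0 < t) {q : ℝ} (hq : 1 ≤ q)
    (hd : (d:ℝ) < n * q) : MemLp (fun y : Ed d => Ψ (y, t)) (ENNReal.ofReal q) volume := by
  obtain ⟨C, hC0, hC⟩ := h.dom (0 : Ed d) ht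
  refine ((memLp_dec hq hd).const_mul C).mono (h.cont_slice ht).aestronglyMeasurable ?_
  refine Eventually.of_forall fun y => ?_
  have := hC (0, t) (by simp; exact ht) (-y)
  simp only [Prod.mk_sub_mk, sub_neg_eq_add, zero_add, sub_zero] at this
  rw [Real.norm_eq_abs, Real.norm_eq_abs]
  exact this.trans (le_abs_self _)

end HomK

/-- convolution in the space variable -/
def cv {d : ℕ} (Ψ : Ed d × ℝ → ℝ) (f : Ed d → ℝ) (z : Ed d × ℝ) : ℝ :=
  ∫ y, Ψ (z - (y, 0)) * f y

section
variable {d n : ℕ} {Ψ : Ed d × ℝ → ℝ} {p q : ℝ} {f : Ed d → ℝ}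

lemma dec_mul_integrable (hpq : p.HolderConjugate q) (hd : (d:ℝ) < n * q)
    (hf : MemLp f (ENNReal.ofReal p) volume) (x₀ : Ed d) :
    Integrable (fun y => ((1 + ‖x₀ - y‖) ^ n)⁻¹ * f y) volume := by
  have h1 := memLp_dec (d := d) (m := n) hpq.symm.lt.le hd
  have h2 : MemLp (fun y : Ed d => ((1 + ‖x₀ - y‖) ^ n)⁻¹) (ENNReal.ofReal q) volume :=
    h1.comp_measurePreserving (Measure.measurePreserving_sub_left volume x₀)
  have : (ENNReal.ofReal q).HolderConjugate (ENNReal.ofReal p) := by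
    exact hpq.symm.ennrealOfReal
  exact h2.integrable_mul hf

lemma cv_integrable (h : HomK d n Ψ) (hpq : p.HolderConjugate q) (hd : (d:ℝ) < n * q)
    (hf : MemLp f (ENNReal.ofReal p) volume) {z : Ed d × ℝ} (hz : 0 < z.2) :
    Integrable (fun y => Ψ (z - (y, 0)) * f y) volume := by
  obtain ⟨C, hC0, hC⟩ := h.dom z.1 hz
  refine ((dec_mul_integrable hpq hd hf z.1).const_mul C).mono
    ((h.cont_sub hz).aestronglyMeasurable.mul hf.1) (Eventually.of_forall fun y => ?_)
  have := hC z (by simp; exact hz) y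
  simp only [Real.norm_eq_abs, abs_mul, ← mul_assoc]
  gcongr
  refine this.trans (le_of_eq ?_)
  rw [abs_of_nonneg hC0, abs_of_nonneg (by positivity)]

lemma cv_hasFDerivAt (h : HomK d n Ψ) (hpq : p.HolderConjugate q) (hd : (d:ℝ) < n * q)
    (hf : MemLp f (ENNReal.ofReal p) volume) {z : Ed d × ℝ} (hz : 0 < z.2) :
    HasFDerivAt (cv Ψ f) (∫ y, f y • fderiv ℝ Ψ (z - (y, 0))) z ∧
    Integrable (fun y => f y • fderiv ℝ Ψ (z - (y, 0))) volume := by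
  obtain ⟨C, hC0, hC⟩ := h.dom_fderiv z.1 hz
  have hcd : Continuous (fun y : Ed d => fderiv ℝ Ψ (z - (y, 0))) := by
    refine h.contOn_fderiv.comp_continuous (by fun_prop) fun y => ?_
    exact ne_zero_of_pos (by simpa using hz)
  have hmeas : AEStronglyMeasurable (fun y => f y • fderiv ℝ Ψ (z - (y, 0))) volume :=
    hf.1.smul hcd.aestronglyMeasurable
  have hball : z ∈ Metric.ball (z.1, z.2) (z.2/2) := by simp; exact hz
  have hpos : ∀ w ∈ Metric.ball (z.1, z.2) (z.2/2), 0 < w.2 := by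
    intro w hw
    rw [Metric.mem_ball, dist_eq_norm, Prod.norm_def, max_lt_iff] at hw
    have := abs_lt.1 hw.2
    simp at this
    linarith
  have hb : ∀ w ∈ Metric.ball (z.1, z.2) (z.2/2), ∀ y,
      ‖f y • fderiv ℝ Ψ (w - (y, 0))‖ ≤ ‖C * (((1 + ‖z.1 - y‖) ^ n)⁻¹ * f y)‖ := by
    intro w hw y
    have := hC w hw y
    rw [norm_smul, mul_comm]
    simp only [norm_mul, ← mul_assoc]
    gcongr
    refine this.trans (le_of_eq ?_)
    rw [Real.norm_of_nonneg hC0, Real.norm_of_nonneg (by positivity)]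
  have hbi := ((dec_mul_integrable hpq hd hf z.1).const_mul C).norm
  constructor
  · refine hasFDerivAt_integral_of_dominated_of_fderiv_le (𝕜 := ℝ)
      (F := fun w y => Ψ (w - (y, 0)) * f y)
      (F' := fun w y => f y • fderiv ℝ Ψ (w - (y, 0)))
      (s := Metric.ball (z.1, z.2) (z.2/2))
      (bound := fun y => ‖C * (((1 + ‖z.1 - y‖) ^ n)⁻¹ * f y)‖)
      (Metric.isOpen_ball.mem_nhds hball) ?_ (cv_integrable h hpq hd hf hz) hmeas ?_ hbi ?_
    · filter_upwards [Metric.isOpen_ball.mem_nhds hball] with w hw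
      exact (h.cont_sub (hpos w hw)).aestronglyMeasurable.mul hf.1
    · exact Eventually.of_forall fun y w hw => hb w hw y
    · refine Eventually.of_forall fun y w hw => ?_
      have hne : w - (y, 0) ≠ 0 := ne_zero_of_pos (by simpa using hpos w hw)
      have := (h.diffAt hne).hasFDerivAt.comp w ((hasFDerivAt_id w).sub_const (y, (0:ℝ)))
      exact this.mul_const (f y)
  · exact (hbi.mono' hmeas (Eventually.of_forall fun y => hb z hball y))

lemma cv_diff (h : HomK d n Ψ) (hpq : p.HolderConjugate q) (hd : (d:ℝ) < n * q)
    (hf : MemLp f (ENNReal.ofReal p) volume) {z : Ed d × ℝ} (hz : 0 < z.2) :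
    DifferentiableAt ℝ (cv Ψ f) z := (cv_hasFDerivAt h hpq hd hf hz).1.differentiableAt

lemma cv_fderiv (h : HomK d n Ψ) (hpq : p.HolderConjugate q) (hd : (d:ℝ) < n * q)
    (hf : MemLp f (ENNReal.ofReal p) volume) {z : Ed d × ℝ} (hz : 0 < z.2) (e : Ed d × ℝ) :
    fderiv ℝ (cv Ψ f) z e = cv (fun w => fderiv ℝ Ψ w e) f z := by
  obtain ⟨h1, h2⟩ := cv_hasFDerivAt h hpq hd hf hz
  rw [h1.fderiv, ContinuousLinearMap.integral_apply h2]
  simp [cv, mul_comm]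

lemma cv_eq {z : Ed d × ℝ} : cv Ψ f z = ∫ y, Ψ (y, z.2) * f (z.1 - y) := by
  rw [cv, ← integral_sub_left_eq_self _ volume z.1]
  refine integral_congr_ae (Eventually.of_forall fun y => ?_)
  simp only
  congr 2
  ext1 <;> simp
end

/-- the one-dimensional subordination integral -/
def subInt (b : ℝ) : ℝ := ∫ r in Ioi (0:ℝ), Real.exp (-r ^ 2 - b ^ 2 / r ^ 2)

lemma subInt_meas (b : ℝ) : Measurable (fun r : ℝ => Real.exp (-r ^ 2 - b ^ 2 / r ^ 2)) := by
  fun_prop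

lemma exp_neg_sq_int : IntegrableOn (fun r : ℝ => Real.exp (-r ^ 2)) (Ioi 0) volume := by
  have := integrable_exp_neg_mul_sq (b := 1) one_pos
  simpa using this.integrableOn

lemma subInt_integrable (b : ℝ) :
    IntegrableOn (fun r : ℝ => Real.exp (-r ^ 2 - b ^ 2 / r ^ 2)) (Ioi 0) volume := by
  refine exp_neg_sq_int.mono' (subInt_meas b).aestronglyMeasurable ?_
  refine Eventually.of_forall fun r => ?_
  rw [Real.norm_of_nonneg (Real.exp_pos _).le]
  apply Real.exp_le_exp.2
  have : 0 ≤ b ^ 2 / r ^ 2 := by positivity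
  linarith

lemma subInt_pos (b : ℝ) : 0 < subInt b := by
  rw [subInt, setIntegral_pos_iff_support_of_nonneg_ae]
  · have : Function.support (fun r : ℝ => Real.exp (-r ^ 2 - b ^ 2 / r ^ 2)) = univ := by
      ext r; simp
    rw [this]; simp
  · exact Eventually.of_forall fun r => (Real.exp_pos _).le
  · exact subInt_integrable b

lemma subInt_hasDerivAt {b : ℝ} (hb : 0 < b) : HasDerivAt subInt (-2 * subInt b) b := by
  have key : ∫ r in Ioi (0:ℝ), (-(2 * b) / r ^ 2) * Real.exp (-r ^ 2 - b ^ 2 / r ^ 2)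
      = -2 * subInt b := by
    have h1 := integral_comp_rpow_Ioi
      (fun y : ℝ => b * Real.exp (-(b * y) ^ 2 - b ^ 2 / (b * y) ^ 2)) (p := -1) (by norm_num)
    have h2 := integral_comp_mul_left_Ioi
      (fun y : ℝ => b * Real.exp (- y ^ 2 - b ^ 2 / y ^ 2)) 0 hb
    rw [h2] at h1
    simp only [mul_zero, smul_eq_mul] at h1
    rw [integral_const_mul, ← mul_assoc, inv_mul_cancel₀ hb.ne', one_mul] at h1
    rw [subInt, ← h1, ← integral_const_mul]
    refine setIntegral_congr_fun measurableSet_Ioi fun r hr => ?_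
    have hr : 0 < r := hr
    have e1 : r ^ (-1 - 1 : ℝ) = (r ^ 2)⁻¹ := by
      rw [show (-1 - 1 : ℝ) = -((2:ℕ):ℝ) by norm_num, Real.rpow_neg hr.le, Real.rpow_natCast]
    rw [e1, Real.rpow_neg_one]
    have e2 : -(b * r⁻¹) ^ 2 - b ^ 2 / (b * r⁻¹) ^ 2 = -r ^ 2 - b ^ 2 / r ^ 2 := by
      field_simp
      ring
    rw [e2]
    norm_num
    ring
  rw [← key]
  have := hasDerivAt_integral_of_dominated_loc_of_deriv_le
    (μ := volume.restrict (Ioi (0:ℝ))) (x₀ := b) (s := Ioo (b/2) (2*b))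
    (F := fun b r => Real.exp (-r ^ 2 - b ^ 2 / r ^ 2))
    (F' := fun b r => (-(2 * b) / r ^ 2) * Real.exp (-r ^ 2 - b ^ 2 / r ^ 2))
    (bound := fun r => (16 / b) * Real.exp (-r ^ 2))
    (Ioo_mem_nhds (by linarith) (by linarith)) (Eventually.of_forall fun c =>
      (subInt_meas c).aestronglyMeasurable) (subInt_integrable b)
    (by apply Measurable.aestronglyMeasurable; fun_prop) ?_ (exp_neg_sq_int.const_mul _) ?_
  · exact this.2
  · refine (ae_restrict_iff' measurableSet_Ioi).2 (Eventually.of_forall fun r hr c hc => ?_)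
    have hr : 0 < r := hr
    have hc1 : b / 2 < c := hc.1
    have hc2 : c < 2 * b := hc.2
    rw [norm_mul, Real.norm_of_nonneg (Real.exp_pos _).le, sub_eq_add_neg, Real.exp_add, norm_div,
      norm_neg, Real.norm_of_nonneg (by linarith), Real.norm_of_nonneg (by positivity)]
    set X := c ^ 2 / r ^ 2 with hX
    have hX0 : 0 < X := by have : 0 < c := by linarith
                           positivity
    have h1 : X * Real.exp (-X) ≤ 1 := by
      rw [Real.exp_neg, mul_inv_le_iff₀ (Real.exp_pos _), one_mul]
      linarith [Real.add_one_le_exp X]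
    have hc0 : 0 < c := by linarith
    have h2 : 2 * c / r ^ 2 = (2 / c) * X := by rw [hX]; field_simp
    have h3 : 2 / c ≤ 16 / b := by
      rw [div_le_div_iff₀ hc0 hb]; nlinarith
    calc 2 * c / r ^ 2 * (Real.exp (-r ^ 2) * Real.exp (-X))
        = (2 / c) * (X * Real.exp (-X)) * Real.exp (-r ^ 2) := by rw [h2]; ring
      _ ≤ (16 / b) * 1 * Real.exp (-r ^ 2) := by gcongr
      _ = _ := by ring
  · refine (ae_restrict_iff' measurableSet_Ioi).2 (Eventually.of_forall fun r hr c hc => ?_)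
    have h1 : HasDerivAt (fun c : ℝ => -r ^ 2 - c ^ 2 / r ^ 2) (-(2 * c) / r ^ 2) c := by
      have := ((hasDerivAt_pow 2 c).div_const (r ^ 2)).const_sub (-r ^ 2)
      refine this.congr_deriv ?_
      norm_num
      ring
    have := h1.exp
    rwa [mul_comm] at this

lemma subInt_eq : ∃ K : ℝ, 0 < K ∧ ∀ b, 0 < b → subInt b = K * Real.exp (-2 * b) := by
  refine ⟨subInt 1 * Real.exp 2, mul_pos (subInt_pos 1) (Real.exp_pos _), fun b hb => ?_⟩
  have hd : ∀ c ∈ Ioi (0:ℝ), HasDerivAt (fun c => subInt c * Real.exp (2 * c)) 0 c := by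
    intro c hc
    have h1 := subInt_hasDerivAt (b := c) hc
    have h2 : HasDerivAt (fun c : ℝ => Real.exp (2 * c)) (Real.exp (2 * c) * 2) c := by
      have := ((hasDerivAt_id c).const_mul 2).exp
      simpa using this
    have := h1.mul h2
    refine this.congr_deriv ?_
    ring
  have h := isOpen_Ioi.is_const_of_deriv_eq_zero (convex_Ioi (0:ℝ)).isPreconnected
    (fun c hc => (hd c hc).differentiableAt.differentiableWithinAt)
    (fun c hc => (hd c hc).deriv) (x := b) (y := 1) hb (by simp)
  simp only [mul_one] at h
  rw [← h, mul_assoc, ← Real.exp_add]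
  ring_nf
  simp

/-- `(|x|^2+t^2)^{-n/2}` -/
def BK (d n : ℕ) (z : Ed d × ℝ) : ℝ := (‖z.1‖ ^ 2 + z.2 ^ 2) ^ (-(n:ℝ)/2)
/-- unnormalised Poisson kernel -/
def PK (d : ℕ) (z : Ed d × ℝ) : ℝ := z.2 * BK d (d+1) z
/-- unnormalised conjugate Poisson kernel -/
def QK (d : ℕ) (j : Fin d) (z : Ed d × ℝ) : ℝ := z.1 j * BK d (d+1) z

lemma BK_hom (d n : ℕ) : HomK d n (BK d n) := HomK.normPow d n
lemma PK_hom (d : ℕ) : HomK d d (PK d) :=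
  (BK_hom d (d+1)).lin_mul (ContinuousLinearMap.snd ℝ (Ed d) ℝ)
lemma QK_hom (d : ℕ) (j : Fin d) : HomK d d (QK d j) :=
  (BK_hom d (d+1)).lin_mul ((EuclideanSpace.proj j).comp (ContinuousLinearMap.fst ℝ (Ed d) ℝ))

lemma BK_nonneg (d n : ℕ) (z : Ed d × ℝ) : 0 ≤ BK d n z := by unfold BK; positivity

lemma BK_slice_integrable (d : ℕ) {t : ℝ} (ht : 0 < t) :
    Integrable (fun y : Ed d => BK d (d+1) (y, t)) volume := by
  have := (BK_hom d (d+1)).memLp_slice ht (q := 1) le_rfl (by push_cast; linarith)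
  rw [ENNReal.ofReal_one] at this
  exact memLp_one_iff_integrable.1 this

lemma PK_slice_integrable (d : ℕ) {t : ℝ} (ht : 0 < t) :
    Integrable (fun y : Ed d => PK d (y, t)) volume :=
  (BK_slice_integrable d ht).const_mul t

/-- the gamma constant -/
def gC (d : ℕ) : ℝ := (1 / 2) * Real.Gamma (((d:ℝ) + 1) / 2)
lemma gC_pos (d : ℕ) : 0 < gC d := by
  unfold gC
  have := Real.Gamma_pos_of_pos (s := ((d:ℝ)+1)/2) (by positivity)
  positivity

lemma BK_eq_int (d : ℕ) {z : Ed d × ℝ} (hz : 0 < z.2) :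
    ∫ r in Ioi (0:ℝ), r ^ d * Real.exp (-(‖z.1‖ ^ 2 + z.2 ^ 2) * r ^ 2)
      = gC d * BK d (d+1) z := by
  have h := integral_rpow_mul_exp_neg_mul_rpow (p := 2) (q := d) (b := ‖z.1‖ ^ 2 + z.2 ^ 2)
    two_pos (by have : (0:ℝ) ≤ d := by positivity
                linarith) (by positivity)
  rw [BK, gC]
  push_cast
  rw [← mul_comm, ← mul_assoc, ← h]
  refine setIntegral_congr_fun measurableSet_Ioi fun r hr => ?_
  simp

lemma BK_int_integrable (d : ℕ) {b : ℝ} (hb : 0 < b) :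
    IntegrableOn (fun r : ℝ => r ^ d * Real.exp (-b * r ^ 2)) (Ioi 0) volume := by
  have := integrableOn_rpow_mul_exp_neg_mul_sq hb (s := d)
    (by have : (0:ℝ) ≤ d := by positivity
        linarith)
  simpa using this

open FourierTransform Complex in
lemma PK_fourier (d : ℕ) : ∃ K : ℝ, 0 < K ∧ ∀ t : ℝ, 0 < t → ∀ ξ : Ed d, ξ ≠ 0 →
    𝓕 (fun y : Ed d => ((PK d (y, t) : ℝ) : ℂ)) ξ = ((K * Real.exp (-2 * (Real.pi * t * ‖ξ‖)) : ℝ) : ℂ) := by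
  obtain ⟨K, hK, hsub⟩ := subInt_eq
  refine ⟨(gC d)⁻¹ * Real.pi ^ ((d:ℝ)/2) * K, by have := gC_pos d; positivity, ?_⟩
  intro t ht ξ hξ
  have hξ0 : 0 < ‖ξ‖ := norm_pos_iff.2 hξ
  rw [Real.fourier_eq']
  let G : Ed d → ℝ → ℂ := fun y r => cexp (↑(-2 * Real.pi * inner ℝ y ξ) * I) *
    ((r ^ d * Real.exp (-(‖y‖ ^ 2 + t ^ 2) * r ^ 2) : ℝ) : ℂ)
  have hGint : Integrable (Function.uncurry G) (volume.prod (volume.restrict (Ioi 0))) := by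
    have hm : Continuous (Function.uncurry G) := by
      simp only [G, Function.uncurry_def]
      fun_prop
    rw [integrable_prod_iff hm.aestronglyMeasurable]
    have hn : ∀ y r, r ∈ Ioi (0:ℝ) → ‖G y r‖ = r ^ d * Real.exp (-(‖y‖ ^ 2 + t ^ 2) * r ^ 2) := by
      intro y r hr
      have hr : 0 < r := hr
      simp only [G]
      rw [norm_mul, Complex.norm_exp_ofReal_mul_I, one_mul, Complex.norm_real,
        Real.norm_of_nonneg (by positivity)]
    constructor
    · refine Eventually.of_forall fun y => ?_
      simp only [Function.uncurry_apply_pair]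
      have h1 := BK_int_integrable d (b := ‖y‖ ^ 2 + t ^ 2) (by positivity)
      exact (h1.ofReal (𝕜 := ℂ)).const_mul _
    · have : (fun y => ∫ r in Ioi (0:ℝ), ‖Function.uncurry G (y, r)‖)
          = fun y => gC d * BK d (d+1) (y, t) := by
        ext y
        rw [← BK_eq_int d (z := (y, t)) ht]
        exact setIntegral_congr_fun measurableSet_Ioi fun r hr => hn y r hr
      rw [this]
      exact (BK_slice_integrable d ht).const_mul _
  have e1 : (∫ v : Ed d, cexp (↑(-2 * Real.pi * inner ℝ v ξ) * I) • ((PK d (v, t) : ℝ) : ℂ))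
      = ((t * (gC d)⁻¹ : ℝ) : ℂ) * ∫ y : Ed d, ∫ r in Ioi (0:ℝ), G y r := by
    rw [← integral_const_mul]
    refine integral_congr_ae (Eventually.of_forall fun y => ?_)
    simp only [G]
    rw [integral_const_mul, integral_complex_ofReal, BK_eq_int d (z := (y, t)) ht, PK, smul_eq_mul]
    have : (gC d : ℂ) ≠ 0 := by exact_mod_cast (gC_pos d).ne'
    push_cast
    field_simp
  rw [e1, integral_integral_swap hGint]
  have e2 : ∀ r ∈ Ioi (0:ℝ), ∫ y : Ed d, G y r =
      ((Real.pi ^ ((d:ℝ)/2) * Real.exp (-(t * r) ^ 2 - (Real.pi * t * ‖ξ‖) ^ 2 / (t * r) ^ 2) : ℝ) : ℂ) := by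
    intro r hr
    have hr : 0 < r := hr
    have hg := fourier_gaussian_innerProductSpace (V := Ed d) (b := ((r ^ 2 : ℝ) : ℂ))
      (by rw [Complex.ofReal_re]; positivity) ξ
    rw [Real.fourier_eq'] at hg
    have h1 : ∀ y : Ed d, G y r = ((r ^ d * Real.exp (-(t * r) ^ 2) : ℝ) : ℂ) *
        (cexp (↑(-2 * Real.pi * inner ℝ y ξ) * I) • cexp (-((r ^ 2 : ℝ) : ℂ) * ‖y‖ ^ 2)) := by
      intro y
      simp only [G]
      have : Real.exp (-(‖y‖ ^ 2 + t ^ 2) * r ^ 2)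
          = Real.exp (-(t * r) ^ 2) * Real.exp (-(r ^ 2) * ‖y‖ ^ 2) := by
        rw [← Real.exp_add]; congr 1; ring
      rw [this]
      push_cast
      rw [smul_eq_mul]
      ring
    simp_rw [h1]
    rw [integral_const_mul, hg]
    have h2 : ((Real.pi : ℂ) / ((r ^ 2 : ℝ) : ℂ)) ^ ((Module.finrank ℝ (Ed d) : ℂ) / 2)
        = (((Real.pi / r ^ 2) ^ ((d:ℝ)/2) : ℝ) : ℂ) := by
      rw [Complex.ofReal_cpow (by positivity)]
      simp
    have h3 : cexp (-(Real.pi : ℂ) ^ 2 * (‖ξ‖ : ℂ) ^ 2 / ((r ^ 2 : ℝ) : ℂ))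
        = ((Real.exp (- (Real.pi * t * ‖ξ‖) ^ 2 / (t * r) ^ 2) : ℝ) : ℂ) := by
      rw [Complex.ofReal_exp]
      congr 1
      push_cast
      have : (t:ℂ) ≠ 0 := by exact_mod_cast ht.ne'
      have : (r:ℂ) ≠ 0 := by exact_mod_cast hr.ne'
      field_simp
    rw [h2, h3]
    norm_cast
    rw [Real.div_rpow Real.pi_pos.le (by positivity), ← Real.rpow_natCast r 2, ← Real.rpow_mul hr.le]
    have h4 : ((2:ℕ):ℝ) * ((d:ℝ)/2) = d := by push_cast; ring
    rw [h4, Real.rpow_natCast, sub_eq_add_neg, Real.exp_add, neg_div]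
    field_simp
  rw [setIntegral_congr_fun measurableSet_Ioi e2, integral_complex_ofReal, integral_const_mul,
    integral_comp_mul_left_Ioi
      (fun y : ℝ => Real.exp (- y ^ 2 - (Real.pi * t * ‖ξ‖) ^ 2 / y ^ 2)) 0 ht, mul_zero]
  have := hsub (Real.pi * t * ‖ξ‖) (by have := Real.pi_pos; positivity)
  rw [subInt] at this
  rw [this]
  norm_cast
  simp only [smul_eq_mul]
  field_simp

open FourierTransform in
lemma PK_semigroup (d : ℕ) (hd : 0 < d) : ∃ K : ℝ, 0 < K ∧ ∀ s t : ℝ, 0 < s → 0 < t → ∀ x : Ed d,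
    cv (PK d) (fun y => PK d (y, s)) (x, t) = K * PK d (x, t + s) := by
  obtain ⟨K, hK, hF⟩ := PK_fourier d
  refine ⟨K, hK, fun s t hs ht => ?_⟩
  have hd' : (1:ℝ) ≤ d := by exact_mod_cast hd
  have hL2 : MemLp (fun y => PK d (y, s)) (ENNReal.ofReal 2) volume :=
    (PK_hom d).memLp_slice hs one_le_two (by linarith)
  have hpq : Real.HolderConjugate 2 2 := Real.HolderConjugate.two_two
  have hcont : Continuous (fun x : Ed d => cv (PK d) (fun y => PK d (y, s)) (x, t)) := by
    rw [continuous_iff_continuousAt]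
    intro x
    have := (cv_diff (PK_hom d) hpq (by linarith) hL2 (z := (x, t)) ht).continuousAt
    exact this.comp (f := fun x : Ed d => (x, t)) (by fun_prop)
  have hcont2 : Continuous (fun x : Ed d => PK d (x, t + s)) := (PK_hom d).cont_slice (by linarith)
  let a : ℝ → Ed d → ℂ := fun t y => ((PK d (y, t) : ℝ) : ℂ)
  have hai : ∀ t, 0 < t → Integrable (a t) volume := fun t ht => (PK_slice_integrable d ht).ofReal
  have hconv : (convolution (a t) (a s) (ContinuousLinearMap.mul ℂ ℂ) volume)
      = fun x => ((cv (PK d) (fun y => PK d (y, s)) (x, t) : ℝ) : ℂ) := by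
    ext x
    rw [cv_eq, convolution, ← integral_complex_ofReal]
    simp [a]
  let h : Ed d → ℂ := fun x => (convolution (a t) (a s) (ContinuousLinearMap.mul ℂ ℂ) volume) x
    - (K:ℂ) * a (t + s) x
  have hci : Integrable (convolution (a t) (a s) (ContinuousLinearMap.mul ℂ ℂ) volume) volume :=
    (hai t ht).integrable_convolution _ (hai s hs)
  have hi2 : Integrable (fun x => (K:ℂ) * a (t + s) x) volume := (hai (t+s) (by linarith)).const_mul _
  have hhi : Integrable h volume := hci.sub hi2
  have hhc : Continuous h := by
    simp only [h, hconv, a]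
    fun_prop
  have hFz : 𝓕 h =ᵐ[volume] 0 := by
    have : ∀ᵐ ξ : Ed d, ξ ≠ 0 := by
      haveI : Nonempty (Fin d) := ⟨⟨0, hd⟩⟩
      simp [ae_iff]
    filter_upwards [this] with ξ hξ
    have e1 : 𝓕 h ξ = 𝓕 (convolution (a t) (a s) (ContinuousLinearMap.mul ℂ ℂ) volume) ξ
        - (K:ℂ) * 𝓕 (a (t+s)) ξ := by
      have hu : ∀ g : Ed d → ℂ, Integrable g volume →
          Integrable (fun v => Real.fourierChar (-inner ℝ v ξ) • g v) volume := by
        intro g hg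
        exact (Real.fourierIntegral_convergent_iff ξ).2 hg
      simp only [Real.fourier_eq, h]
      rw [← integral_const_mul, ← integral_sub (hu _ hci) ((hu _ (hai (t+s) (by linarith))).const_mul _)]
      congr 1
      ext v
      simp only [Circle.smul_def, smul_eq_mul]
      ring
    rw [e1, Real.fourier_mul_convolution_eq (hai t ht) (hai s hs), hF t ht ξ hξ, hF s hs ξ hξ,
      hF (t+s) (by linarith) ξ hξ]
    have : Real.exp (-2 * (Real.pi * (t+s) * ‖ξ‖)) = Real.exp (-2 * (Real.pi * t * ‖ξ‖))
        * Real.exp (-2 * (Real.pi * s * ‖ξ‖)) := by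
      rw [← Real.exp_add]; congr 1; ring
    rw [this, Pi.zero_apply]
    simp only [Complex.ofReal_mul]
    ring
  have hinv := hhc.fourierInv_fourier_eq hhi ((integrable_zero _ _ _).congr hFz.symm)
  intro x
  have h0 : h x = 0 := by
    rw [← hinv, Real.fourierInv_eq]
    apply integral_eq_zero_of_ae
    filter_upwards [hFz] with v hv
    simp [hv]
  simp only [h, hconv, a] at h0
  rw [sub_eq_zero] at h0
  exact_mod_cast h0

lemma normsq_pos {d : ℕ} {z : Ed d × ℝ} (hz : z ≠ 0) : 0 < ‖z.1‖ ^ 2 + z.2 ^ 2 := by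
  by_contra hcon
  have h1 : ‖z.1‖ ^ 2 = 0 := by nlinarith [sq_nonneg ‖z.1‖, sq_nonneg z.2]
  have h2 : z.2 ^ 2 = 0 := by nlinarith [sq_nonneg ‖z.1‖, sq_nonneg z.2]
  apply hz
  ext1
  · simpa using h1
  · simpa using h2

lemma BK_fderiv (d n : ℕ) {z : Ed d × ℝ} (hz : z ≠ 0) (e : Ed d × ℝ) :
    fderiv ℝ (BK d n) z e = -(n:ℝ) * (inner ℝ z.1 e.1 + z.2 * e.2) * BK d (n+2) z := by
  have h0 := normsq_pos hz
  have h1 : HasFDerivAt (fun z : Ed d × ℝ => ‖z.1‖ ^ 2 + z.2 ^ 2)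
      (2 • ((innerSL ℝ z.1).comp (ContinuousLinearMap.fst ℝ (Ed d) ℝ))
        + (2 * z.2) • ContinuousLinearMap.snd ℝ (Ed d) ℝ) z := by
    have ha : HasFDerivAt (fun z : Ed d × ℝ => ‖z.1‖ ^ 2)
        (2 • (innerSL ℝ z.1).comp (ContinuousLinearMap.fst ℝ (Ed d) ℝ)) z :=
      (hasFDerivAt_fst).norm_sq
    have hb : HasFDerivAt (fun z : Ed d × ℝ => z.2 ^ 2)
        ((2 * z.2) • ContinuousLinearMap.snd ℝ (Ed d) ℝ) z := by
      have := (hasFDerivAt_snd (𝕜 := ℝ) (p := z)).pow 2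
      simpa using this
    exact ha.add hb
  have h2 := h1.rpow_const (p := -(n:ℝ)/2) (Or.inl h0.ne')
  have h3 : fderiv ℝ (BK d n) z = _ := h2.fderiv
  rw [h3]
  have h4 : -(((n+2:ℕ)):ℝ)/2 = -(n:ℝ)/2 - 1 := by push_cast; ring
  rw [BK, h4]
  simp
  ring

lemma PK_fderiv (d : ℕ) {z : Ed d × ℝ} (hz : z ≠ 0) (e : Ed d × ℝ) :
    fderiv ℝ (PK d) z e = e.2 * BK d (d+1) z
      - z.2 * (((d:ℝ)+1) * (inner ℝ z.1 e.1 + z.2 * e.2) * BK d (d+3) z) := by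
  have h2 := ((BK_hom d (d+1)).diffAt hz).hasFDerivAt
  have h3 : HasFDerivAt (PK d) _ z := (hasFDerivAt_snd (𝕜 := ℝ) (p := z)).mul h2
  rw [h3.fderiv]
  have := BK_fderiv d (d+1) hz e
  simp [this]
  ring

lemma QK_fderiv (d : ℕ) (j : Fin d) {z : Ed d × ℝ} (hz : z ≠ 0) (e : Ed d × ℝ) :
    fderiv ℝ (QK d j) z e = e.1 j * BK d (d+1) z
      - z.1 j * (((d:ℝ)+1) * (inner ℝ z.1 e.1 + z.2 * e.2) * BK d (d+3) z) := by
  have h2 := ((BK_hom d (d+1)).diffAt hz).hasFDerivAt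
  have h3 : HasFDerivAt (QK d j) _ z :=
    ((EuclideanSpace.proj j).comp (ContinuousLinearMap.fst ℝ (Ed d) ℝ)).hasFDerivAt.mul h2
  rw [h3.fderiv]
  have := BK_fderiv d (d+1) hz e
  simp [this]
  ring

/-- coordinate direction -/
def eb (d : ℕ) (k : Fin d) : Ed d × ℝ := (EuclideanSpace.single k 1, 0)

lemma PK_eb (d : ℕ) (k : Fin d) {z : Ed d × ℝ} (hz : z ≠ 0) :
    fderiv ℝ (PK d) z (eb d k) = - (((d:ℝ)+1) * z.2 * z.1 k * BK d (d+3) z) := by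
  rw [PK_fderiv d hz]
  simp [eb, EuclideanSpace.inner_single_right]
  ring

lemma QK_eb (d : ℕ) (j k : Fin d) {z : Ed d × ℝ} (hz : z ≠ 0) :
    fderiv ℝ (QK d j) z (eb d k) = (if j = k then BK d (d+1) z else 0)
      - ((d:ℝ)+1) * z.1 j * z.1 k * BK d (d+3) z := by
  rw [QK_fderiv d j hz]
  simp [eb, EuclideanSpace.inner_single_right]
  ring

lemma QK_dt (d : ℕ) (j : Fin d) {z : Ed d × ℝ} (hz : z ≠ 0) :
    fderiv ℝ (QK d j) z (0, 1) = fderiv ℝ (PK d) z (eb d j) := by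
  rw [QK_fderiv d j hz, PK_eb d j hz]
  simp
  ring

lemma cv_congr {d : ℕ} {Ψ Φ : Ed d × ℝ → ℝ} (h : ∀ z, 0 < z.2 → Ψ z = Φ z) (f : Ed d → ℝ)
    {z : Ed d × ℝ} (hz : 0 < z.2) : cv Ψ f z = cv Φ f z := by
  refine integral_congr_ae (Eventually.of_forall fun y => ?_)
  simp only
  rw [h _ (by simpa using hz)]

/-- differentiate an identity between a convolution and a kernel -/
lemma cv_deriv_id {d n m : ℕ} {Ψ Φ : Ed d × ℝ → ℝ} (hΨ : HomK d n Ψ) (hΦ : HomK d m Φ)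
    {p q : ℝ} (hpq : p.HolderConjugate q) (hd : (d:ℝ) < n * q) {g : Ed d → ℝ}
    (hg : MemLp g (ENNReal.ofReal p) volume) {K s : ℝ} (hs : 0 < s)
    (h : ∀ z : Ed d × ℝ, 0 < z.2 → cv Ψ g z = K * Φ (z + (0, s))) (e : Ed d × ℝ) :
    ∀ z : Ed d × ℝ, 0 < z.2 → cv (fun w => fderiv ℝ Ψ w e) g z
      = K * fderiv ℝ Φ (z + (0, s)) e := by
  intro z hz
  rw [← cv_fderiv hΨ hpq hd hg hz e]
  have h1 : cv Ψ g =ᶠ[𝓝 z] fun z => K * Φ (z + (0, s)) := by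
    filter_upwards [(isOpen_lt continuous_const continuous_snd).mem_nhds hz] with w hw
    exact h w hw
  rw [h1.fderiv_eq]
  have hne : z + (0, s) ≠ 0 := ne_zero_of_pos (by simp; linarith)
  have h2 := (hΦ.diffAt hne).hasFDerivAt.comp z ((hasFDerivAt_id z).add_const ((0:Ed d), s))
  have h3 := h2.const_mul K
  have h4 : fderiv ℝ (fun z => K * Φ (z + (0, s))) z = _ := h3.fderiv
  rw [h4]
  simp

lemma HomK.vert_bound {d n : ℕ} {Ψ : Ed d × ℝ → ℝ} (h : HomK d n Ψ) :
    ∃ C, 0 ≤ C ∧ ∀ z : Ed d × ℝ, 0 < z.2 → |Ψ z| ≤ C * (z.2 ^ n)⁻¹ := by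
  obtain ⟨C, hC0, hC⟩ := h.bound
  refine ⟨C, hC0, fun z hz => ?_⟩
  have h3 := hC _ (ne_zero_of_pos hz)
  have h1 : z.2 ^ n ≤ ‖z‖ ^ n := by
    have : z.2 ≤ ‖z‖ := (le_abs_self _).trans (norm_snd_le z)
    gcongr
  rw [← div_eq_mul_inv, le_div_iff₀ (by positivity)]
  exact (mul_le_mul_of_nonneg_left h1 (abs_nonneg _)).trans h3

lemma cv_tendsto_zero {d n : ℕ} {Ψ : Ed d × ℝ → ℝ} (h : HomK d n Ψ) (hn : 0 < n) {g : Ed d → ℝ}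
    (hg : Integrable g volume) (x : Ed d) : Tendsto (fun s => cv Ψ g (x, s)) atTop (𝓝 0) := by
  obtain ⟨C, hC0, hC⟩ := h.vert_bound
  have h1 : Tendsto (fun s : ℝ => (C * (s ^ n)⁻¹) * ∫ y, |g y|) atTop (𝓝 0) := by
    have : Tendsto (fun s : ℝ => (s ^ n)⁻¹) atTop (𝓝 0) :=
      tendsto_inv_atTop_zero.comp (tendsto_pow_atTop hn.ne')
    simpa using (this.const_mul C).mul_const (∫ y, |g y|)
  refine squeeze_zero_norm' ?_ h1
  filter_upwards [eventually_gt_atTop 0] with s hs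
  rw [← integral_const_mul]
  · refine norm_integral_le_of_norm_le (hg.abs.const_mul _) (Eventually.of_forall fun y => ?_)
    rw [norm_mul, Real.norm_eq_abs, Real.norm_eq_abs]
    have := hC ((x, s) - (y, 0)) (by simpa using hs)
    simp only [Prod.snd_sub, sub_zero] at this
    gcongr

lemma QP_semigroup (d : ℕ) (hd : 0 < d) : ∃ K : ℝ, 0 < K ∧ ∀ j : Fin d, ∀ s t : ℝ, 0 < s → 0 < t → ∀ x : Ed d,
    cv (QK d j) (fun y => PK d (y, s)) (x, t) = K * QK d j (x, t + s) := by
  obtain ⟨K, hK, hP⟩ := PK_semigroup d hd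
  refine ⟨K, hK, fun j s t hs ht x => ?_⟩
  have hd' : (1:ℝ) ≤ d := by exact_mod_cast hd
  have hL2 : MemLp (fun y => PK d (y, s)) (ENNReal.ofReal 2) volume :=
    (PK_hom d).memLp_slice hs one_le_two (by linarith)
  have hpq : Real.HolderConjugate 2 2 := Real.HolderConjugate.two_two
  have hPd := cv_deriv_id (PK_hom d) (PK_hom d) hpq (by linarith) hL2 (K := K) hs
    (fun z hz => by obtain ⟨a, b⟩ := z; rw [hP s b hs hz a]; simp) (eb d j)
  let F : ℝ → ℝ := fun t => cv (QK d j) (fun y => PK d (y, s)) (x, t) - K * QK d j (x, t + s)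
  have hF : ∀ t ∈ Ioi (0:ℝ), HasDerivAt F 0 t := by
    intro t ht
    have ht : 0 < t := ht
    have c1 : HasDerivAt (fun t : ℝ => ((x, t) : Ed d × ℝ)) (0, 1) t :=
      (hasDerivAt_const t x).prodMk (hasDerivAt_id t)
    have c2 : HasDerivAt (fun t : ℝ => ((x, t+s) : Ed d × ℝ)) (0, 1) t :=
      (hasDerivAt_const t x).prodMk ((hasDerivAt_id t).add_const s)
    have d1 := (cv_diff (QK_hom d j) hpq (by linarith) hL2 (z := (x,t)) ht).hasFDerivAt.comp_hasDerivAt t c1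
    have hne : ((x, t+s) : Ed d × ℝ) ≠ 0 := ne_zero_of_pos (by simp; linarith)
    have d2 := ((QK_hom d j).diffAt hne).hasFDerivAt.comp_hasDerivAt t c2
    refine (d1.sub (d2.const_mul K)).congr_deriv ?_
    rw [cv_fderiv (QK_hom d j) hpq (by linarith) hL2 (z := (x,t)) ht, QK_dt d j hne,
      cv_congr (fun z hz => QK_dt d j (ne_zero_of_pos hz)) _ ht, hPd (x,t) ht]
    simp
  have hconst : ∀ r ∈ Ioi (0:ℝ), F r = F t := by
    intro r hr
    refine (convex_Ioi (0:ℝ)).is_const_of_fderivWithin_eq_zero (𝕜 := ℝ) (f := F)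
      (fun u hu => (hF u hu).differentiableAt.differentiableWithinAt) ?_ hr ht
    intro u hu
    rw [fderivWithin_of_isOpen isOpen_Ioi hu]
    ext
    simpa using (hF u hu).deriv
  have hlim : Tendsto F atTop (𝓝 0) := by
    have h1 := cv_tendsto_zero (QK_hom d j) hd (PK_slice_integrable d hs) x
    have h2 : Tendsto (fun t => QK d j (x, t + s)) atTop (𝓝 0) := by
      obtain ⟨C, hC0, hC⟩ := (QK_hom d j).vert_bound
      have h1 : Tendsto (fun t : ℝ => (C * ((t+s) ^ d)⁻¹)) atTop (𝓝 0) := by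
        have : Tendsto (fun s : ℝ => (s ^ d)⁻¹) atTop (𝓝 0) :=
          tendsto_inv_atTop_zero.comp (tendsto_pow_atTop hd.ne')
        have h3 := this.comp (tendsto_atTop_add_const_right atTop s tendsto_id)
        simpa using (h3.const_mul C)
      refine squeeze_zero_norm' ?_ h1
      filter_upwards [eventually_gt_atTop 0] with t ht
      exact hC (x, t+s) (by simp; linarith)
    simpa using h1.sub (h2.const_mul K)
  have h0 : F t = 0 := by
    refine tendsto_nhds_unique (tendsto_const_nhds.congr' ?_) hlim
    filter_upwards [eventually_gt_atTop 0] with r hr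
    exact (hconst r hr).symm
  simp only [F] at h0
  linarith

section
variable {d n m : ℕ} {Ψ Q : Ed d × ℝ → ℝ} {p q : ℝ} {f : Ed d → ℝ}

lemma young_int (hQ : HomK d m Q) (hpq : p.HolderConjugate q)
    (hm : (d:ℝ) < m * q) (hf : MemLp f (ENNReal.ofReal p) volume) {s : ℝ} (hs : 0 < s) :
    ∃ C, ∀ x : Ed d, Integrable (fun y => Q (x - y, s) * f y) volume ∧
      ∫ y, ‖Q (x - y, s) * f y‖ ≤ C := by
  have hQq := hQ.memLp_slice hs hpq.symm.lt.le hm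
  have e1 : Integrable (fun y => ‖Q (y, s)‖ ^ q) volume := by
    have := hQq.integrable_norm_rpow (by simpa using hpq.symm.pos) (by simp)
    rwa [ENNReal.toReal_ofReal hpq.symm.pos.le] at this
  have e2 : Integrable (fun y => ‖f y‖ ^ p) volume := by
    have := hf.integrable_norm_rpow (by simpa using hpq.pos) (by simp)
    rwa [ENNReal.toReal_ofReal hpq.pos.le] at this
  refine ⟨(∫ y, ‖Q (y, s)‖ ^ q) / q + (∫ y, ‖f y‖ ^ p) / p, fun x => ?_⟩
  have e3 : Integrable (fun y => ‖Q (x - y, s)‖ ^ q) volume := e1.comp_sub_left x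
  have hi : Integrable (fun y => Q (x - y, s) * f y) volume := by
    have := cv_integrable hQ hpq hm hf (z := (x, s)) hs
    simpa using this
  refine ⟨hi, ?_⟩
  have : ∫ y, ‖Q (x - y, s)‖ ^ q = ∫ y, ‖Q (y, s)‖ ^ q :=
    integral_sub_left_eq_self (fun y => ‖Q (y, s)‖ ^ q) volume x
  rw [← this, ← integral_div, ← integral_div, ← integral_add (e3.div_const q) (e2.div_const p)]
  refine integral_mono hi.norm ((e3.div_const q).add (e2.div_const p)) fun y => ?_
  simp only [norm_mul]
  exact Real.young_inequality_of_nonneg (norm_nonneg _) (norm_nonneg _) hpq.symm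

lemma cv_cv (hΨ : HomK d n Ψ) (hn : d < n) (hQ : HomK d m Q) (hpq : p.HolderConjugate q)
    (hm : (d:ℝ) < m * q) (hf : MemLp f (ENNReal.ofReal p) volume) {s t : ℝ} (hs : 0 < s) (ht : 0 < t)
    (x : Ed d) :
    Integrable (fun y => Q ((x, s) - (y, 0)) * cv Ψ f (y, t)) volume ∧
    cv Q (fun y => cv Ψ f (y, t)) (x, s)
      = ∫ w, cv Ψ (fun y => Q (y, s)) (x - w, t) * f w := by
  obtain ⟨C, hC⟩ := young_int hQ hpq hm hf hs
  have hΨi : Integrable (fun y : Ed d => Ψ (y, t)) volume := by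
    have := hΨ.memLp_slice ht (q := 1) le_rfl (by push_cast; rw [mul_one]; exact_mod_cast hn)
    rw [ENNReal.ofReal_one] at this
    exact memLp_one_iff_integrable.1 this
  have hQc : Continuous (fun y : Ed d => Q (y, s)) := hQ.cont_slice hs
  have hΨc : Continuous (fun y : Ed d => Ψ (y, t)) := hΨ.cont_slice ht
  have m1 : AEStronglyMeasurable (Function.uncurry fun (y v : Ed d) => Q (x - y, s) * (Ψ (v, t) * f (y - v)))
      (volume.prod volume) := by
    refine AEStronglyMeasurable.mul (Continuous.aestronglyMeasurable
      (hQc.comp (by fun_prop : Continuous fun a : Ed d × Ed d => x - a.1))) ?_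
    refine AEStronglyMeasurable.mul (Continuous.aestronglyMeasurable (hΨc.comp continuous_snd)) ?_
    exact hf.1.comp_quasiMeasurePreserving (quasiMeasurePreserving_sub volume volume)
  have m2 : AEStronglyMeasurable (Function.uncurry fun (v w : Ed d) => Ψ (v, t) * (Q (x - v - w, s) * f w))
      (volume.prod volume) := by
    refine AEStronglyMeasurable.mul (Continuous.aestronglyMeasurable (hΨc.comp continuous_fst)) ?_
    refine AEStronglyMeasurable.mul (Continuous.aestronglyMeasurable
      (hQc.comp (by fun_prop : Continuous fun a : Ed d × Ed d => x - a.1 - a.2))) ?_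
    exact hf.1.comp_quasiMeasurePreserving Measure.quasiMeasurePreserving_snd
  have hdom : Integrable (fun v => ∫ w, ‖Ψ (v, t) * (Q (x - v - w, s) * f w)‖) volume := by
    refine (hΨi.norm.mul_const C).mono m2.norm.integral_prod_right' (Eventually.of_forall fun v => ?_)
    rw [Real.norm_of_nonneg (integral_nonneg fun w => norm_nonneg _)]
    simp_rw [norm_mul (Ψ (v, t))]
    rw [integral_const_mul]
    refine (mul_le_mul_of_nonneg_left (hC (x - v)).2 (norm_nonneg _)).trans ?_
    rw [norm_mul, norm_norm]
    gcongr
    exact le_abs_self _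
  have i2 : Integrable (Function.uncurry fun (v w : Ed d) => Ψ (v, t) * (Q (x - v - w, s) * f w))
      (volume.prod volume) := by
    rw [integrable_prod_iff m2]
    exact ⟨Eventually.of_forall fun v => ((hC (x - v)).1).const_mul (Ψ (v, t)), hdom⟩
  have hsh : ∀ v y, Q (x - y, s) * (Ψ (v, t) * f (y - v))
      = (fun w => Ψ (v, t) * (Q (x - v - w, s) * f w)) (y - v) := by
    intro v y
    simp only
    rw [show x - v - (y - v) = x - y by abel]
    ring
  have i1 : Integrable (Function.uncurry fun (y v : Ed d) => Q (x - y, s) * (Ψ (v, t) * f (y - v)))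
      (volume.prod volume) := by
    rw [integrable_prod_iff' m1]
    simp only [Function.uncurry_apply_pair, hsh]
    constructor
    · refine Eventually.of_forall fun v => ?_
      exact (((hC (x - v)).1).const_mul _).comp_sub_right v
    · refine hdom.congr (Eventually.of_forall fun v => ?_)
      exact (integral_sub_right_eq_self (fun w => ‖Ψ (v, t) * (Q (x - v - w, s) * f w)‖) v).symm
  constructor
  · refine i1.integral_prod_left.congr (Eventually.of_forall fun y => ?_)
    simp only [Function.uncurry_apply_pair]
    rw [cv_eq, integral_const_mul]
    simp
  calc cv Q (fun y => cv Ψ f (y, t)) (x, s)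
      = ∫ y, ∫ v, Q (x - y, s) * (Ψ (v, t) * f (y - v)) := by
        rw [cv]
        refine integral_congr_ae (Eventually.of_forall fun y => ?_)
        simp only
        rw [cv_eq, integral_const_mul]
        simp
    _ = ∫ v, ∫ y, Q (x - y, s) * (Ψ (v, t) * f (y - v)) := integral_integral_swap i1
    _ = ∫ v, ∫ w, Ψ (v, t) * (Q (x - v - w, s) * f w) := by
        refine integral_congr_ae (Eventually.of_forall fun v => ?_)
        simp only [hsh]
        exact integral_sub_right_eq_self (fun w => Ψ (v, t) * (Q (x - v - w, s) * f w)) v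
    _ = ∫ w, ∫ v, Ψ (v, t) * (Q (x - v - w, s) * f w) := integral_integral_swap i2
    _ = _ := by
        refine integral_congr_ae (Eventually.of_forall fun w => ?_)
        simp only
        rw [cv_eq, ← integral_mul_const]
        refine integral_congr_ae (Eventually.of_forall fun v => ?_)
        simp only
        rw [sub_right_comm]
        ring
end

lemma cv_comm {d : ℕ} {Ψ Φ : Ed d × ℝ → ℝ} {s t : ℝ} (x : Ed d) :
    cv Ψ (fun y => Φ (y, s)) (x, t) = cv Φ (fun y => Ψ (y, t)) (x, s) := by
  rw [cv_eq, cv]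
  refine integral_congr_ae (Eventually.of_forall fun y => ?_)
  simp [mul_comm]

/-- `∂_e (t ∂_k Ψ)` -/
def DT {d : ℕ} (e : Ed d × ℝ) (k : Fin d) (Ψ : Ed d × ℝ → ℝ) (z : Ed d × ℝ) : ℝ :=
  fderiv ℝ (fun w => w.2 * fderiv ℝ Ψ w (eb d k)) z e

lemma TD_hom {d n : ℕ} {Ψ : Ed d × ℝ → ℝ} (h : HomK d n Ψ) (k : Fin d) :
    HomK d n (fun w => w.2 * fderiv ℝ Ψ w (eb d k)) :=
  (h.deriv (eb d k)).lin_mul (ContinuousLinearMap.snd ℝ (Ed d) ℝ)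

lemma DT_hom {d n : ℕ} {Ψ : Ed d × ℝ → ℝ} (h : HomK d n Ψ) (e : Ed d × ℝ) (k : Fin d) :
    HomK d (n+1) (DT e k Ψ) := (TD_hom h k).deriv e

lemma DT_eq {d n : ℕ} {Ψ : Ed d × ℝ → ℝ} (h : HomK d n Ψ) (e : Ed d × ℝ) (k : Fin d)
    {z : Ed d × ℝ} (hz : z ≠ 0) : DT e k Ψ z = e.2 * fderiv ℝ Ψ z (eb d k)
      + z.2 * fderiv ℝ (fun w => fderiv ℝ Ψ w (eb d k)) z e := by
  have h2 := ((h.deriv (eb d k)).diffAt hz).hasFDerivAt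
  have h3 := (hasFDerivAt_snd (𝕜 := ℝ) (p := z)).mul h2
  have h4 : fderiv ℝ (fun w => w.2 * fderiv ℝ Ψ w (eb d k)) z = _ := h3.fderiv
  rw [DT, h4]
  simp
  ring

lemma cv_DT {d n : ℕ} {Ψ : Ed d × ℝ → ℝ} (h : HomK d n Ψ) {p q : ℝ} (hpq : p.HolderConjugate q)
    (hd : (d:ℝ) < n * q) {f : Ed d → ℝ} (hf : MemLp f (ENNReal.ofReal p) volume) (e : Ed d × ℝ)
    (k : Fin d) {z : Ed d × ℝ} (hz : 0 < z.2) :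
    cv (DT e k Ψ) f z = e.2 * cv (fun w => fderiv ℝ Ψ w (eb d k)) f z
      + z.2 * cv (fun w => fderiv ℝ (fun w => fderiv ℝ Ψ w (eb d k)) w e) f z := by
  have hq := hpq.symm.pos
  have i1 := cv_integrable (h.deriv (eb d k)) hpq (by push_cast; nlinarith) hf hz
  have i2 := cv_integrable ((h.deriv (eb d k)).deriv e) hpq (by push_cast; nlinarith) hf hz
  simp only [cv]
  rw [← integral_const_mul, ← integral_const_mul, ← integral_add (i1.const_mul _) (i2.const_mul _)]
  refine integral_congr_ae (Eventually.of_forall fun y => ?_)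
  simp only
  rw [DT_eq h e k (ne_zero_of_pos (by simpa using hz))]
  simp
  ring

lemma cv_cont_at {d n : ℕ} {Ψ : Ed d × ℝ → ℝ} (h : HomK d n Ψ) {p q : ℝ} (hpq : p.HolderConjugate q)
    (hd : (d:ℝ) < n * q) {f : Ed d → ℝ} (hf : MemLp f (ENNReal.ofReal p) volume) (x : Ed d) {t : ℝ}
    (ht : 0 < t) : Tendsto (fun s => cv Ψ f (x, t + s)) (𝓝[>] 0) (𝓝 (cv Ψ f (x, t))) := by
  have h1 := (cv_diff h hpq hd hf (z := (x, t)) ht).continuousAt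
  have h2 : Tendsto (fun s : ℝ => ((x, t + s) : Ed d × ℝ)) (𝓝[>] 0) (𝓝 (x, t)) := by
    have : Continuous (fun s : ℝ => ((x, t + s) : Ed d × ℝ)) := by fun_prop
    have h3 := this.tendsto 0
    rw [add_zero] at h3
    exact h3.mono_left nhdsWithin_le_nhds
  exact h1.tendsto.comp h2

lemma cv_cont_slice {d n : ℕ} {Ψ : Ed d × ℝ → ℝ} (h : HomK d n Ψ) {p q : ℝ} (hpq : p.HolderConjugate q)
    (hd : (d:ℝ) < n * q) {f : Ed d → ℝ} (hf : MemLp f (ENNReal.ofReal p) volume) {t : ℝ}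
    (ht : 0 < t) : Continuous (fun x => cv Ψ f (x, t)) := by
  rw [continuous_iff_continuousAt]
  intro x
  have h1 := (cv_diff h hpq hd hf (z := (x, t)) ht).continuousAt
  exact h1.comp (f := fun x : Ed d => (x, t)) (by fun_prop)

lemma main_lim (d : ℕ) (hd : 0 < d) : ∃ K : ℝ, 0 < K ∧ ∀ p q : ℝ, p.HolderConjugate q →
    ∀ f : Fin d → Ed d → ℝ, (∀ k, MemLp (f k) (ENNReal.ofReal p) volume) →
    ∀ e : Ed d × ℝ, ∀ j : Fin d, ∀ t : ℝ, 0 < t → ∀ x : Ed d,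
    Tendsto (fun s => cv (QK d j) (fun y => ∑ k, cv (DT e k (PK d)) (f k) (y, t)) (x, s)) (𝓝[>] 0)
      (𝓝 (K * ∑ k, cv (DT e k (QK d j)) (f k) (x, t))) := by
  obtain ⟨K, hK, hQP⟩ := QP_semigroup d hd
  refine ⟨K, hK, ?_⟩
  intro p q hpq f hf e j t ht x
  have hd' : (1:ℝ) ≤ d := by exact_mod_cast hd
  have hdq : (d:ℝ) < d * q := by
    have := hpq.symm.lt
    nlinarith
  have hdq1 : (d:ℝ) < (d + 1 : ℕ) * q := by
    have := hpq.symm.lt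
    push_cast
    nlinarith
  have hdq2 : (d:ℝ) < (d + 1 + 1 : ℕ) * q := by
    have := hpq.symm.lt
    push_cast
    nlinarith
  have hQ := QK_hom d j
  have hP := PK_hom d
  have key : ∀ s, 0 < s → cv (QK d j) (fun y => ∑ k, cv (DT e k (PK d)) (f k) (y, t)) (x, s)
      = ∑ k, K * (e.2 * cv (fun w => fderiv ℝ (QK d j) w (eb d k)) (f k) (x, t + s)
        + t * cv (fun w => fderiv ℝ (fun w => fderiv ℝ (QK d j) w (eb d k)) w e) (f k) (x, t + s)) := by
    intro s hs
    have hL2 : MemLp (fun y => QK d j (y, s)) (ENNReal.ofReal 2) volume :=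
      hQ.memLp_slice hs one_le_two (by linarith)
    have h22 : Real.HolderConjugate 2 2 := Real.HolderConjugate.two_two
    have id0 : ∀ z : Ed d × ℝ, 0 < z.2 → cv (PK d) (fun y => QK d j (y, s)) z
        = K * QK d j (z + (0, s)) := by
      rintro ⟨a, b⟩ hb
      rw [cv_comm, hQP j b s hb hs a, add_comm s b]
      simp
    have h := fun k => cv_cv (DT_hom hP e k) (Nat.lt_succ_self d) hQ hpq hdq (hf k) hs ht x
    have : cv (QK d j) (fun y => ∑ k, cv (DT e k (PK d)) (f k) (y, t)) (x, s)
        = ∑ k, cv (QK d j) (fun y => cv (DT e k (PK d)) (f k) (y, t)) (x, s) := by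
      simp only [cv.eq_1 (QK d j), Finset.mul_sum]
      exact integral_finset_sum _ fun k _ => (h k).1
    rw [this]
    refine Finset.sum_congr rfl fun k _ => ?_
    rw [(h k).2]
    have id1 := cv_deriv_id hP hQ h22 (by linarith) hL2 hs id0 (eb d k)
    have id2 := cv_deriv_id (hP.deriv (eb d k)) (hQ.deriv (eb d k)) h22
      (by push_cast; linarith) hL2 hs id1 e
    have hts : 0 < t + s := by linarith
    have i1 := cv_integrable (hQ.deriv (eb d k)) hpq hdq1 (hf k) (z := (x, t + s)) hts
    have i2 := cv_integrable ((hQ.deriv (eb d k)).deriv e) hpq hdq2 (hf k) (z := (x, t + s)) hts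
    simp only [cv.eq_1 _ (f k)]
    rw [← integral_const_mul, ← integral_const_mul, ← integral_add (i1.const_mul _) (i2.const_mul _),
      ← integral_const_mul]
    refine integral_congr_ae (Eventually.of_forall fun w => ?_)
    simp only
    rw [cv_DT hP h22 (by linarith) hL2 e k (z := (x - w, t)) ht, id1 (x - w, t) ht, id2 (x - w, t) ht]
    simp
    ring
  have hlim : Tendsto (fun s => ∑ k, K * (e.2 * cv (fun w => fderiv ℝ (QK d j) w (eb d k)) (f k) (x, t + s)
        + t * cv (fun w => fderiv ℝ (fun w => fderiv ℝ (QK d j) w (eb d k)) w e) (f k) (x, t + s)))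
      (𝓝[>] 0) (𝓝 (K * ∑ k, cv (DT e k (QK d j)) (f k) (x, t))) := by
    rw [Finset.mul_sum]
    refine tendsto_finset_sum _ fun k _ => ?_
    rw [cv_DT hQ hpq hdq (hf k) e k (z := (x, t)) ht]
    exact (((cv_cont_at (hQ.deriv (eb d k)) hpq hdq1 (hf k) x ht).const_mul e.2).add
      ((cv_cont_at ((hQ.deriv (eb d k)).deriv e) hpq hdq2 (hf k) x ht).const_mul t)).const_mul K
  refine hlim.congr' ?_
  filter_upwards [self_mem_nhdsWithin] with s hs
  exact (key s hs).symm

lemma riesz_pointwise {p : ℝ} (hp : 1 < p) (hp2 : p ≤ 2) : ∃ A B : ℝ, 0 ≤ A ∧ ∀ w : ℂ, 0 < w.re →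
    |w.im| ^ p ≤ A * w.re ^ p - B * (w ^ (p:ℂ)).re := by
  have hpi := Real.pi_pos
  set γ := -Real.cos (p * (Real.pi / 2)) with hγ
  have hγ0 : 0 < γ := by
    rw [hγ, neg_pos]
    apply Real.cos_neg_of_pi_div_two_lt_of_lt <;> nlinarith
  set M := p * Real.pi / γ with hM
  have hM0 : 0 < M := by positivity
  refine ⟨M ^ (p + 1), 2 / γ, by positivity, fun w hw => ?_⟩
  have hw0 : w ≠ 0 := by rintro rfl; simp at hw
  have hn : 0 < ‖w‖ := norm_pos_iff.2 hw0
  have hθ := Complex.abs_arg_lt_pi_div_two_iff.2 (Or.inl hw)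
  set c := Real.cos w.arg with hc
  have hre : w.re = ‖w‖ * c := (Complex.norm_mul_cos_arg w).symm
  have hc0 : 0 < c := by
    rw [hre] at hw
    exact (mul_pos_iff_of_pos_left hn).1 hw
  have hc1 : c ≤ 1 := Real.cos_le_one _
  have h1 : Real.pi / 2 - |w.arg| ≤ Real.pi / 2 * c := by
    have := Real.mul_le_sin (x := Real.pi / 2 - |w.arg|) (by linarith) (by linarith [abs_nonneg w.arg])
    rw [Real.sin_pi_div_two_sub, Real.cos_abs] at this
    rw [div_mul_eq_mul_div, div_le_iff₀ hpi] at this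
    linarith
  have h2 : Real.cos (w.arg * p) ≤ -γ + p * Real.pi / 2 * c := by
    have h3 := Real.abs_cos_sub_cos_le (|w.arg| * p) (p * (Real.pi / 2))
    have h4 : Real.cos (|w.arg| * p) = Real.cos (w.arg * p) := by
      rw [← Real.cos_abs (w.arg * p), abs_mul, abs_of_pos (by linarith : 0 < p)]
    rw [h4] at h3
    have h5 : |(|w.arg| * p - p * (Real.pi / 2))| = p * (Real.pi / 2 - |w.arg|) := by
      rw [abs_of_nonpos (by nlinarith)]; ring
    rw [h5] at h3
    have h6 := le_of_abs_le h3
    have h7 := mul_le_mul_of_nonneg_left h1 (by linarith : 0 ≤ p)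
    rw [hγ]
    nlinarith
  have h3 : 1 ≤ M ^ (p + 1) * c ^ p - 2 / γ * Real.cos (w.arg * p) := by
    have h4 : 2 / γ * Real.cos (w.arg * p) ≤ -2 + M * c := by
      have := mul_le_mul_of_nonneg_left h2 (by positivity : 0 ≤ 2 / γ)
      refine this.trans (le_of_eq ?_)
      rw [hM]; field_simp
    suffices M * c - 1 ≤ M ^ (p+1) * c ^ p by linarith
    rcases le_or_gt (M * c) 1 with h | h
    · have : 0 ≤ M ^ (p+1) * c ^ p := by positivity
      linarith
    · have h5 : 1 ≤ (M * c) ^ p := Real.one_le_rpow h.le (by linarith)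
      rw [Real.rpow_add_one hM0.ne', mul_right_comm, ← Real.mul_rpow hM0.le hc0.le]
      nlinarith
  rw [Complex.cpow_ofReal_re, hre, Real.mul_rpow hn.le hc0.le]
  have h4 : |w.im| ^ p ≤ ‖w‖ ^ p :=
    Real.rpow_le_rpow (abs_nonneg _) (Complex.abs_im_le_norm w) (by linarith)
  have h5 := mul_le_mul_of_nonneg_left h3 (by positivity : 0 ≤ ‖w‖ ^ p)
  nlinarith

/-- Cauchy transform -/
def cauT (g : ℝ → ℝ) (z : ℂ) : ℂ := ∫ t, (g t : ℂ) * (Complex.I / (z - t))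

section
variable {g : ℝ → ℝ}

lemma cauT_kernel {z : ℂ} (hz : 0 < z.im) (t : ℝ) : Complex.I / (z - t)
    = ((z.im / ((z.re - t) ^ 2 + z.im ^ 2) : ℝ) : ℂ)
      + (((z.re - t) / ((z.re - t) ^ 2 + z.im ^ 2) : ℝ) : ℂ) * Complex.I := by
  have h0 : (z.re - t) ^ 2 + z.im ^ 2 ≠ 0 := by positivity
  have h1 : z - t ≠ 0 := by
    intro h
    have := congrArg Complex.im h
    simp at this
    linarith
  have h2 : ((z.re:ℂ) - t) ^ 2 + (z.im:ℂ) ^ 2 ≠ 0 := by exact_mod_cast h0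
  rw [div_eq_iff h1]
  push_cast
  have h3 : z - t = ((z.re:ℂ) - t) + z.im * Complex.I := by
    conv_lhs => rw [← Complex.re_add_im z]
    ring
  rw [h3]
  field_simp
  have := Complex.I_sq
  linear_combination (-(z.re - (t:ℂ)) * z.im - 0) * this

lemma cauT_norm_sub {z : ℂ} (t : ℝ) : z.im ≤ ‖z - t‖ := by
  have := Complex.abs_im_le_norm (z - t)
  simp at this
  exact (le_abs_self _).trans this

lemma cauT_hasDerivAt (hg : Integrable g volume) {z : ℂ} (hz : 0 < z.im) :
    DifferentiableAt ℂ (cauT g) z := by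
  have hball : ∀ w ∈ Metric.ball z (z.im / 2), z.im / 2 < w.im := by
    intro w hw
    rw [Metric.mem_ball, dist_eq_norm] at hw
    have := (Complex.abs_im_le_norm (w - z)).trans_lt hw
    rw [abs_lt] at this
    simp at this
    linarith
  have hne : ∀ w : ℂ, 0 < w.im → ∀ t : ℝ, w - t ≠ 0 := by
    intro w hw t h
    have := cauT_norm_sub (z := w) t
    rw [h, norm_zero] at this
    linarith
  have hmeas : ∀ w : ℂ, 0 < w.im → AEStronglyMeasurable
      (fun t : ℝ => (g t : ℂ) * (Complex.I / (w - t))) volume := by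
    intro w hw
    refine (hg.ofReal (𝕜 := ℂ)).1.mul (Continuous.aestronglyMeasurable ?_)
    exact Continuous.div continuous_const (by fun_prop) (hne w hw)
  have hz2 : 0 < z.im / 2 := by linarith
  have h := hasDerivAt_integral_of_dominated_loc_of_deriv_le (μ := volume) (𝕜 := ℂ)
    (F := fun (w : ℂ) (t : ℝ) => (g t : ℂ) * (Complex.I / (w - t))) (x₀ := z)
    (F' := fun (w : ℂ) (t : ℝ) => (g t : ℂ) * (-Complex.I / (w - t) ^ 2))
    (s := Metric.ball z (z.im / 2))
    (bound := fun t => ‖g t‖ * (1 / (z.im / 2) ^ 2))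
    (Metric.ball_mem_nhds z hz2) ?_ ?_ ?_ ?_ (hg.norm.mul_const _) ?_
  · exact h.2.differentiableAt
  · filter_upwards [Metric.ball_mem_nhds z hz2] with w hw
    exact hmeas w (by linarith [hball w hw])
  · refine (hg.norm.mul_const (1 / z.im)).mono' (hmeas z hz) (Eventually.of_forall fun t => ?_)
    rw [norm_mul, Complex.norm_real, norm_div, Complex.norm_I]
    gcongr
    exact cauT_norm_sub t
  · refine (hg.ofReal (𝕜 := ℂ)).1.mul (Continuous.aestronglyMeasurable ?_)
    exact Continuous.div continuous_const (by fun_prop) (fun t => pow_ne_zero 2 (hne z hz t))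
  · refine Eventually.of_forall fun t w hw => ?_
    rw [norm_mul, Complex.norm_real, norm_div, norm_neg, Complex.norm_I, norm_pow]
    have := hball w hw
    have := cauT_norm_sub (z := w) t
    gcongr
    linarith
  · refine Eventually.of_forall fun t w hw => ?_
    have hw0 := hne w (by linarith [hball w hw]) t
    have h1 : HasDerivAt (fun w : ℂ => Complex.I / (w - t)) (-Complex.I / (w - t) ^ 2) w := by
      have := (hasDerivAt_const w Complex.I).div ((hasDerivAt_id w).sub_const (t:ℂ)) hw0
      refine this.congr_deriv ?_
      simp
    exact h1.const_mul _

lemma cauT_integrable (hg : Integrable g volume) {z : ℂ} (hz : 0 < z.im) :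
    Integrable (fun t : ℝ => (g t : ℂ) * (Complex.I / (z - t))) volume := by
  have hne : ∀ t : ℝ, z - t ≠ 0 := by
    intro t h
    have := cauT_norm_sub (z := z) t
    rw [h, norm_zero] at this
    linarith
  refine (hg.norm.mul_const (1 / z.im)).mono' ?_ (Eventually.of_forall fun t => ?_)
  · refine (hg.ofReal (𝕜 := ℂ)).1.mul (Continuous.aestronglyMeasurable ?_)
    exact Continuous.div continuous_const (by fun_prop) hne
  · rw [norm_mul, Complex.norm_real, norm_div, Complex.norm_I]
    gcongr
    exact cauT_norm_sub t

lemma cauT_re (hg : Integrable g volume) {z : ℂ} (hz : 0 < z.im) :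
    (cauT g z).re = ∫ t, z.im / ((z.re - t) ^ 2 + z.im ^ 2) * g t := by
  have := integral_re (𝕜 := ℂ) (cauT_integrable hg hz)
  simp only [RCLike.re_to_complex] at this
  rw [cauT, ← this]
  refine integral_congr_ae (Eventually.of_forall fun t => ?_)
  simp only
  rw [cauT_kernel hz]
  simp only [Complex.re_ofReal_mul, Complex.add_re, Complex.ofReal_re, Complex.I_re, mul_zero, add_zero]
  ring

lemma cauT_im (hg : Integrable g volume) {z : ℂ} (hz : 0 < z.im) :
    (cauT g z).im = ∫ t, (z.re - t) / ((z.re - t) ^ 2 + z.im ^ 2) * g t := by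
  have := integral_im (𝕜 := ℂ) (cauT_integrable hg hz)
  simp only [RCLike.im_to_complex] at this
  rw [cauT, ← this]
  refine integral_congr_ae (Eventually.of_forall fun t => ?_)
  simp only
  rw [cauT_kernel hz]
  simp only [Complex.im_ofReal_mul, Complex.add_im, Complex.ofReal_im, Complex.I_im, mul_one, zero_add]
  ring

lemma cauT_bound (hg : Integrable g volume) (hs : HasCompactSupport g) {s : ℝ} (h0 : 0 < s) :
    ∃ D, 0 ≤ D ∧ ∀ z : ℂ, s ≤ z.im → ‖cauT g z‖ ≤ D * (1 + ‖z‖)⁻¹ := by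
  obtain ⟨R, hR0, hR⟩ := hs.isBounded.subset_closedBall_lt 0 (0:ℝ)
  refine ⟨(∫ t, ‖g t‖) * ((1 + R) / s + 1), by positivity, fun z hz => ?_⟩
  rw [cauT, mul_assoc, ← integral_mul_const]
  refine norm_integral_le_of_norm_le (hg.norm.mul_const _) (Eventually.of_forall fun t => ?_)
  rw [norm_mul, Complex.norm_real, norm_div, Complex.norm_I]
  by_cases ht : g t = 0
  · simp [ht]
  have ht' : |t| ≤ R := by
    have := hR (subset_tsupport g ht)
    simpa using this
  have h1 := cauT_norm_sub (z := z) t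
  have h2 : ‖z‖ ≤ ‖z - t‖ + |t| := by
    have := norm_add_le (z - t) (t:ℂ)
    rwa [sub_add_cancel, Complex.norm_real, Real.norm_eq_abs] at this
  have h3 : (1 + R) ≤ (1 + R) / s * ‖z - t‖ := by
    rw [div_mul_eq_mul_div, le_div_iff₀ h0]
    gcongr
    linarith
  have h4 : 0 < ‖z - t‖ := by linarith
  gcongr
  rw [← div_eq_mul_inv, div_le_div_iff₀ h4 (by positivity)]
  nlinarith

lemma cauT_re_pos (hg : Continuous g) (hs : HasCompactSupport g) (hg0 : 0 ≤ g) (hne : g ≠ 0)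
    {z : ℂ} (hz : 0 < z.im) : 0 < (cauT g z).re := by
  rw [cauT_re (hg.integrable_of_hasCompactSupport hs) hz]
  obtain ⟨t, ht⟩ := Function.ne_iff.1 hne
  have hpos : ∀ t : ℝ, 0 < z.im / ((z.re - t) ^ 2 + z.im ^ 2) := fun t => by positivity
  refine Continuous.integral_pos_of_hasCompactSupport_nonneg_nonzero (x := t) ?_ ?_ ?_ ?_
  · refine Continuous.mul (Continuous.div continuous_const (by fun_prop) fun t => ?_) hg
    positivity
  · exact hs.mul_left
  · intro t
    exact mul_nonneg (hpos t).le (hg0 t)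
  · exact mul_ne_zero (hpos t).ne' ht

lemma cauT_pow_integrable (hg : Integrable g volume) (hs : HasCompactSupport g) {s : ℝ} (h0 : 0 < s)
    {p : ℝ} (hp : 1 < p) : Integrable (fun x : ℝ => ‖cauT g (x + s * Complex.I)‖ ^ p) volume := by
  obtain ⟨D, hD0, hD⟩ := cauT_bound hg hs h0
  have hcont : Continuous (fun x : ℝ => cauT g (x + s * Complex.I)) := by
    rw [continuous_iff_continuousAt]
    intro x
    have := (cauT_hasDerivAt hg (z := x + s * Complex.I) (by simpa using h0)).continuousAt
    exact this.comp (f := fun x : ℝ => (x + s * Complex.I : ℂ)) (by fun_prop)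
  have hi := (integrable_one_add_norm (E := ℝ) (μ := volume) (r := p) (by simpa using hp)).const_mul (D ^ p)
  refine hi.mono' (Continuous.aestronglyMeasurable ?_) (Eventually.of_forall fun x => ?_)
  · exact hcont.norm.rpow_const fun x => Or.inr (by linarith)
  · rw [Real.norm_of_nonneg (by positivity)]
    have h1 := hD (x + s * Complex.I) (by simp)
    have h2 : ‖x‖ ≤ ‖(x + s * Complex.I : ℂ)‖ := by
      have := Complex.abs_re_le_norm (x + s * Complex.I : ℂ)
      simpa using this
    have h3 : ‖cauT g (x + s * Complex.I)‖ ≤ D * (1 + ‖x‖)⁻¹ := by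
      refine h1.trans ?_
      gcongr
    refine (Real.rpow_le_rpow (norm_nonneg _) h3 (by linarith)).trans (le_of_eq ?_)
    rw [Real.mul_rpow hD0 (by positivity), Real.rpow_neg (by positivity), Real.inv_rpow (by positivity)]

lemma cauT_integral_zero (hg : Continuous g) (hs : HasCompactSupport g) (hg0 : 0 ≤ g) (hne : g ≠ 0)
    {p : ℝ} (hp : 1 < p) {s : ℝ} (h0 : 0 < s) :
    Integrable (fun x : ℝ => (cauT g (x + s * Complex.I)) ^ (p:ℂ)) volume ∧
    ∫ x : ℝ, (cauT g (x + s * Complex.I)) ^ (p:ℂ) = 0 := by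
  have hgi : Integrable g volume := hg.integrable_of_hasCompactSupport hs
  obtain ⟨D, hD0, hD⟩ := cauT_bound hgi hs h0
  have hdiff : ∀ z : ℂ, 0 < z.im → DifferentiableAt ℂ (fun z => cauT g z ^ (p:ℂ)) z := by
    intro z hz
    exact (cauT_hasDerivAt hgi hz).cpow_const (Or.inl (cauT_re_pos hg hs hg0 hne hz))
  have hcont : Continuous (fun x : ℝ => cauT g (x + s * Complex.I) ^ (p:ℂ)) := by
    rw [continuous_iff_continuousAt]
    intro x
    have := (hdiff (x + s * Complex.I) (by simpa using h0)).continuousAt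
    exact this.comp (f := fun x : ℝ => (x + s * Complex.I : ℂ)) (by fun_prop)
  have hInt0 : Integrable (fun x : ℝ => (cauT g (x + s * Complex.I)) ^ (p:ℂ)) volume := by
    refine (cauT_pow_integrable hgi hs h0 hp).mono' hcont.aestronglyMeasurable
      (Eventually.of_forall fun x => ?_)
    rw [Complex.norm_cpow_real]
  refine ⟨hInt0, ?_⟩
  have hlim := intervalIntegral_tendsto_integral hInt0 tendsto_neg_atTop_atBot tendsto_id
  refine tendsto_nhds_unique hlim ?_
  have hb : ∀ N : ℝ, 0 < N → ∀ z : ℂ, s ≤ z.im → N ≤ ‖z‖ → ‖cauT g z ^ (p:ℂ)‖ ≤ D ^ p * N ^ (-p) := by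
    intro N hN z hz hzN
    rw [Complex.norm_cpow_real]
    have h3 : ‖cauT g z‖ ≤ D * N⁻¹ := by
      refine (hD z hz).trans ?_
      gcongr
      linarith
    refine (Real.rpow_le_rpow (norm_nonneg _) h3 (by linarith)).trans (le_of_eq ?_)
    rw [Real.mul_rpow hD0 (by positivity), Real.rpow_neg (by positivity), Real.inv_rpow (by positivity)]
  have hmaj : Tendsto (fun N : ℝ => 4 * (D ^ p * N ^ (-(p-1)))) atTop (𝓝 0) := by
    have := tendsto_rpow_neg_atTop (y := p - 1) (by linarith)
    simpa using (this.const_mul (D ^ p)).const_mul 4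
  refine squeeze_zero_norm' ?_ hmaj
  filter_upwards [eventually_gt_atTop 0] with N hN
  have hrect := Complex.integral_boundary_rect_eq_zero_of_differentiableOn
    (fun z => cauT g z ^ (p:ℂ)) (⟨-N, s⟩ : ℂ) (⟨N, s + N⟩ : ℂ) (by
      intro z hz
      rw [Complex.mem_reProdIm] at hz
      have := hz.2
      simp only [uIcc_of_le (by linarith : s ≤ s + N)] at this
      exact (hdiff z (by linarith [this.1])).differentiableWithinAt)
  simp only at hrect
  have n1 : ‖∫ x in (-N)..N, cauT g (x + (s + N : ℝ) * Complex.I) ^ (p:ℂ)‖ ≤ D ^ p * N ^ (-p) * |N - (-N)| := by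
    refine intervalIntegral.norm_integral_le_of_norm_le_const fun x hx => ?_
    refine hb N hN _ (by simp; linarith) ?_
    have := Complex.abs_im_le_norm (x + (s + N : ℝ) * Complex.I)
    simp at this
    rw [abs_of_pos (by linarith)] at this
    push_cast
    linarith
  have n2 : ∀ a : ℝ, |a| = N → ‖∫ y in s..(s+N), cauT g (a + y * Complex.I) ^ (p:ℂ)‖
      ≤ D ^ p * N ^ (-p) * |s + N - s| := by
    intro a ha
    refine intervalIntegral.norm_integral_le_of_norm_le_const fun y hy => ?_
    rw [uIoc_of_le (by linarith)] at hy
    refine hb N hN _ (by simp; linarith [hy.1]) ?_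
    have := Complex.abs_re_le_norm (a + y * Complex.I)
    simp at this
    linarith
  have n3 := n2 N (abs_of_pos hN)
  have n4 := n2 (-N) (by rw [abs_neg, abs_of_pos hN])
  have hNN : N ^ (-(p-1)) = N ^ (-p) * N := by
    rw [← Real.rpow_add_one hN.ne']; congr 1; ring
  rw [hNN]
  rw [abs_of_pos (by linarith)] at n1
  rw [abs_of_pos (by linarith)] at n3 n4
  have heq : (∫ x in (-N)..(id N), cauT g (x + s * Complex.I) ^ (p:ℂ))
      = (∫ x in (-N)..N, cauT g (x + (s + N : ℝ) * Complex.I) ^ (p:ℂ))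
        - Complex.I • (∫ y in s..(s+N), cauT g (N + y * Complex.I) ^ (p:ℂ))
        + Complex.I • (∫ y in s..(s+N), cauT g ((-N : ℝ) + y * Complex.I) ^ (p:ℂ)) := by
    rw [id]
    linear_combination hrect
  rw [heq]
  refine (norm_add_le _ _).trans ((add_le_add_left (norm_sub_le _ _) _).trans ?_)
  rw [norm_smul, norm_smul, Complex.norm_I]
  linarith

lemma conj_le_poisson {p : ℝ} (hp : 1 < p) (hp2 : p ≤ 2) : ∃ A : ℝ, 0 ≤ A ∧
    ∀ g : ℝ → ℝ, Continuous g → HasCompactSupport g → 0 ≤ g → ∀ s : ℝ, 0 < s →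
    ∫⁻ x, ‖∫ t, (x - t) / ((x - t) ^ 2 + s ^ 2) * g t‖ₑ ^ p
      ≤ ENNReal.ofReal A * ∫⁻ x, ‖∫ t, s / ((x - t) ^ 2 + s ^ 2) * g t‖ₑ ^ p := by
  obtain ⟨A, B, hA, hAB⟩ := riesz_pointwise hp hp2
  refine ⟨A, hA, fun g hg hs hg0 s h0 => ?_⟩
  by_cases hne : g = 0
  · subst hne
    simp [ENNReal.zero_rpow_of_pos (by linarith : 0 < p)]
  have hgi : Integrable g volume := hg.integrable_of_hasCompactSupport hs
  have hz : ∀ x : ℝ, 0 < (x + s * Complex.I : ℂ).im := by intro x; simpa using h0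
  obtain ⟨i0, hI⟩ := cauT_integral_zero hg hs hg0 hne hp h0
  have iN := cauT_pow_integrable hgi hs h0 hp
  have hcont : Continuous (fun x : ℝ => cauT g (x + s * Complex.I)) := by
    rw [continuous_iff_continuousAt]
    intro x
    have := (cauT_hasDerivAt hgi (hz x)).continuousAt
    exact this.comp (f := fun x : ℝ => (x + s * Complex.I : ℂ)) (by fun_prop)
  have e1 : ∀ x : ℝ, (∫ t, (x - t) / ((x - t) ^ 2 + s ^ 2) * g t) = (cauT g (x + s * Complex.I)).im := by
    intro x; rw [cauT_im hgi (hz x)]; simp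
  have e2 : ∀ x : ℝ, (∫ t, s / ((x - t) ^ 2 + s ^ 2) * g t) = (cauT g (x + s * Complex.I)).re := by
    intro x; rw [cauT_re hgi (hz x)]; simp
  simp_rw [e1, e2]
  have hp0 : 0 ≤ p := by linarith
  have e3 : ∀ r : ℝ, ‖r‖ₑ ^ p = ENNReal.ofReal (|r| ^ p) := by
    intro r
    rw [← ofReal_norm, Real.norm_eq_abs, ENNReal.ofReal_rpow_of_nonneg (abs_nonneg _) hp0]
  simp_rw [e3]
  have iim : Integrable (fun x : ℝ => |(cauT g (x + s * Complex.I)).im| ^ p) volume := by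
    refine iN.mono' (Continuous.aestronglyMeasurable ?_) (Eventually.of_forall fun x => ?_)
    · exact (Complex.continuous_im.comp hcont).abs.rpow_const fun x => Or.inr hp0
    · rw [Real.norm_of_nonneg (by positivity)]
      exact Real.rpow_le_rpow (abs_nonneg _) (Complex.abs_im_le_norm _) hp0
  have ire : Integrable (fun x : ℝ => |(cauT g (x + s * Complex.I)).re| ^ p) volume := by
    refine iN.mono' (Continuous.aestronglyMeasurable ?_) (Eventually.of_forall fun x => ?_)
    · exact (Complex.continuous_re.comp hcont).abs.rpow_const fun x => Or.inr hp0
    · rw [Real.norm_of_nonneg (by positivity)]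
      exact Real.rpow_le_rpow (abs_nonneg _) (Complex.abs_re_le_norm _) hp0
  rw [← ofReal_integral_eq_lintegral_ofReal iim (Eventually.of_forall fun x => by positivity),
    ← ofReal_integral_eq_lintegral_ofReal ire (Eventually.of_forall fun x => by positivity),
    ← ENNReal.ofReal_mul hA]
  apply ENNReal.ofReal_le_ofReal
  have i0re : Integrable (fun x : ℝ => ((cauT g (x + s * Complex.I)) ^ (p:ℂ)).re) volume := i0.re
  have hre0 : ∫ x : ℝ, ((cauT g (x + s * Complex.I)) ^ (p:ℂ)).re = 0 := by
    have := integral_re (𝕜 := ℂ) i0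
    simp only [RCLike.re_to_complex] at this
    rw [this, hI]; simp
  have : A * ∫ x : ℝ, |(cauT g (x + s * Complex.I)).re| ^ p
      = ∫ x : ℝ, (A * |(cauT g (x + s * Complex.I)).re| ^ p - B * ((cauT g (x + s * Complex.I)) ^ (p:ℂ)).re) := by
    rw [integral_sub (ire.const_mul A) (i0re.const_mul B), integral_const_mul, integral_const_mul, hre0]
    ring
  rw [this]
  refine integral_mono iim ((ire.const_mul A).sub (i0re.const_mul B)) fun x => ?_
  have hpos := cauT_re_pos hg hs hg0 hne (hz x)
  have := hAB _ hpos
  simp only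
  rwa [abs_of_pos hpos]

end

lemma jensen_lint {α : Type*} [MeasurableSpace α] (μ : Measure α) {p : ℝ} (hp : 1 < p)
    {a h : α → ℝ≥0∞} (ha : AEMeasurable a μ) (hh : AEMeasurable h μ) :
    (∫⁻ x, a x * h x ∂μ) ^ p ≤ (∫⁻ x, a x ∂μ) ^ (p - 1) * ∫⁻ x, a x * h x ^ p ∂μ := by
  have hpq : p.HolderConjugate (Real.conjExponent p) := Real.HolderConjugate.conjExponent hp
  set q := Real.conjExponent p with hq
  have hp0 : 0 < p := by linarith
  have hq0 : 0 < q := hpq.symm.pos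
  have hH := ENNReal.lintegral_mul_le_Lp_mul_Lq μ hpq.symm (f := fun x => a x ^ (1/q))
    (g := fun x => a x ^ (1/p) * h x) (ha.pow_const _) ((ha.pow_const _).mul hh)
  have e0 : ∀ x, ((fun x => a x ^ (1/q)) * fun x => a x ^ (1/p) * h x) x = a x * h x := by
    intro x
    simp only [Pi.mul_apply]
    rw [← mul_assoc, ← ENNReal.rpow_add_of_nonneg _ _ (by positivity) (by positivity)]
    have : 1/q + 1/p = 1 := by have := hpq.symm.inv_add_inv_eq_one; simpa using this
    rw [this, ENNReal.rpow_one]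
  have e1 : ∀ x, (a x ^ (1/q)) ^ q = a x := by
    intro x
    rw [← ENNReal.rpow_mul, one_div_mul_cancel hq0.ne', ENNReal.rpow_one]
  have e2 : ∀ x, (a x ^ (1/p) * h x) ^ p = a x * h x ^ p := by
    intro x
    rw [ENNReal.mul_rpow_of_nonneg _ _ hp0.le, ← ENNReal.rpow_mul, one_div_mul_cancel hp0.ne', ENNReal.rpow_one]
  simp_rw [e0, e1, e2] at hH
  refine (ENNReal.rpow_le_rpow hH hp0.le).trans (le_of_eq ?_)
  rw [ENNReal.mul_rpow_of_nonneg _ _ hp0.le, ← ENNReal.rpow_mul, ← ENNReal.rpow_mul,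
    one_div_mul_cancel hp0.ne', ENNReal.rpow_one]
  congr 2
  rw [hq, Real.conjExponent]
  field_simp

lemma lint_add_rpow {α : Type*} [MeasurableSpace α] {μ : Measure α} {p : ℝ} (hp : 1 < p)
    {u v : α → ℝ} (hu : Measurable u) (hv : Measurable v) :
    ∫⁻ x, ‖u x + v x‖ₑ ^ p ∂μ ≤ ENNReal.ofReal (2 ^ (p - 1)) *
      ((∫⁻ x, ‖u x‖ₑ ^ p ∂μ) + ∫⁻ x, ‖v x‖ₑ ^ p ∂μ) := by
  rw [← lintegral_add_left (by fun_prop), ← lintegral_const_mul _ (by fun_prop)]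
  refine lintegral_mono fun x => ?_
  refine (ENNReal.rpow_le_rpow (enorm_add_le _ _) (by linarith)).trans ?_
  rw [← ENNReal.ofReal_rpow_of_pos two_pos, ENNReal.ofReal_ofNat]
  exact ENNReal.rpow_add_le_mul_rpow_add_rpow _ _ hp.le

/-- Young/Minkowski for convolutions on `ℝ` -/
lemma young_lint {p : ℝ} (hp : 1 < p) {a h : ℝ → ℝ≥0∞} (ha : Measurable a) (hh : Measurable h) :
    ∫⁻ x, (∫⁻ t, a (x - t) * h t) ^ p ≤ (∫⁻ t, a t) ^ p * ∫⁻ t, h t ^ p := by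
  have e0 : ∀ x : ℝ, ∫⁻ t, a (x - t) = ∫⁻ t, a t := fun x => lintegral_sub_left_eq_self a x
  calc ∫⁻ x, (∫⁻ t, a (x - t) * h t) ^ p
      ≤ ∫⁻ x, (∫⁻ t, a t) ^ (p - 1) * ∫⁻ t, a (x - t) * h t ^ p := by
        refine lintegral_mono fun x => ?_
        have := jensen_lint volume hp (a := fun t => a (x - t)) (h := h) (by fun_prop) hh.aemeasurable
        rwa [e0] at this
    _ = (∫⁻ t, a t) ^ (p - 1) * ∫⁻ x, ∫⁻ t, a (x - t) * h t ^ p := by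
        rw [lintegral_const_mul]
        exact Measurable.lintegral_prod_right' (f := fun z : ℝ × ℝ => a (z.1 - z.2) * h z.2 ^ p) (by fun_prop)
    _ = (∫⁻ t, a t) ^ (p - 1) * ((∫⁻ t, a t) * ∫⁻ t, h t ^ p) := by
        congr 1
        rw [lintegral_lintegral_swap (by fun_prop)]
        have : ∀ t : ℝ, ∫⁻ x, a (x - t) * h t ^ p = (∫⁻ t, a t) * h t ^ p := by
          intro t
          rw [lintegral_mul_const _ (by fun_prop), lintegral_sub_right_eq_self a t]
        simp_rw [this]
        rw [lintegral_const_mul _ (by fun_prop)]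
    _ = _ := by
        rw [← mul_assoc]
        congr 1
        nth_rewrite 2 [← ENNReal.rpow_one (∫⁻ t, a t)]
        rw [← ENNReal.rpow_add_of_nonneg _ _ (by linarith) (by linarith)]
        congr 1; ring

lemma poisson_kernel_lint {s : ℝ} (hs : 0 < s) :
    ∫⁻ r : ℝ, ENNReal.ofReal (s / (r ^ 2 + s ^ 2)) = ENNReal.ofReal Real.pi := by
  have e : (fun r : ℝ => s / (r ^ 2 + s ^ 2)) = fun r : ℝ => s⁻¹ * (1 + (r / s) ^ 2)⁻¹ := by
    ext r; field_simp; ring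
  have hi : Integrable (fun r : ℝ => s / (r ^ 2 + s ^ 2)) volume := by
    rw [e]
    exact (integrable_inv_one_add_sq.comp_div hs.ne').const_mul _
  rw [← ofReal_integral_eq_lintegral_ofReal hi (Eventually.of_forall fun r => by positivity)]
  congr 1
  rw [e, integral_const_mul, Measure.integral_comp_div (fun r : ℝ => (1 + r ^ 2)⁻¹) s,
    integral_univ_inv_one_add_sq, abs_of_pos hs, smul_eq_mul]
  field_simp

lemma poisson1_bound {p : ℝ} (hp : 1 < p) {g : ℝ → ℝ} (hg : Measurable g) {s : ℝ} (hs : 0 < s) :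
    ∫⁻ x, (∫⁻ t, ENNReal.ofReal (s / ((x - t) ^ 2 + s ^ 2)) * ‖g t‖ₑ) ^ p
      ≤ ENNReal.ofReal (Real.pi ^ p) * ∫⁻ t, ‖g t‖ₑ ^ p := by
  have := young_lint hp (a := fun r => ENNReal.ofReal (s / (r ^ 2 + s ^ 2))) (h := fun t => ‖g t‖ₑ)
    (by fun_prop) (by fun_prop)
  rwa [poisson_kernel_lint hs, ENNReal.ofReal_rpow_of_nonneg Real.pi_pos.le (by linarith)] at this

/-- `L^p` bound for the conjugate Poisson kernel, on continuous compactly supported functions -/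
def HBd (p C : ℝ) : Prop := ∀ g : ℝ → ℝ, Continuous g → HasCompactSupport g → ∀ s : ℝ, 0 < s →
    ∫⁻ x, ‖∫ t, (x - t) / ((x - t) ^ 2 + s ^ 2) * g t‖ₑ ^ p ≤ ENNReal.ofReal C * ∫⁻ t, ‖g t‖ₑ ^ p

lemma hk_cont {s : ℝ} (hs : 0 < s) : Continuous (fun r : ℝ => r / (r ^ 2 + s ^ 2)) :=
  Continuous.div (by fun_prop) (by fun_prop) fun r => by positivity

lemma HBd_le_two {p : ℝ} (hp : 1 < p) (hp2 : p ≤ 2) : ∃ C, 0 ≤ C ∧ HBd p C := by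
  obtain ⟨A, hA, h⟩ := conj_le_poisson hp hp2
  have key : ∀ g : ℝ → ℝ, Continuous g → HasCompactSupport g → 0 ≤ g → ∀ s : ℝ, 0 < s →
      ∫⁻ x, ‖∫ t, (x - t) / ((x - t) ^ 2 + s ^ 2) * g t‖ₑ ^ p
        ≤ ENNReal.ofReal (A * Real.pi ^ p) * ∫⁻ t, ‖g t‖ₑ ^ p := by
    intro g hg hgs hg0 s hs
    refine (h g hg hgs hg0 s hs).trans ?_
    rw [ENNReal.ofReal_mul hA, mul_assoc]
    gcongr
    refine le_trans ?_ (poisson1_bound hp hg.measurable hs)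
    refine lintegral_mono fun x => ?_
    refine ENNReal.rpow_le_rpow ?_ (by linarith)
    refine (enorm_integral_le_lintegral_enorm _).trans (le_of_eq ?_)
    refine lintegral_congr fun t => ?_
    rw [enorm_mul, Real.enorm_of_nonneg (by positivity)]
  refine ⟨2 ^ (p - 1) * (2 * (A * Real.pi ^ p)), by have := Real.pi_pos; positivity, ?_⟩
  intro g hg hgs s hs
  let g1 : ℝ → ℝ := fun t => max (g t) 0
  let g2 : ℝ → ℝ := fun t => max (-g t) 0
  have c1 : Continuous g1 := by fun_prop
  have c2 : Continuous g2 := by fun_prop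
  have s1 : HasCompactSupport g1 := hgs.comp_left (g := fun r : ℝ => max r 0) (by simp)
  have s2 : HasCompactSupport g2 := hgs.comp_left (g := fun r : ℝ => max (-r) 0) (by simp)
  have k1 := key g1 c1 s1 (fun t => le_max_right _ _) s hs
  have k2 := key g2 c2 s2 (fun t => le_max_right _ _) s hs
  have hle : ∀ g' : ℝ → ℝ, (∀ t, |g' t| ≤ |g t|) → ∫⁻ t, ‖g' t‖ₑ ^ p ≤ ∫⁻ t, ‖g t‖ₑ ^ p := by
    intro g' hg'
    refine lintegral_mono fun t => ENNReal.rpow_le_rpow ?_ (by linarith)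
    exact enorm_le_iff_norm_le.2 (hg' t)
  have l1 := hle g1 (fun t => by
    simp only [g1]; rw [abs_of_nonneg (le_max_right _ _)]; exact max_le (le_abs_self _) (abs_nonneg _))
  have l2 := hle g2 (fun t => by
    simp only [g2]; rw [abs_of_nonneg (le_max_right _ _)]; exact max_le (neg_le_abs _) (abs_nonneg _))
  have hkc : ∀ x : ℝ, Continuous (fun t : ℝ => (x - t) / ((x - t) ^ 2 + s ^ 2)) := fun x =>
    (hk_cont hs).comp (by fun_prop : Continuous fun t : ℝ => x - t)
  have hsub : ∀ x : ℝ, (∫ t, (x - t) / ((x - t) ^ 2 + s ^ 2) * g t)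
      = (∫ t, (x - t) / ((x - t) ^ 2 + s ^ 2) * g1 t) + -(∫ t, (x - t) / ((x - t) ^ 2 + s ^ 2) * g2 t) := by
    intro x
    have i1 : Integrable (fun t => (x - t) / ((x - t) ^ 2 + s ^ 2) * g1 t) volume :=
      ((hkc x).mul c1).integrable_of_hasCompactSupport s1.mul_left
    have i2 : Integrable (fun t => (x - t) / ((x - t) ^ 2 + s ^ 2) * g2 t) volume :=
      ((hkc x).mul c2).integrable_of_hasCompactSupport s2.mul_left
    rw [← sub_eq_add_neg, ← integral_sub i1 i2]
    refine integral_congr_ae (Eventually.of_forall fun t => ?_)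
    simp only [g1, g2]
    rw [← mul_sub]
    congr 1
    rcases le_total (g t) 0 with h | h
    · rw [max_eq_right h, max_eq_left (by linarith)]; ring
    · rw [max_eq_left h, max_eq_right (by linarith)]; ring
  have hm : ∀ g' : ℝ → ℝ, Continuous g' →
      Measurable (fun x => ∫ t, (x - t) / ((x - t) ^ 2 + s ^ 2) * g' t) := by
    intro g' hg'
    have : Continuous (Function.uncurry fun (x t : ℝ) => (x - t) / ((x - t) ^ 2 + s ^ 2) * g' t) :=
      ((hk_cont hs).comp (by fun_prop : Continuous fun z : ℝ × ℝ => z.1 - z.2)).mul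
        (hg'.comp continuous_snd)
    exact (this.stronglyMeasurable.integral_prod_right (ν := volume)).measurable
  simp_rw [hsub]
  refine (lint_add_rpow hp (hm g1 c1) (hm g2 c2).neg).trans ?_
  simp_rw [Pi.neg_apply, enorm_neg]
  calc _ ≤ ENNReal.ofReal (2 ^ (p - 1)) * (ENNReal.ofReal (A * Real.pi ^ p) * (∫⁻ t, ‖g t‖ₑ ^ p)
          + ENNReal.ofReal (A * Real.pi ^ p) * ∫⁻ t, ‖g t‖ₑ ^ p) := by
        gcongr
        · exact k1.trans (by gcongr)
        · exact k2.trans (by gcongr)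
    _ = _ := by
        have hpi := Real.pi_pos
        rw [ENNReal.ofReal_mul (q := 2 * _) (by positivity), ENNReal.ofReal_mul (p := 2) (by positivity)]
        simp only [ENNReal.ofReal_ofNat]
        ring

/-- same bound for all continuous functions -/
def HBd2 (p C : ℝ) : Prop := ∀ g : ℝ → ℝ, Continuous g → MemLp g (ENNReal.ofReal p) volume →
    ∀ s : ℝ, 0 < s →
    ∫⁻ x, ‖∫ t, (x - t) / ((x - t) ^ 2 + s ^ 2) * g t‖ₑ ^ p ≤ ENNReal.ofReal C * ∫⁻ t, ‖g t‖ₑ ^ p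

lemma hk_memLp {s q : ℝ} (hs : 0 < s) (hq : 1 < q) :
    MemLp (fun r : ℝ => r / (r ^ 2 + s ^ 2)) (ENNReal.ofReal q) volume := by
  have hc := hk_cont hs
  rw [← integrable_norm_rpow_iff hc.aestronglyMeasurable (by simp; linarith) (by simp),
    ENNReal.toReal_ofReal (by linarith)]
  have hi := (integrable_one_add_norm (E := ℝ) (μ := volume) (r := q) (by simpa using hq)).const_mul
    ((1 + 1 / s) ^ q)
  refine hi.mono' (hc.norm.rpow_const fun x => Or.inr (by linarith)).aestronglyMeasurable
    (Eventually.of_forall fun x => ?_)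
  rw [Real.norm_of_nonneg (by positivity), Real.rpow_neg (by positivity), ← Real.inv_rpow (by positivity),
    ← Real.mul_rpow (by positivity) (by positivity)]
  refine Real.rpow_le_rpow (norm_nonneg _) ?_ (by linarith)
  rw [norm_div, Real.norm_eq_abs, Real.norm_of_nonneg (by positivity : 0 ≤ x ^ 2 + s ^ 2), ← div_eq_mul_inv,
    div_le_div_iff₀ (by positivity) (by positivity)]
  have h1 := sq_abs x
  have h2 := abs_nonneg x
  have h3 : |x| ≤ 1 / s * (x ^ 2 + s ^ 2) := by
    rw [one_div, inv_mul_eq_div, le_div_iff₀ hs]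
    nlinarith [sq_nonneg (|x| - s)]
  nlinarith [sq_nonneg s]

lemma hk_mul_integrable {p q : ℝ} (hpq : p.HolderConjugate q) {s : ℝ} (hs : 0 < s) {g : ℝ → ℝ}
    (hg : MemLp g (ENNReal.ofReal p) volume) (x : ℝ) :
    Integrable (fun t => (x - t) / ((x - t) ^ 2 + s ^ 2) * g t) volume := by
  have h1 := (hk_memLp hs hpq.symm.lt).comp_measurePreserving (Measure.measurePreserving_sub_left volume x)
  have : (ENNReal.ofReal q).HolderConjugate (ENNReal.ofReal p) := hpq.symm.ennrealOfReal
  exact h1.integrable_mul hg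

lemma hc_meas {s : ℝ} (hs : 0 < s) {g : ℝ → ℝ} (hg : Continuous g) :
    Measurable (fun x => ∫ t, (x - t) / ((x - t) ^ 2 + s ^ 2) * g t) := by
  have : Continuous (Function.uncurry fun (x t : ℝ) => (x - t) / ((x - t) ^ 2 + s ^ 2) * g t) :=
    ((hk_cont hs).comp (by fun_prop : Continuous fun z : ℝ × ℝ => z.1 - z.2)).mul
      (hg.comp continuous_snd)
  exact (this.stronglyMeasurable.integral_prod_right (ν := volume)).measurable

lemma HBd.ext {p C : ℝ} (hp : 1 < p) (h : HBd p C) : HBd2 p C := by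
  intro g hg hgp s hs
  have hpq : p.HolderConjugate (Real.conjExponent p) := Real.HolderConjugate.conjExponent hp
  let χ : ℕ → ℝ → ℝ := fun n t => max 0 (min 1 (n + 1 - |t|))
  have hχc : ∀ n, Continuous (χ n) := by intro n; fun_prop
  have hχ0 : ∀ n t, 0 ≤ χ n t := fun n t => le_max_left _ _
  have hχ1 : ∀ n t, χ n t ≤ 1 := fun n t => max_le zero_le_one (min_le_left _ _)
  have hχs : ∀ n, HasCompactSupport (χ n) := by
    intro n
    refine HasCompactSupport.intro (isCompact_closedBall (0:ℝ) (n+1)) fun t ht => ?_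
    simp at ht
    simp only [χ]
    exact max_eq_left ((min_le_right _ _).trans (by linarith))
  have hχlim : ∀ t, ∀ᶠ n : ℕ in atTop, χ n t = 1 := by
    intro t
    filter_upwards [eventually_ge_atTop ⌈|t|⌉₊] with n hn
    have : |t| ≤ n := (Nat.le_ceil _).trans (by exact_mod_cast hn)
    simp only [χ]
    rw [min_eq_left (by linarith), max_eq_right zero_le_one]
  let gn : ℕ → ℝ → ℝ := fun n t => χ n t * g t
  have hgnle : ∀ n t, ‖gn n t‖ ≤ ‖g t‖ := by
    intro n t
    simp only [gn, norm_mul]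
    rw [Real.norm_of_nonneg (hχ0 n t)]
    exact mul_le_of_le_one_left (norm_nonneg _) (hχ1 n t)
  have hlim : ∀ x, Tendsto (fun n => ∫ t, (x - t) / ((x - t) ^ 2 + s ^ 2) * gn n t) atTop
      (𝓝 (∫ t, (x - t) / ((x - t) ^ 2 + s ^ 2) * g t)) := by
    intro x
    have hkc : Continuous (fun t : ℝ => (x - t) / ((x - t) ^ 2 + s ^ 2)) :=
      (hk_cont hs).comp (by fun_prop : Continuous fun t : ℝ => x - t)
    refine tendsto_integral_of_dominated_convergence _ (fun n => ?_) (hk_mul_integrable hpq hs hgp x).norm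
      (fun n => Eventually.of_forall fun t => ?_) (Eventually.of_forall fun t => ?_)
    · exact (hkc.mul ((hχc n).mul hg)).aestronglyMeasurable
    · have h1 := norm_mul ((x - t) / ((x - t) ^ 2 + s ^ 2)) (gn n t)
      have h2 := norm_mul ((x - t) / ((x - t) ^ 2 + s ^ 2)) (g t)
      exact h1.le.trans ((mul_le_mul_of_nonneg_left (hgnle n t) (norm_nonneg _)).trans h2.ge)
    · refine tendsto_const_nhds.congr' ?_
      filter_upwards [hχlim t] with n hn
      simp only [gn, hn, one_mul]
  have hlim2 : ∀ x, Tendsto (fun n => ‖∫ t, (x - t) / ((x - t) ^ 2 + s ^ 2) * gn n t‖ₑ ^ p) atTop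
      (𝓝 (‖∫ t, (x - t) / ((x - t) ^ 2 + s ^ 2) * g t‖ₑ ^ p)) := fun x =>
    ((ENNReal.continuous_rpow_const.comp continuous_enorm).tendsto _).comp (hlim x)
  calc ∫⁻ x, ‖∫ t, (x - t) / ((x - t) ^ 2 + s ^ 2) * g t‖ₑ ^ p
      = ∫⁻ x, liminf (fun n => ‖∫ t, (x - t) / ((x - t) ^ 2 + s ^ 2) * gn n t‖ₑ ^ p) atTop :=
        lintegral_congr fun x => (hlim2 x).liminf_eq.symm
    _ ≤ liminf (fun n => ∫⁻ x, ‖∫ t, (x - t) / ((x - t) ^ 2 + s ^ 2) * gn n t‖ₑ ^ p) atTop :=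
        lintegral_liminf_le fun n => ((hc_meas hs ((hχc n).mul hg)).enorm.pow_const p)
    _ ≤ _ := by
        refine liminf_le_of_le (by isBoundedDefault) fun b hb => ?_
        obtain ⟨n, hn⟩ := hb.exists
        refine hn.trans ((h (gn n) ((hχc n).mul hg) ((hχs n).mul_right) s hs).trans ?_)
        gcongr with t
        exact enorm_le_iff_norm_le.2 (hgnle n t)

lemma HBd_of_dual {p q C : ℝ} (hpq : p.HolderConjugate q) (hp2 : 2 ≤ p) (hC : 0 ≤ C) (hq : HBd2 q C) :
    HBd p (C ^ (p - 1)) := by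
  intro g hg hgs s hs
  have hp1 : 1 < p := hpq.lt
  have hq1 : 1 < q := hpq.symm.lt
  have hp0 : 0 < p := by linarith
  have hq0 : 0 < q := by linarith
  have hpe : (p - 1) * q = p := hpq.sub_one_mul_conj
  let K : ℝ → ℝ := fun r => r / (r ^ 2 + s ^ 2)
  have hK : Continuous K := hk_cont hs
  let G : ℝ → ℝ := fun x => ∫ t, K (x - t) * g t
  change ∫⁻ x, ‖G x‖ₑ ^ p ≤ _
  have hgi : Integrable g volume := hg.integrable_of_hasCompactSupport hgs
  have hKb : ∀ r, ‖K r‖ ≤ 1 / s := by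
    intro r
    simp only [K]
    rw [norm_div, Real.norm_eq_abs, Real.norm_of_nonneg (by positivity : 0 ≤ r ^ 2 + s ^ 2),
      div_le_div_iff₀ (by positivity) hs]
    nlinarith [sq_abs r, sq_nonneg (|r| - s)]
  have hG : Continuous G := by
    refine continuous_of_dominated (bound := fun t => 1 / s * ‖g t‖) (fun x => ?_) (fun x => ?_)
      (hgi.norm.const_mul _) ?_
    · exact ((hK.comp (by fun_prop : Continuous fun t : ℝ => x - t)).mul hg).aestronglyMeasurable
    · refine Eventually.of_forall fun t => ?_
      rw [norm_mul]
      exact mul_le_mul_of_nonneg_right (hKb _) (norm_nonneg _)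
    · refine Eventually.of_forall fun t => ?_
      exact (hK.comp (by fun_prop : Continuous fun x : ℝ => x - t)).mul continuous_const
  have hKp : MemLp K (ENNReal.ofReal p) volume := hk_memLp hs hp1
  have hfin : ∀ {r : ℝ} {f : ℝ → ℝ}, 0 < r → (MemLp f (ENNReal.ofReal r) volume) → ∫⁻ x, ‖f x‖ₑ ^ r < ∞ := by
    intro r f hr hf
    have := lintegral_rpow_enorm_lt_top_of_eLpNorm_lt_top (by simp [hr]) (by simp) hf.2
    rwa [ENNReal.toReal_ofReal hr.le] at this
  have hfin' : ∀ {r : ℝ} {f : ℝ → ℝ}, 0 < r → Continuous f → ∫⁻ x, ‖f x‖ₑ ^ r < ∞ → MemLp f (ENNReal.ofReal r) volume := by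
    intro r f hr hf hl
    refine ⟨hf.aestronglyMeasurable, ?_⟩
    rw [eLpNorm_lt_top_iff_lintegral_rpow_enorm_lt_top (by simp [hr]) (by simp), ENNReal.toReal_ofReal hr.le]
    exact hl
  have hX : ∫⁻ x, ‖G x‖ₑ ^ p < ∞ := by
    have hY := young_lint hp1 (a := fun t => ‖g t‖ₑ) (h := fun t => ‖K t‖ₑ) (by fun_prop) (by fun_prop)
    refine lt_of_le_of_lt (le_trans ?_ hY) ?_
    · refine lintegral_mono fun x => ENNReal.rpow_le_rpow ?_ hp0.le
      refine (enorm_integral_le_lintegral_enorm _).trans (le_of_eq ?_)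
      rw [← lintegral_sub_left_eq_self _ x]
      refine lintegral_congr fun t => ?_
      rw [enorm_mul, mul_comm]
      simp
    · exact ENNReal.mul_lt_top (ENNReal.rpow_lt_top_of_nonneg hp0.le hgi.2.ne) (hfin hp0 hKp)
  let h : ℝ → ℝ := fun x => |G x| ^ (p - 2) * G x
  have hh : Continuous h := (hG.abs.rpow_const fun x => Or.inr (by linarith)).mul hG
  have hhabs : ∀ x, ‖h x‖ = ‖G x‖ ^ (p - 1) := by
    intro x
    simp only [h, norm_mul, Real.norm_eq_abs]
    rw [abs_of_nonneg (by positivity)]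
    rcases eq_or_ne (G x) 0 with h0 | h0
    · rw [h0]; simp; rw [Real.zero_rpow (by linarith)]
    · rw [show p - 1 = (p - 2) + 1 by ring, Real.rpow_add_one (by simpa using h0)]
  have hhq : ∀ x, ‖h x‖ₑ ^ q = ‖G x‖ₑ ^ p := by
    intro x
    rw [← ofReal_norm, hhabs, ← ENNReal.ofReal_rpow_of_nonneg (norm_nonneg _) (by linarith), ofReal_norm,
      ← ENNReal.rpow_mul, hpe]
  have hGh : ∀ x, G x * h x = ‖G x‖ ^ p := by
    intro x
    simp only [h, Real.norm_eq_abs]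
    rcases eq_or_ne (G x) 0 with h0 | h0
    · rw [h0]; simp; rw [Real.zero_rpow (by linarith)]
    · rw [show p = (p - 2) + 2 by ring, Real.rpow_add (by simpa using h0), show (p - 2 + 2 - 2) = p - 2 by ring,
        Real.rpow_two, sq_abs]; ring
  have hhm : MemLp h (ENNReal.ofReal q) volume := hfin' hq0 hh (by simp_rw [hhq]; exact hX)
  have hGm : MemLp G (ENNReal.ofReal p) volume := hfin' hp0 hG hX
  have hGi : Integrable (fun x => ‖G x‖ ^ p) volume := by
    have := hGm.integrable_norm_rpow (by simp [hp0]) (by simp)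
    rwa [ENNReal.toReal_ofReal hp0.le] at this
  have hKi : Integrable (fun x => ‖K x‖ ^ p) volume := by
    have := hKp.integrable_norm_rpow (by simp [hp0]) (by simp)
    rwa [ENNReal.toReal_ofReal hp0.le] at this
  have hhi : Integrable (fun x => ‖h x‖ ^ q) volume := by
    have := hhm.integrable_norm_rpow (by simp [hq0]) (by simp)
    rwa [ENNReal.toReal_ofReal hq0.le] at this
  let M : ℝ := (∫ x, ‖K x‖ ^ p) / p + (∫ x, ‖h x‖ ^ q) / q
  have hbint : ∀ t, Integrable (fun x => ‖K (x - t)‖ ^ p / p + ‖h x‖ ^ q / q) volume := fun t =>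
    ((hKi.comp_sub_right t).div_const p).add (hhi.div_const q)
  have hYo : ∀ x t, ‖K (x - t) * g t * h x‖ ≤ ‖g t‖ * (‖K (x - t)‖ ^ p / p + ‖h x‖ ^ q / q) := by
    intro x t
    have := Real.young_inequality_of_nonneg (norm_nonneg (K (x - t))) (norm_nonneg (h x)) hpq
    rw [norm_mul, norm_mul]
    calc _ = ‖g t‖ * (‖K (x - t)‖ * ‖h x‖) := by ring
      _ ≤ _ := by gcongr
  have hcont : Continuous (Function.uncurry fun (x t : ℝ) => K (x - t) * g t * h x) :=
    ((hK.comp (by fun_prop : Continuous fun z : ℝ × ℝ => z.1 - z.2)).mul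
      (hg.comp continuous_snd)).mul (hh.comp continuous_fst)
  have hsl : ∀ t, Integrable (fun x => K (x - t) * g t * h x) volume := fun t =>
    ((hbint t).const_mul ‖g t‖).mono'
      (hcont.comp (by fun_prop : Continuous fun x : ℝ => (x, t))).aestronglyMeasurable
      (Eventually.of_forall fun x => hYo x t)
  have hFub : Integrable (Function.uncurry fun (x t : ℝ) => K (x - t) * g t * h x) (volume.prod volume) := by
    rw [integrable_prod_iff' hcont.aestronglyMeasurable]
    refine ⟨Eventually.of_forall hsl, ?_⟩
    refine (hgi.norm.mul_const M).mono' ?_ (Eventually.of_forall fun t => ?_)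
    · exact (hcont.norm.stronglyMeasurable.integral_prod_left (μ := volume)).aestronglyMeasurable
    · rw [Real.norm_of_nonneg (integral_nonneg fun x => norm_nonneg _)]
      calc ∫ x, ‖Function.uncurry (fun (x t : ℝ) => K (x - t) * g t * h x) (x, t)‖
          ≤ ∫ x, ‖g t‖ * (‖K (x - t)‖ ^ p / p + ‖h x‖ ^ q / q) :=
            integral_mono (hsl t).norm ((hbint t).const_mul _) (fun x => hYo x t)
        _ = ‖g t‖ * M := by
            rw [integral_const_mul, integral_add ((hKi.comp_sub_right t).div_const p) (hhi.div_const q),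
              integral_div, integral_div, integral_sub_right_eq_self (fun x => ‖K x‖ ^ p) t]
  let H : ℝ → ℝ := fun t => ∫ x, K (t - x) * h x
  have hswap : ∫ x, ‖G x‖ ^ p = ∫ t, -(g t * H t) := by
    calc ∫ x, ‖G x‖ ^ p = ∫ x, ∫ t, K (x - t) * g t * h x := by
          refine integral_congr_ae (Eventually.of_forall fun x => ?_)
          simp only
          rw [integral_mul_const, ← hGh]
      _ = ∫ t, ∫ x, K (x - t) * g t * h x := integral_integral_swap hFub
      _ = _ := by
          refine integral_congr_ae (Eventually.of_forall fun t => ?_)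
          simp only [H]
          rw [← integral_const_mul, ← integral_neg]
          refine integral_congr_ae (Eventually.of_forall fun x => ?_)
          have : K (t - x) = - K (x - t) := by
            simp only [K]
            rw [show (t - x) = -(x - t) by ring, neg_sq, neg_div]
          simp only [this]; ring
  have hHm : Measurable H := hc_meas hs hh
  have hle1 : ∫⁻ x, ‖G x‖ₑ ^ p ≤ ∫⁻ t, ‖g t‖ₑ * ‖H t‖ₑ := by
    have e : ∀ x, ‖G x‖ₑ ^ p = ENNReal.ofReal (‖G x‖ ^ p) := by
      intro x
      rw [← ENNReal.ofReal_rpow_of_nonneg (norm_nonneg _) hp0.le, ofReal_norm]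
    simp_rw [e]
    rw [← ofReal_integral_eq_lintegral_ofReal hGi (Eventually.of_forall fun x => by positivity), hswap]
    refine (ENNReal.ofReal_le_ofReal (Real.le_norm_self _)).trans ?_
    rw [ofReal_norm]
    refine (enorm_integral_le_lintegral_enorm _).trans (le_of_eq ?_)
    simp_rw [enorm_neg, enorm_mul]
  have hle2 := hle1.trans (ENNReal.lintegral_mul_le_Lp_mul_Lq volume hpq (f := fun t => ‖g t‖ₑ)
    (g := fun t => ‖H t‖ₑ) (by fun_prop) (by fun_prop))
  have hHq : ∫⁻ t, ‖H t‖ₑ ^ q ≤ ENNReal.ofReal C * ∫⁻ x, ‖G x‖ₑ ^ p := by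
    have := hq h hh hhm s hs
    simp_rw [hhq] at this
    exact this
  set X := ∫⁻ x, ‖G x‖ₑ ^ p with hXdef
  set Y := ∫⁻ x, ‖g x‖ₑ ^ p with hYdef
  have hle3 : X ≤ Y ^ (1 / p) * (ENNReal.ofReal C * X) ^ (1 / q) :=
    hle2.trans (by gcongr)
  rcases eq_or_ne X 0 with h0 | h0
  · rw [h0]; simp
  rw [ENNReal.mul_rpow_of_nonneg _ _ (by positivity), ← mul_assoc] at hle3
  have hX1 : X ^ (1 / q) ≠ 0 := by simp [h0, hq0, hX.ne]
  have hX2 : X ^ (1 / q) ≠ ∞ := ENNReal.rpow_ne_top_of_nonneg (by positivity) hX.ne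
  have hsum : 1 / p + 1 / q = 1 := by have := hpq.inv_add_inv_eq_one; simpa using this
  have hsplit : X = X ^ (1 / p) * X ^ (1 / q) := by
    rw [← ENNReal.rpow_add_of_nonneg _ _ (by positivity) (by positivity), hsum, ENNReal.rpow_one]
  have hle4 : X ^ (1 / p) ≤ Y ^ (1 / p) * (ENNReal.ofReal C) ^ (1 / q) := by
    rw [hsplit] at hle3
    have := hle3
    rw [← hsplit] at this
    refine (ENNReal.mul_le_mul_iff_left hX1 hX2).1 ?_
    rw [← hsplit]; exact this
  have hle5 := ENNReal.rpow_le_rpow hle4 hp0.le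
  rw [ENNReal.mul_rpow_of_nonneg _ _ hp0.le, ← ENNReal.rpow_mul, ← ENNReal.rpow_mul, ← ENNReal.rpow_mul,
    one_div_mul_cancel hp0.ne', ENNReal.rpow_one, ENNReal.rpow_one] at hle5
  refine hle5.trans (le_of_eq ?_)
  rw [mul_comm, ← ENNReal.ofReal_rpow_of_nonneg hC (by linarith)]
  congr 2
  field_simp
  linarith

lemma HBd2_all {p : ℝ} (hp : 1 < p) : ∃ C, 0 ≤ C ∧ HBd2 p C := by
  rcases le_total p 2 with h | h
  · obtain ⟨C, hC, hb⟩ := HBd_le_two hp h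
    exact ⟨C, hC, hb.ext hp⟩
  · have hpq : p.HolderConjugate (Real.conjExponent p) := Real.HolderConjugate.conjExponent hp
    have hq2 : Real.conjExponent p ≤ 2 := by
      rw [Real.conjExponent, div_le_iff₀ (by linarith)]; linarith
    obtain ⟨C, hC, hb⟩ := HBd_le_two hpq.symm.lt hq2
    exact ⟨_, by positivity, (HBd_of_dual hpq h hC (hb.ext hpq.symm.lt)).ext hp⟩

/-- one dimensional odd kernel `e^{-s²/r²}/r` -/
def ks (s r : ℝ) : ℝ := Real.exp (-(s ^ 2 / r ^ 2)) / r

lemma ks_meas (s : ℝ) : Measurable (ks s) := by unfold ks; fun_prop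

lemma ks_diff {s : ℝ} (hs : 0 < s) (r : ℝ) : |ks s r - r / (r ^ 2 + s ^ 2)| ≤ s / (r ^ 2 + s ^ 2) := by
  unfold ks
  rcases eq_or_ne r 0 with h0 | h0
  · subst h0; simp; positivity
  have hr : 0 < |r| := abs_pos.2 h0
  set b := s / |r| with hb
  have hb0 : 0 < b := by positivity
  have e1 : s ^ 2 / r ^ 2 = b ^ 2 := by rw [hb, div_pow, sq_abs]
  have e2 : r ^ 2 + s ^ 2 = r ^ 2 * (1 + b ^ 2) := by rw [← e1]; field_simp
  have hE : Real.exp (-b ^ 2) * (1 + b ^ 2) ≤ 1 := by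
    have h1 := Real.add_one_le_exp (b ^ 2)
    calc _ ≤ Real.exp (-b ^ 2) * Real.exp (b ^ 2) := by gcongr; linarith
      _ = 1 := by rw [← Real.exp_add]; simp
  have hE2 : 1 - Real.exp (-b ^ 2) * (1 + b ^ 2) ≤ b := by
    rcases le_total 1 b with h | h
    · have : 0 ≤ Real.exp (-b ^ 2) * (1 + b ^ 2) := by positivity
      linarith
    · have h1 := Real.add_one_le_exp (-b ^ 2)
      have h2 : (-b ^ 2 + 1) * (1 + b ^ 2) ≤ Real.exp (-b ^ 2) * (1 + b ^ 2) := by gcongr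
      have h3 : b ^ 4 ≤ b := by
        calc b ^ 4 ≤ b ^ 1 := pow_le_pow_of_le_one hb0.le h (by norm_num)
          _ = b := pow_one b
      nlinarith
  have e3 : Real.exp (-(s ^ 2 / r ^ 2)) / r - r / (r ^ 2 + s ^ 2)
      = -((1 - Real.exp (-b ^ 2) * (1 + b ^ 2)) / (r * (1 + b ^ 2))) := by
    rw [e2, e1]; field_simp; ring
  have e4 : s / (r ^ 2 + s ^ 2) = b / (|r| * (1 + b ^ 2)) := by
    rw [e2, hb, ← sq_abs r]; field_simp
  rw [e3, e4, abs_neg, abs_div, abs_mul, abs_of_pos (by positivity : 0 < 1 + b ^ 2), abs_of_nonneg (by linarith)]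
  gcongr

lemma pk_memLp {s q : ℝ} (hs : 0 < s) (hq : 1 < q) :
    MemLp (fun r : ℝ => s / (r ^ 2 + s ^ 2)) (ENNReal.ofReal q) volume := by
  have hc : Continuous (fun r : ℝ => s / (r ^ 2 + s ^ 2)) :=
    Continuous.div (by fun_prop) (by fun_prop) fun r => by positivity
  rw [← integrable_norm_rpow_iff hc.aestronglyMeasurable (by simp; linarith) (by simp),
    ENNReal.toReal_ofReal (by linarith)]
  have hi := (integrable_one_add_norm (E := ℝ) (μ := volume) (r := q) (by simpa using hq)).const_mul
    ((1 + 1 / s) ^ q)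
  refine hi.mono' (hc.norm.rpow_const fun x => Or.inr (by linarith)).aestronglyMeasurable
    (Eventually.of_forall fun x => ?_)
  rw [Real.norm_of_nonneg (by positivity), Real.rpow_neg (by positivity), ← Real.inv_rpow (by positivity),
    ← Real.mul_rpow (by positivity) (by positivity)]
  refine Real.rpow_le_rpow (norm_nonneg _) ?_ (by linarith)
  rw [norm_div, Real.norm_of_nonneg hs.le, Real.norm_of_nonneg (by positivity : 0 ≤ x ^ 2 + s ^ 2), ← div_eq_mul_inv,
    div_le_div_iff₀ (by positivity) (by positivity), Real.norm_eq_abs]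
  have h1 := sq_abs x
  have h2 := abs_nonneg x
  have h3 : s ≤ 1 / s * (x ^ 2 + s ^ 2) := by
    rw [one_div, inv_mul_eq_div, le_div_iff₀ hs]
    nlinarith [sq_nonneg x]
  nlinarith [sq_nonneg (|x| - s)]

lemma ks_memLp {s q : ℝ} (hs : 0 < s) (hq : 1 < q) : MemLp (ks s) (ENNReal.ofReal q) volume := by
  refine MemLp.mono ((hk_memLp hs hq).norm.add (pk_memLp hs hq)) (ks_meas s).aestronglyMeasurable
    (Eventually.of_forall fun r => ?_)
  have h := ks_diff hs r
  simp only [Pi.add_apply, Real.norm_eq_abs]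
  rw [abs_of_nonneg (by positivity : (0:ℝ) ≤ |r / (r ^ 2 + s ^ 2)| + s / (r ^ 2 + s ^ 2))]
  have := abs_sub_abs_le_abs_sub (ks s r) (r / (r ^ 2 + s ^ 2))
  linarith

lemma ks_bound {p : ℝ} (hp : 1 < p) : ∃ C, 0 ≤ C ∧ ∀ g : ℝ → ℝ, Continuous g →
    ∀ s : ℝ, 0 < s → ∫⁻ x, ‖∫ r, ks s r * g (x - r)‖ₑ ^ p ≤ ENNReal.ofReal C * ∫⁻ t, ‖g t‖ₑ ^ p := by
  obtain ⟨C, hC, hb⟩ := HBd2_all hp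
  have hpi := Real.pi_pos
  have hp0 : 0 < p := by linarith
  refine ⟨2 ^ (p - 1) * (C + Real.pi ^ p) + 1, by positivity, ?_⟩
  intro g hg s hs
  by_cases hfin : ∫⁻ t, ‖g t‖ₑ ^ p = ∞
  · rw [hfin, ENNReal.mul_top]
    · exact le_top
    · rw [Ne, ENNReal.ofReal_eq_zero, not_le]; positivity
  have hgm : MemLp g (ENNReal.ofReal p) volume := by
    refine ⟨hg.aestronglyMeasurable, ?_⟩
    rw [eLpNorm_lt_top_iff_lintegral_rpow_enorm_lt_top (by simp [hp0]) (by simp), ENNReal.toReal_ofReal hp0.le]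
    exact lt_top_iff_ne_top.2 hfin
  have hpq : p.HolderConjugate (Real.conjExponent p) := Real.HolderConjugate.conjExponent hp
  let D : ℝ → ℝ := fun r => ks s r - r / (r ^ 2 + s ^ 2)
  have hDm : Measurable D := (ks_meas s).sub (hk_cont hs).measurable
  have hsplit : ∀ x, ∫ r, ks s r * g (x - r)
      = (∫ t, (x - t) / ((x - t) ^ 2 + s ^ 2) * g t) + ∫ t, D (x - t) * g t := by
    intro x
    have h1 := hk_mul_integrable hpq hs hgm x
    have h2 : Integrable (fun t => ks s (x - t) * g t) volume := by
      have h1 := (ks_memLp hs hpq.symm.lt).comp_measurePreserving (Measure.measurePreserving_sub_left volume x)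
      have : (ENNReal.ofReal (Real.conjExponent p)).HolderConjugate (ENNReal.ofReal p) := hpq.symm.ennrealOfReal
      exact h1.integrable_mul hgm
    have h3 : Integrable (fun t => D (x - t) * g t) volume := by
      refine (h2.sub h1).congr (Eventually.of_forall fun t => ?_)
      simp only [D, Pi.sub_apply]; ring
    rw [← integral_add h1 h3, ← integral_sub_left_eq_self _ volume x]
    refine integral_congr_ae (Eventually.of_forall fun t => ?_)
    simp only [D, sub_sub_cancel]; ring
  have hm2 : Measurable (fun x => ∫ t, D (x - t) * g t) := by
    have : Measurable (Function.uncurry fun (x t : ℝ) => D (x - t) * g t) :=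
      (hDm.comp (by fun_prop : Measurable fun z : ℝ × ℝ => z.1 - z.2)).mul
        (hg.measurable.comp measurable_snd)
    exact (this.stronglyMeasurable.integral_prod_right (ν := volume)).measurable
  simp_rw [hsplit]
  refine (lint_add_rpow hp (hc_meas hs hg) hm2).trans ?_
  have k1 := hb g hg hgm s hs
  have k2 : ∫⁻ x, ‖∫ t, D (x - t) * g t‖ₑ ^ p ≤ ENNReal.ofReal (Real.pi ^ p) * ∫⁻ t, ‖g t‖ₑ ^ p := by
    refine le_trans ?_ (poisson1_bound hp hg.measurable hs)
    refine lintegral_mono fun x => ENNReal.rpow_le_rpow ?_ hp0.le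
    refine (enorm_integral_le_lintegral_enorm _).trans (lintegral_mono fun t => ?_)
    rw [enorm_mul]
    gcongr
    rw [← ofReal_norm]
    exact ENNReal.ofReal_le_ofReal (ks_diff hs _)
  calc _ ≤ ENNReal.ofReal (2 ^ (p - 1)) * (ENNReal.ofReal C * (∫⁻ t, ‖g t‖ₑ ^ p)
          + ENNReal.ofReal (Real.pi ^ p) * ∫⁻ t, ‖g t‖ₑ ^ p) := by gcongr
    _ = ENNReal.ofReal (2 ^ (p - 1) * (C + Real.pi ^ p)) * ∫⁻ t, ‖g t‖ₑ ^ p := by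
        rw [ENNReal.ofReal_mul (by positivity), ENNReal.ofReal_add hC (by positivity)]; ring
    _ ≤ _ := by gcongr; linarith

lemma lint_lines {d : ℕ} {y : Ed d} (hy : y ≠ 0) {G : Ed d → ℝ≥0∞} (hG : Measurable G) :
    ∫⁻ x, ({x : Ed d | inner ℝ x y / ‖y‖ ^ 2 ∈ Ico (0:ℝ) 1}.indicator (fun _ => (1:ℝ≥0∞)) x)
      * ∫⁻ τ : ℝ, G (x + τ • y) = ∫⁻ x, G x := by
  have hny : ‖y‖ ^ 2 ≠ 0 := by simpa using hy
  set S : Set (Ed d) := {x : Ed d | inner ℝ x y / ‖y‖ ^ 2 ∈ Ico (0:ℝ) 1} with hS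
  have hSm : MeasurableSet S := by
    have : Measurable (fun x : Ed d => inner ℝ x y / ‖y‖ ^ 2) := by fun_prop
    exact this measurableSet_Ico
  set χ : Ed d → ℝ≥0∞ := S.indicator (fun _ => (1:ℝ≥0∞)) with hχ
  have hχm : Measurable χ := measurable_const.indicator hSm
  have hGm2 : Measurable (fun z : Ed d × ℝ => G (z.1 + z.2 • y)) := hG.comp (by fun_prop)
  calc ∫⁻ x, χ x * ∫⁻ τ : ℝ, G (x + τ • y)
      = ∫⁻ x, ∫⁻ τ : ℝ, χ x * G (x + τ • y) := by
        refine lintegral_congr fun x => ?_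
        rw [lintegral_const_mul]
        exact hG.comp (by fun_prop)
    _ = ∫⁻ τ : ℝ, ∫⁻ x, χ x * G (x + τ • y) := by
        rw [lintegral_lintegral_swap]
        exact ((hχm.comp measurable_fst).mul hGm2).aemeasurable
    _ = ∫⁻ τ : ℝ, ∫⁻ x, χ (x - τ • y) * G x := by
        refine lintegral_congr fun τ => ?_
        rw [← lintegral_sub_right_eq_self _ (τ • y)]
        simp
    _ = ∫⁻ x, ∫⁻ τ : ℝ, χ (x - τ • y) * G x := by
        rw [lintegral_lintegral_swap]
        exact ((hχm.comp (by fun_prop : Measurable fun z : ℝ × Ed d => z.2 - z.1 • y)).mul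
          (hG.comp measurable_snd)).aemeasurable
    _ = ∫⁻ x, G x := by
        refine lintegral_congr fun x => ?_
        rw [lintegral_mul_const (f := fun τ : ℝ => χ (x - τ • y)) _
          (hχm.comp (by fun_prop : Measurable fun τ : ℝ => x - τ • y))]
        have e : ∀ τ : ℝ, χ (x - τ • y) = (Ioc (inner ℝ x y / ‖y‖ ^ 2 - 1) (inner ℝ x y / ‖y‖ ^ 2)).indicator
            (fun _ => (1:ℝ≥0∞)) τ := by
          intro τ
          have e2 : inner ℝ (x - τ • y) y / ‖y‖ ^ 2 = inner ℝ x y / ‖y‖ ^ 2 - τ := by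
            rw [inner_sub_left, real_inner_smul_left, real_inner_self_eq_norm_sq]
            field_simp
          simp only [hχ, hS, indicator_apply, mem_setOf_eq, e2, mem_Ico, mem_Ioc]
          congr 1
          refine propext ⟨fun h => ⟨by linarith, by linarith⟩, fun h => ⟨by linarith, by linarith⟩⟩
        simp_rw [e]
        rw [lintegral_indicator measurableSet_Ioc]
        simp

lemma line_meas {d : ℕ} {f : Ed d → ℝ} (hf : Continuous f) (s : ℝ) :
    StronglyMeasurable (fun z : Ed d × Ed d => ∫ r, ks s r * f (z.1 - r • z.2)) := by
  have : Measurable (Function.uncurry fun (z : Ed d × Ed d) (r : ℝ) => ks s r * f (z.1 - r • z.2)) :=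
    ((ks_meas s).comp measurable_snd).mul (hf.comp (by fun_prop :
      Continuous fun w : (Ed d × Ed d) × ℝ => w.1.1 - w.2 • w.1.2)).measurable
  exact this.stronglyMeasurable.integral_prod_right (ν := volume)

lemma line_bound {p C : ℝ} (hC : ∀ g : ℝ → ℝ, Continuous g →
    ∀ s : ℝ, 0 < s → ∫⁻ x, ‖∫ r, ks s r * g (x - r)‖ₑ ^ p ≤ ENNReal.ofReal C * ∫⁻ t, ‖g t‖ₑ ^ p)
    {d : ℕ} {y : Ed d} (hy : y ≠ 0) {f : Ed d → ℝ} (hf : Continuous f) {s : ℝ} (hs : 0 < s) :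
    ∫⁻ x, ‖∫ r, ks s r * f (x - r • y)‖ₑ ^ p ≤ ENNReal.ofReal C * ∫⁻ x, ‖f x‖ₑ ^ p := by
  have hGm : Measurable (fun x : Ed d => ‖∫ r, ks s r * f (x - r • y)‖ₑ ^ p) :=
    (((line_meas hf s).measurable.comp (by fun_prop : Measurable fun x : Ed d => (x, y))).enorm.pow_const p)
  rw [← lint_lines hy hGm, ← lint_lines hy (hf.measurable.enorm.pow_const p), ← lintegral_const_mul']
  swap
  · exact ENNReal.ofReal_ne_top
  refine lintegral_mono fun x => ?_
  rw [mul_left_comm]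
  gcongr
  have := hC (fun τ => f (x + τ • y)) (hf.comp (by fun_prop)) s hs
  refine le_trans (le_of_eq ?_) this
  refine lintegral_congr fun τ => ?_
  congr 2
  refine integral_congr_ae (Eventually.of_forall fun r => ?_)
  simp only
  congr 2
  rw [sub_smul]; abel

lemma BK_pos' (d n : ℕ) {z : Ed d × ℝ} (hz : 0 < z.2) : 0 < BK d n z := by unfold BK; positivity

lemma BK_line (d : ℕ) {z : Ed d × ℝ} (hz : 0 < z.2) :
    ∫ r : ℝ, (|r| ^ (d + 2))⁻¹ * Real.exp (-((‖z.1‖ ^ 2 + z.2 ^ 2) / r ^ 2)) = 2 * gC d * BK d (d+1) z := by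
  have h1 := integral_comp_abs (f := fun r : ℝ => (r ^ (d + 2))⁻¹ * Real.exp (-((‖z.1‖ ^ 2 + z.2 ^ 2) / r ^ 2)))
  simp only [sq_abs] at h1
  rw [h1, mul_assoc, ← BK_eq_int d hz, ← integral_comp_rpow_Ioi
    (fun r : ℝ => r ^ d * Real.exp (-(‖z.1‖ ^ 2 + z.2 ^ 2) * r ^ 2)) (p := -1) (by norm_num)]
  congr 1
  refine setIntegral_congr_fun measurableSet_Ioi fun r hr => ?_
  have hr' : (0:ℝ) < r := hr
  simp only [Real.rpow_neg_one, smul_eq_mul]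
  rw [show (-1 - 1 : ℝ) = -(2:ℕ) by norm_num, Real.rpow_neg hr'.le, Real.rpow_natCast, abs_neg, abs_one, one_mul,
    inv_pow, inv_pow, ← mul_assoc, ← mul_inv, pow_add, mul_comm (r ^ 2)]
  congr 2
  ring

lemma BK_line_integrable (d : ℕ) {z : Ed d × ℝ} (hz : 0 < z.2) :
    Integrable (fun r : ℝ => (|r| ^ (d + 2))⁻¹ * Real.exp (-((‖z.1‖ ^ 2 + z.2 ^ 2) / r ^ 2))) volume := by
  refine Integrable.of_integral_ne_zero ?_
  rw [BK_line d hz]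
  have := gC_pos d
  have := BK_pos' d (d+1) hz
  positivity

lemma gauss_integrable (d : ℕ) (j : Fin d) :
    Integrable (fun y : Ed d => y j * Real.exp (-‖y‖ ^ 2)) volume := by
  have h : Integrable (fun y : Ed d => Real.exp (-(1/2 : ℝ) * ‖y‖ ^ 2)) volume := by
    refine Integrable.of_integral_ne_zero ?_
    rw [GaussianFourier.integral_rexp_neg_mul_sq_norm (by norm_num)]
    have := Real.pi_pos
    positivity
  refine h.mono' (by fun_prop) (Eventually.of_forall fun y => ?_)
  rw [norm_mul, Real.norm_of_nonneg (Real.exp_pos _).le]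
  have h1 : ‖y j‖ ≤ ‖y‖ := PiLp.norm_apply_le y j
  have h2 : ‖y‖ ≤ Real.exp ((1/2 : ℝ) * ‖y‖ ^ 2) := by
    have := Real.add_one_le_exp ((1/2 : ℝ) * ‖y‖ ^ 2)
    nlinarith [sq_nonneg (‖y‖ - 1)]
  calc _ ≤ Real.exp ((1/2 : ℝ) * ‖y‖ ^ 2) * Real.exp (-‖y‖ ^ 2) := by gcongr; linarith
    _ = _ := by rw [← Real.exp_add]; congr 1; ring

lemma QK_rep {d : ℕ} (j : Fin d) {p q : ℝ} (hpq : p.HolderConjugate q) {f : Ed d → ℝ} (hf : Continuous f)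
    (hfp : MemLp f (ENNReal.ofReal p) volume) {s : ℝ} (hs : 0 < s) (x : Ed d) :
    2 * gC d * cv (QK d j) f (x, s)
      = ∫ y : Ed d, y j * Real.exp (-‖y‖ ^ 2) * ∫ r, ks s r * f (x - r • y) := by
  have hd0 : 0 < d := Fin.pos j
  have hq1 := hpq.symm.lt
  have hdq : (d:ℝ) < d * q := by
    have : (0:ℝ) < d := by exact_mod_cast hd0
    nlinarith
  let A : Ed d → ℝ → ℝ := fun y r => (|r| ^ (d + 2))⁻¹ * Real.exp (-((‖y‖ ^ 2 + s ^ 2) / r ^ 2)) * (y j * f (x - y))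
  let B : Ed d → ℝ → ℝ := fun y r => y j * Real.exp (-‖y‖ ^ 2) * (ks s r * f (x - r • y))
  have hAm : Measurable (Function.uncurry A) := by
    have h1 : Measurable (fun z : Ed d × ℝ => f (x - z.1)) := (hf.comp (by fun_prop)).measurable
    simp only [A, Function.uncurry_def]
    fun_prop
  have hBm : Measurable (Function.uncurry B) := by
    have h1 : Measurable (fun z : Ed d × ℝ => f (x - z.2 • z.1)) := (hf.comp (by fun_prop)).measurable
    have h2 : Measurable (fun z : Ed d × ℝ => ks s z.2) := (ks_meas s).comp measurable_snd
    simp only [B, Function.uncurry_def]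
    fun_prop
  have hnormA : ∀ y r, ‖A y r‖ = (|r| ^ (d + 2))⁻¹ * Real.exp (-((‖y‖ ^ 2 + s ^ 2) / r ^ 2)) * ‖y j * f (x - y)‖ := by
    intro y r
    simp only [A]
    rw [norm_mul, Real.norm_of_nonneg (by positivity)]
  have hQi : Integrable (fun y => QK d j (y, s) * f (x - y)) volume := by
    have h1 := (QK_hom d j).memLp_slice hs hq1.le hdq
    have h2 := hfp.comp_measurePreserving (Measure.measurePreserving_sub_left volume x)
    have : (ENNReal.ofReal q).HolderConjugate (ENNReal.ofReal p) := hpq.symm.ennrealOfReal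
    exact h1.integrable_mul h2
  have hAi : Integrable (Function.uncurry A) (volume.prod volume) := by
    rw [integrable_prod_iff hAm.aestronglyMeasurable]
    refine ⟨Eventually.of_forall fun y => ?_, ?_⟩
    · exact (BK_line_integrable d (z := (y, s)) hs).mul_const (y j * f (x - y))
    · refine (hQi.norm.const_mul (2 * gC d)).congr (Eventually.of_forall fun y => ?_)
      simp only [Function.uncurry_apply_pair, hnormA]
      rw [integral_mul_const, BK_line d (z := (y, s)) hs, QK]
      simp only [norm_mul]
      rw [Real.norm_of_nonneg (BK_nonneg _ _ _)]
      ring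
  have hAB : ∀ r : ℝ, r ≠ 0 → ∀ y, B y r = |r ^ d| * A (r • y) r := by
    intro r hr y
    simp only [A, B, ks]
    have e1 : -((‖r • y‖ ^ 2 + s ^ 2) / r ^ 2) = -‖y‖ ^ 2 + -(s ^ 2 / r ^ 2) := by
      rw [norm_smul, mul_pow, Real.norm_eq_abs, sq_abs]; field_simp; ring
    rw [e1, Real.exp_add, abs_pow, pow_add, sq_abs, PiLp.smul_apply, smul_eq_mul]
    have : |r| ≠ 0 := abs_ne_zero.2 hr
    field_simp
  have hne : ∀ᵐ r : ℝ ∂volume, r ≠ 0 := by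
    rw [ae_iff]; simp
  have hfr : Module.finrank ℝ (Ed d) = d := by simp
  have hscale : ∀ (F : Ed d → ℝ) (r : ℝ), r ≠ 0 → ∫ y, |r ^ d| * F (r • y) = ∫ y, F y := by
    intro F r hr
    rw [integral_const_mul, Measure.integral_comp_smul, hfr, smul_eq_mul, ← mul_assoc, ← abs_mul,
      mul_inv_cancel₀ (pow_ne_zero _ hr), abs_one, one_mul]
  have hA2 := (integrable_prod_iff' hAm.aestronglyMeasurable).1 hAi
  have hBi : Integrable (Function.uncurry B) (volume.prod volume) := by
    rw [integrable_prod_iff' hBm.aestronglyMeasurable]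
    constructor
    · filter_upwards [hA2.1, hne] with r h1 h2
      have := ((integrable_comp_smul_iff volume (fun y => Function.uncurry A (y, r)) h2).2 h1).const_mul |r ^ d|
      refine this.congr (Eventually.of_forall fun y => ?_)
      exact (hAB r h2 y).symm
    · refine hA2.2.congr ?_
      filter_upwards [hne] with r h2
      rw [← hscale _ r h2]
      refine integral_congr_ae (Eventually.of_forall fun y => ?_)
      simp only [Function.uncurry_apply_pair]
      have := norm_mul |r ^ d| (A (r • y) r)
      rw [Real.norm_eq_abs |r ^ d|, abs_abs] at this
      rw [hAB r h2 y, this]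
  calc 2 * gC d * cv (QK d j) f (x, s) = ∫ y, ∫ r, A y r := by
        rw [cv_eq, ← integral_const_mul]
        refine integral_congr_ae (Eventually.of_forall fun y => ?_)
        simp only [A]
        rw [integral_mul_const, BK_line d (z := (y, s)) hs, QK]
        ring
    _ = ∫ r, ∫ y, A y r := integral_integral_swap hAi
    _ = ∫ r, ∫ y, B y r := by
        refine integral_congr_ae ?_
        filter_upwards [hne] with r h2
        rw [← hscale _ r h2]
        exact integral_congr_ae (Eventually.of_forall fun y => (hAB r h2 y).symm)
    _ = ∫ y, ∫ r, B y r := (integral_integral_swap hBi).symm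
    _ = _ := by
        refine integral_congr_ae (Eventually.of_forall fun y => ?_)
        simp only [B]
        rw [integral_const_mul]

lemma QK_bound (d : ℕ) {p : ℝ} (hp : 1 < p) : ∃ C, 0 ≤ C ∧ ∀ (j : Fin d) (f : Ed d → ℝ), Continuous f →
    MemLp f (ENNReal.ofReal p) volume → ∀ s : ℝ, 0 < s →
    ∫⁻ x, ‖cv (QK d j) f (x, s)‖ₑ ^ p ≤ ENNReal.ofReal C * ∫⁻ x, ‖f x‖ₑ ^ p := by
  obtain ⟨C, hC, hb⟩ := ks_bound hp
  have hp0 : 0 < p := by linarith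
  have hpq : p.HolderConjugate (Real.conjExponent p) := Real.HolderConjugate.conjExponent hp
  let φ : Fin d → Ed d → ℝ := fun j y => y j * Real.exp (-‖y‖ ^ 2)
  let N : Fin d → ℝ≥0∞ := fun j => ∫⁻ y, ‖φ j y‖ₑ
  have hN : ∀ j, N j ≠ ∞ := fun j => (gauss_integrable d j).2.ne
  let c : ℝ≥0∞ := ENNReal.ofReal ((2 * gC d)⁻¹)
  let M : Fin d → ℝ≥0∞ := fun j => c ^ p * (N j ^ (p - 1) * (N j * ENNReal.ofReal C))
  have hM : ∀ j, M j ≠ ∞ := by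
    intro j
    have h1 := ENNReal.rpow_ne_top_of_nonneg hp0.le (ENNReal.ofReal_ne_top (r := (2 * gC d)⁻¹))
    have h2 := ENNReal.rpow_ne_top_of_nonneg (by linarith : 0 ≤ p - 1) (hN j)
    exact ENNReal.mul_ne_top h1 (ENNReal.mul_ne_top h2 (ENNReal.mul_ne_top (hN j) ENNReal.ofReal_ne_top))
  have key : ∀ (j : Fin d) (f : Ed d → ℝ), Continuous f →
    MemLp f (ENNReal.ofReal p) volume → ∀ s : ℝ, 0 < s →
    ∫⁻ x, ‖cv (QK d j) f (x, s)‖ₑ ^ p ≤ M j * ∫⁻ x, ‖f x‖ₑ ^ p := by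
    intro j f hf hfp s hs
    have hφm : Measurable (φ j) := by simp only [φ]; fun_prop
    let T : Ed d → Ed d → ℝ := fun x y => ∫ r, ks s r * f (x - r • y)
    have hTm : Measurable (fun z : Ed d × Ed d => T z.1 z.2) := (line_meas hf s).measurable
    have hTx : ∀ x, Measurable (T x) := fun x => hTm.comp (by fun_prop : Measurable fun y : Ed d => (x, y))
    have hpt : ∀ x, ‖cv (QK d j) f (x, s)‖ₑ ^ p ≤ c ^ p * (N j ^ (p - 1) * ∫⁻ y, ‖φ j y‖ₑ * ‖T x y‖ₑ ^ p) := by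
      intro x
      have hg := gC_pos d
      have e : cv (QK d j) f (x, s) = (2 * gC d)⁻¹ * ∫ y, φ j y * T x y := by
        rw [← QK_rep j hpq hf hfp hs x]; field_simp
      rw [e, enorm_mul, Real.enorm_of_nonneg (by positivity), ENNReal.mul_rpow_of_nonneg _ _ hp0.le]
      gcongr
      refine le_trans ?_ (jensen_lint volume hp (a := fun y => ‖φ j y‖ₑ) (h := fun y => ‖T x y‖ₑ)
        hφm.enorm.aemeasurable (hTx x).enorm.aemeasurable)
      refine ENNReal.rpow_le_rpow ?_ hp0.le
      refine (enorm_integral_le_lintegral_enorm _).trans (le_of_eq ?_)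
      simp_rw [enorm_mul]
    refine (lintegral_mono hpt).trans ?_
    have hm1 : Measurable (fun z : Ed d × Ed d => ‖φ j z.2‖ₑ * ‖T z.1 z.2‖ₑ ^ p) :=
      (hφm.comp measurable_snd).enorm.mul (hTm.enorm.pow_const p)
    rw [lintegral_const_mul' _ _ (ENNReal.rpow_ne_top_of_nonneg hp0.le ENNReal.ofReal_ne_top),
      lintegral_const_mul' _ _ (ENNReal.rpow_ne_top_of_nonneg (by linarith) (hN j)),
      lintegral_lintegral_swap hm1.aemeasurable]
    simp only [M]
    rw [mul_assoc, mul_assoc, mul_assoc]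
    gcongr
    rw [← lintegral_mul_const _ hφm.enorm]
    refine lintegral_mono fun y => ?_
    rcases eq_or_ne y 0 with h0 | h0
    · subst h0; simp [φ]
    · simp only
      rw [lintegral_const_mul' _ _ enorm_ne_top]
      gcongr
      exact line_bound hb h0 hf hs
  refine ⟨∑ j, (M j).toReal, by positivity, fun j f hf hfp s hs => (key j f hf hfp s hs).trans ?_⟩
  gcongr
  refine (ENNReal.le_ofReal_iff_toReal_le (hM j) (by positivity)).2 ?_
  exact Finset.single_le_sum (f := fun j => (M j).toReal) (fun i _ => by positivity) (Finset.mem_univ j)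

lemma eLp_ofReal {α : Type*} [MeasurableSpace α] {μ : Measure α} {p : ℝ} (hp : 1 < p) (f : α → ℝ) :
    eLpNorm f (ENNReal.ofReal p) μ = (∫⁻ x, ‖f x‖ₑ ^ p ∂μ) ^ (1 / p) := by
  rw [eLpNorm_eq_lintegral_rpow_enorm_toReal (by simp; linarith) (by simp), ENNReal.toReal_ofReal (by linarith)]

lemma key_ineq (d : ℕ) (hd : 0 < d) {p : ℝ} (hp : 1 < p) : ∃ C : ℝ, 0 < C ∧
    ∀ f : Fin d → Ed d → ℝ, (∀ k, MemLp (f k) (ENNReal.ofReal p) volume) →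
    ∀ e : Ed d × ℝ, ∀ j : Fin d, ∀ t : ℝ, 0 < t →
    eLpNorm (fun x => ∑ k, cv (DT e k (QK d j)) (f k) (x, t)) (ENNReal.ofReal p) volume
      ≤ ENNReal.ofReal C *
        eLpNorm (fun x => ∑ k, cv (DT e k (PK d)) (f k) (x, t)) (ENNReal.ofReal p) volume := by
  obtain ⟨C, hC, hb⟩ := QK_bound d hp
  obtain ⟨K, hK, hlim⟩ := main_lim d hd
  have hp0 : 0 < p := by linarith
  have hpq : p.HolderConjugate (Real.conjExponent p) := Real.HolderConjugate.conjExponent hp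
  set q := Real.conjExponent p
  have hq1 := hpq.symm.lt
  have hdq : (d:ℝ) < ((d + 1 : ℕ) : ℝ) * q := by
    have : (0:ℝ) < d := by exact_mod_cast hd
    push_cast
    nlinarith
  refine ⟨K⁻¹ * (C + 1) ^ (1 / p), by positivity, ?_⟩
  intro f hf e j t ht
  set w : Ed d → ℝ := fun x => ∑ k, cv (DT e k (PK d)) (f k) (x, t) with hw
  set S : Ed d → ℝ := fun x => ∑ k, cv (DT e k (QK d j)) (f k) (x, t) with hS
  have hwc : Continuous w := continuous_finsetSum _ fun k _ =>
    cv_cont_slice (DT_hom (PK_hom d) e k) hpq hdq (hf k) ht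
  by_cases hfin : eLpNorm w (ENNReal.ofReal p) volume = ∞
  · rw [hfin, ENNReal.mul_top]
    · exact le_top
    · rw [Ne, ENNReal.ofReal_eq_zero, not_le]; positivity
  have hwm : MemLp w (ENNReal.ofReal p) volume := ⟨hwc.aestronglyMeasurable, lt_top_iff_ne_top.2 hfin⟩
  have hdq2 : (d:ℝ) < d * q := by
    have : (0:ℝ) < d := by exact_mod_cast hd
    nlinarith
  let sn : ℕ → ℝ := fun n => 1 / ((n:ℝ) + 1)
  have hsn0 : ∀ n, 0 < sn n := fun n => by simp only [sn]; positivity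
  have hsn : Tendsto sn atTop (𝓝[>] 0) :=
    tendsto_nhdsWithin_iff.2 ⟨tendsto_one_div_add_atTop_nhds_zero_nat, Eventually.of_forall hsn0⟩
  have hlim2 : ∀ x, Tendsto (fun n => ‖cv (QK d j) w (x, sn n)‖ₑ ^ p) atTop (𝓝 (‖K * S x‖ₑ ^ p)) := fun x =>
    ((ENNReal.continuous_rpow_const.comp continuous_enorm).tendsto _).comp
      ((hlim p q hpq f hf e j t ht x).comp hsn)
  have hF : ∫⁻ x, ‖K * S x‖ₑ ^ p ≤ ENNReal.ofReal (C + 1) * ∫⁻ x, ‖w x‖ₑ ^ p := by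
    calc ∫⁻ x, ‖K * S x‖ₑ ^ p
        = ∫⁻ x, liminf (fun n => ‖cv (QK d j) w (x, sn n)‖ₑ ^ p) atTop :=
          lintegral_congr fun x => (hlim2 x).liminf_eq.symm
      _ ≤ liminf (fun n => ∫⁻ x, ‖cv (QK d j) w (x, sn n)‖ₑ ^ p) atTop :=
          lintegral_liminf_le fun n =>
            (cv_cont_slice (QK_hom d j) hpq hdq2 hwm (hsn0 n)).measurable.enorm.pow_const p
      _ ≤ _ := by
          refine liminf_le_of_le (by isBoundedDefault) fun b hb' => ?_
          obtain ⟨n, hn⟩ := hb'.exists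
          refine hn.trans ((hb j w hwc hwm (sn n) (hsn0 n)).trans ?_)
          gcongr
          linarith
  have hF2 := ENNReal.rpow_le_rpow hF (by positivity : 0 ≤ 1 / p)
  rw [ENNReal.mul_rpow_of_nonneg _ _ (by positivity), ← eLp_ofReal hp, ← eLp_ofReal hp,
    ENNReal.ofReal_rpow_of_pos (by positivity)] at hF2
  have e1 : eLpNorm S (ENNReal.ofReal p) volume
      = ENNReal.ofReal K⁻¹ * eLpNorm (fun x => K * S x) (ENNReal.ofReal p) volume := by
    have := eLpNorm_const_smul (μ := volume) (p := ENNReal.ofReal p) K⁻¹ (fun x => K * S x)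
    rw [Real.enorm_of_nonneg (by positivity)] at this
    rw [← this]
    congr 1
    ext x
    simp only [Pi.smul_apply, smul_eq_mul]
    field_simp
  rw [e1, ENNReal.ofReal_mul (by positivity), mul_assoc]
  gcongr

lemma cv_slice_integrable {d n : ℕ} {Ψ : Ed d × ℝ → ℝ} (h : HomK d n Ψ) {p q : ℝ} (hpq : p.HolderConjugate q)
    (hd : (d:ℝ) < n * q) {f : Ed d → ℝ} (hf : MemLp f (ENNReal.ofReal p) volume) {t : ℝ} (ht : 0 < t)
    (x : Ed d) : Integrable (fun y => Ψ (y, t) * f (x - y)) volume := by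
  have h1 := h.memLp_slice ht hpq.symm.lt.le hd
  have h2 := hf.comp_measurePreserving (Measure.measurePreserving_sub_left volume x)
  have : (ENNReal.ofReal q).HolderConjugate (ENNReal.ofReal p) := hpq.symm.ennrealOfReal
  exact h1.integrable_mul h2

lemma BK_div (d n : ℕ) (y : Ed d) (t a : ℝ) : a / (‖y‖ ^ 2 + t ^ 2) ^ ((n:ℝ) / 2) = a * BK d n (y, t) := by
  unfold BK
  rw [neg_div, Real.rpow_neg (by positivity), div_eq_mul_inv]

lemma ker_eq (d : ℕ) (t : ℝ) (y : Ed d) :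
    halfSpacePoissonKernel d t y = (2 / sphereVol d) * PK d (y, t) := by
  have := BK_div d (d+1) y t ((2 / sphereVol d) * t)
  push_cast at this
  rw [halfSpacePoissonKernel, this, PK, mul_assoc]

lemma appendZero_castSucc (d : ℕ) (f : Ed d → Ed d) (y : Ed d) (j : Fin d) :
    appendZero d f y j.castSucc = f y j := by
  simp [appendZero, EuclideanSpace.equiv]

lemma appendZero_last (d : ℕ) (f : Ed d → Ed d) (y : Ed d) :
    appendZero d f y (Fin.last d) = 0 := by
  simp [appendZero, EuclideanSpace.equiv]

section
variable {d : ℕ} (hd : 0 < d) {p q : ℝ} (hpq : p.HolderConjugate q) {f : Ed d → Ed d}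
  (hf : ∀ k, MemLp (fun y => f y k) (ENNReal.ofReal p) volume)

lemma dq (hd : 0 < d) (hpq : p.HolderConjugate q) : (d:ℝ) < d * q := by
  have : (0:ℝ) < d := by exact_mod_cast hd
  have := hpq.symm.lt
  nlinarith

lemma u_integrable (hd : 0 < d) (hpq : p.HolderConjugate q)
    (hf : ∀ k, MemLp (fun y => f y k) (ENNReal.ofReal p) volume) {z : Ed d × ℝ} (hz : 0 < z.2) (i : Fin (d+1)) :
    Integrable (fun y => (halfSpacePoissonKernel d z.2 y • appendZero d f (z.1 - y)) i) volume := by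
  simp only [PiLp.smul_apply, smul_eq_mul]
  refine Fin.lastCases ?_ (fun j => ?_) i
  · simp only [appendZero_last, mul_zero]; exact integrable_zero _ _ _
  · simp only [appendZero_castSucc, ker_eq, mul_assoc]
    exact (cv_slice_integrable (PK_hom d) hpq (dq hd hpq) (hf j) hz z.1).const_mul _

lemma u_last (hd : 0 < d) (hpq : p.HolderConjugate q)
    (hf : ∀ k, MemLp (fun y => f y k) (ENNReal.ofReal p) volume) {z : Ed d × ℝ} (hz : 0 < z.2) :
    poissonInt d (d+1) (appendZero d f) z.1 z.2 (Fin.last d) = 0 := by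
  rw [poissonInt, eval_integral_piLp (u_integrable hd hpq hf hz)]
  simp [appendZero_last]

lemma u_cast (hd : 0 < d) (hpq : p.HolderConjugate q)
    (hf : ∀ k, MemLp (fun y => f y k) (ENNReal.ofReal p) volume) {z : Ed d × ℝ} (hz : 0 < z.2) (j : Fin d) :
    poissonInt d (d+1) (appendZero d f) z.1 z.2 j.castSucc
      = (2 / sphereVol d) * cv (PK d) (fun y => f y j) z := by
  rw [poissonInt, eval_integral_piLp (u_integrable hd hpq hf hz), cv_eq, ← integral_const_mul]
  refine integral_congr_ae (Eventually.of_forall fun y => ?_)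
  simp only [PiLp.smul_apply, smul_eq_mul, appendZero_castSucc, ker_eq, mul_assoc]

lemma ne_zero_snd {z : Ed d × ℝ} (hz : 0 < z.2) : z ≠ 0 := by
  rintro rfl; simp at hz

lemma pE_cast {t : ℝ} (ht : 0 < t) (j k : Fin d) (y : Ed d) : pEntry d t j.castSucc k.castSucc y
    = (2 / sphereVol d) * ((if j = k then PK d (y, t) else 0) - t * fderiv ℝ (QK d j) (y, t) (eb d k)) := by
  have h0 : ((y, t) : Ed d × ℝ) ≠ 0 := ne_zero_snd ht
  have := BK_div d (d+3) y t ((2 * ((d : ℝ) + 1) / sphereVol d) * t * snocVec d y t j.castSucc *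
    snocVec d y t k.castSucc)
  push_cast at this
  rw [pEntry, this, QK_eb d j k h0]
  simp only [snocVec, Fin.snoc_castSucc, PK]
  split_ifs <;> ring

lemma pE_last {t : ℝ} (ht : 0 < t) (k : Fin d) (y : Ed d) : pEntry d t (Fin.last d) k.castSucc y
    = -((2 / sphereVol d) * (t * fderiv ℝ (PK d) (y, t) (eb d k))) := by
  have h0 : ((y, t) : Ed d × ℝ) ≠ 0 := ne_zero_snd ht
  have := BK_div d (d+3) y t ((2 * ((d : ℝ) + 1) / sphereVol d) * t * snocVec d y t (Fin.last d) *
    snocVec d y t k.castSucc)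
  push_cast at this
  rw [pEntry, this, PK_eb d k h0]
  simp only [snocVec, Fin.snoc_castSucc, Fin.snoc_last]
  ring

lemma pConv_apply (t : ℝ) (x : Ed d) (i : Fin (d+1)) : pConv d t (appendZero d f) x i
    = ∫ y, ∑ k : Fin d, pEntry d t i k.castSucc y * f (x - y) k := by
  change (∫ y, ∑ j, pEntry d t i j y * appendZero d f (x - y) j) = _
  refine integral_congr_ae (Eventually.of_forall fun y => ?_)
  simp only
  rw [Fin.sum_univ_castSucc]
  simp only [appendZero_castSucc, appendZero_last, mul_zero, add_zero]

lemma U_last (hd : 0 < d) (hpq : p.HolderConjugate q)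
    (hf : ∀ k, MemLp (fun y => f y k) (ENNReal.ofReal p) volume) {z : Ed d × ℝ} (hz : 0 < z.2) :
    pConv d z.2 (appendZero d f) z.1 (Fin.last d)
      = -((2 / sphereVol d) * ∑ k, cv (fun w => w.2 * fderiv ℝ (PK d) w (eb d k)) (fun y => f y k) z) := by
  rw [pConv_apply, Finset.mul_sum, ← Finset.sum_neg_distrib]
  have hi : ∀ k, Integrable (fun y => (z.2 * fderiv ℝ (PK d) (y, z.2) (eb d k)) * f (z.1 - y) k) volume :=
    fun k => cv_slice_integrable (TD_hom (PK_hom d) k) hpq (dq hd hpq) (hf k) hz z.1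
  simp_rw [pE_last hz]
  rw [integral_finset_sum]
  · refine Finset.sum_congr rfl fun k _ => ?_
    rw [cv_eq, ← integral_const_mul, ← integral_neg]
    refine integral_congr_ae (Eventually.of_forall fun y => ?_)
    simp only
    ring
  · intro k _
    refine ((hi k).const_mul (-(2 / sphereVol d))).congr (Eventually.of_forall fun y => ?_)
    simp only
    ring

lemma U_cast (hd : 0 < d) (hpq : p.HolderConjugate q)
    (hf : ∀ k, MemLp (fun y => f y k) (ENNReal.ofReal p) volume) {z : Ed d × ℝ} (hz : 0 < z.2) (j : Fin d) :
    pConv d z.2 (appendZero d f) z.1 j.castSucc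
      = (2 / sphereVol d) * cv (PK d) (fun y => f y j) z
       - (2 / sphereVol d) * ∑ k, cv (fun w => w.2 * fderiv ℝ (QK d j) w (eb d k)) (fun y => f y k) z := by
  have hi : ∀ k, Integrable (fun y => (z.2 * fderiv ℝ (QK d j) (y, z.2) (eb d k)) * f (z.1 - y) k) volume :=
    fun k => cv_slice_integrable (TD_hom (QK_hom d j) k) hpq (dq hd hpq) (hf k) hz z.1
  have hP := cv_slice_integrable (PK_hom d) hpq (dq hd hpq) (hf j) hz z.1
  have hs : Integrable (fun y => ∑ k, (z.2 * fderiv ℝ (QK d j) (y, z.2) (eb d k)) * f (z.1 - y) k) volume :=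
    integrable_finset_sum _ fun k _ => hi k
  rw [pConv_apply]
  have e : ∀ y, ∑ k : Fin d, pEntry d z.2 j.castSucc k.castSucc y * f (z.1 - y) k
      = (2 / sphereVol d) * (PK d (y, z.2) * f (z.1 - y) j)
        - (2 / sphereVol d) * ∑ k, (z.2 * fderiv ℝ (QK d j) (y, z.2) (eb d k)) * f (z.1 - y) k := by
    intro y
    simp_rw [pE_cast hz, mul_assoc, sub_mul, mul_sub]
    rw [Finset.sum_sub_distrib, Finset.mul_sum]
    congr 1
    · simp [← Finset.mul_sum]
    · refine Finset.sum_congr rfl fun k _ => by ring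
  simp_rw [e]
  rw [integral_sub (hP.const_mul _) (hs.const_mul _), integral_const_mul, integral_const_mul,
    integral_finset_sum _ (fun k _ => hi k), cv_eq]
  simp_rw [cv_eq]
end

lemma final_est {d : ℕ} {p : ℝ} (hp : 1 < p) (v V : Ed d → Ed (d+1)) (a S : Fin d → Ed d → ℝ)
    (w : Ed d → ℝ) (c C : ℝ) (hC : 0 < C) (ha : ∀ j, Continuous (a j)) (hS : ∀ j, Continuous (S j))
    (h1 : ∀ x, v x (Fin.last d) = 0) (h2 : ∀ x j, v x (Fin.castSucc j) = c * a j x)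
    (h3 : ∀ x, V x (Fin.last d) = -(c * w x))
    (h4 : ∀ x j, V x (Fin.castSucc j) = c * a j x - c * S j x)
    (hb : ∀ j, eLpNorm (S j) (ENNReal.ofReal p) volume
      ≤ ENNReal.ofReal C * eLpNorm w (ENNReal.ofReal p) volume) :
    eLpNorm v (ENNReal.ofReal p) volume
      ≤ ENNReal.ofReal (d * (1 + C) + 1) * eLpNorm V (ENNReal.ofReal p) volume := by
  have hp1 : 1 ≤ ENNReal.ofReal p := by simpa using hp.le
  have hcomp : ∀ i, eLpNorm (fun x => V x i) (ENNReal.ofReal p) volume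
      ≤ eLpNorm V (ENNReal.ofReal p) volume := fun i =>
    eLpNorm_mono fun x => PiLp.norm_apply_le (V x) i
  have hsc : ∀ g : Ed d → ℝ, eLpNorm (fun x => c * g x) (ENNReal.ofReal p) volume
      = ‖c‖ₑ * eLpNorm g (ENNReal.ofReal p) volume := fun g =>
    eLpNorm_const_smul (μ := volume) (p := ENNReal.ofReal p) c g
  have hw : ‖c‖ₑ * eLpNorm w (ENNReal.ofReal p) volume ≤ eLpNorm V (ENNReal.ofReal p) volume := by
    refine le_trans (le_of_eq ?_) (hcomp (Fin.last d))
    simp only [h3]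
    rw [← hsc]
    exact (eLpNorm_neg (fun x => c * w x) _ _).symm
  have hj : ∀ j, eLpNorm (fun x => c * a j x) (ENNReal.ofReal p) volume
      ≤ ENNReal.ofReal (1 + C) * eLpNorm V (ENNReal.ofReal p) volume := by
    intro j
    have e : (fun x => c * a j x) = (fun x => c * a j x - c * S j x) + (fun x => c * S j x) := by
      ext x; simp
    rw [e]
    refine (eLpNorm_add_le (by have := ha j; have := hS j; exact Continuous.aestronglyMeasurable (by fun_prop))
      (by have := hS j; exact Continuous.aestronglyMeasurable (by fun_prop)) hp1).trans ?_
    rw [ENNReal.ofReal_add zero_le_one hC.le, add_mul, ENNReal.ofReal_one, one_mul]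
    refine add_le_add ?_ ?_
    · have := hcomp j.castSucc
      simpa only [h4] using this
    · rw [hsc]
      calc ‖c‖ₑ * eLpNorm (S j) (ENNReal.ofReal p) volume
          ≤ ‖c‖ₑ * (ENNReal.ofReal C * eLpNorm w (ENNReal.ofReal p) volume) := by gcongr; exact hb j
        _ = ENNReal.ofReal C * (‖c‖ₑ * eLpNorm w (ENNReal.ofReal p) volume) := by ring
        _ ≤ _ := by gcongr
  have hn : ∀ x, ‖v x‖ ≤ ‖(∑ j, fun x => ‖c * a j x‖) x‖ := by
    intro x
    rw [Finset.sum_apply, Real.norm_of_nonneg (Finset.sum_nonneg fun j _ => norm_nonneg _)]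
    have e : v x = ∑ i, (v x i) • EuclideanSpace.single i (1:ℝ) := by
      have := (EuclideanSpace.basisFun (Fin (d+1)) ℝ).sum_repr (v x)
      simpa using this.symm
    rw [e]
    refine (norm_sum_le _ _).trans ?_
    rw [Fin.sum_univ_castSucc]
    simp [norm_smul, h1, h2]
  calc eLpNorm v (ENNReal.ofReal p) volume
      ≤ eLpNorm (∑ j, fun x => ‖c * a j x‖) (ENNReal.ofReal p) volume := eLpNorm_mono hn
    _ ≤ ∑ j, eLpNorm (fun x => ‖c * a j x‖) (ENNReal.ofReal p) volume := by
        refine eLpNorm_sum_le (fun j _ => ?_) hp1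
        have := ha j
        exact Continuous.aestronglyMeasurable (by fun_prop)
    _ ≤ ∑ j : Fin d, ENNReal.ofReal (1 + C) * eLpNorm V (ENNReal.ofReal p) volume := by
        refine Finset.sum_le_sum fun j _ => ?_
        rw [eLpNorm_norm]
        exact hj j
    _ = ENNReal.ofReal (d * (1 + C)) * eLpNorm V (ENNReal.ofReal p) volume := by
        rw [ENNReal.ofReal_mul (by positivity)]
        simp [mul_assoc]
    _ ≤ _ := by gcongr; linarith

lemma pos_nhds {d : ℕ} {z : Ed d × ℝ} (hz : 0 < z.2) : ∀ᶠ w in 𝓝 z, 0 < w.2 :=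
  (isOpen_lt continuous_const continuous_snd).mem_nhds hz

lemma fderiv_comp_apply {d m : ℕ} {G : Ed d × ℝ → Ed m} {z : Ed d × ℝ} (hG : DifferentiableAt ℝ G z)
    (e : Ed d × ℝ) (i : Fin m) : (fderiv ℝ G z e) i = fderiv ℝ (fun w => G w i) z e := by
  have := ((EuclideanSpace.proj (𝕜 := ℝ) i).hasFDerivAt (x := G z)).comp z hG.hasFDerivAt
  have h2 : fderiv ℝ (fun w => G w i) z = _ := this.fderiv
  rw [h2]
  rfl

section
variable {d : ℕ} {p q : ℝ} {f : Ed d → Ed d}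

lemma u_diff (hd : 0 < d) (hpq : p.HolderConjugate q)
    (hf : ∀ k, MemLp (fun y => f y k) (ENNReal.ofReal p) volume) {z : Ed d × ℝ} (hz : 0 < z.2) :
    DifferentiableAt ℝ (fun z : Ed d × ℝ => poissonInt d (d+1) (appendZero d f) z.1 z.2) z := by
  rw [differentiableAt_euclidean]
  intro i
  refine Fin.lastCases ?_ (fun j => ?_) i
  · refine (differentiableAt_const (0:ℝ)).congr_of_eventuallyEq ?_
    filter_upwards [pos_nhds hz] with w hw using u_last hd hpq hf hw
  · refine ((cv_diff (PK_hom d) hpq (dq hd hpq) (hf j) hz).const_mul (2 / sphereVol d)).congr_of_eventuallyEq ?_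
    filter_upwards [pos_nhds hz] with w hw using u_cast hd hpq hf hw j

lemma sum_cv_has (hd : 0 < d) (hpq : p.HolderConjugate q)
    (hf : ∀ k, MemLp (fun y => f y k) (ENNReal.ofReal p) volume) {z : Ed d × ℝ} (hz : 0 < z.2)
    {Ψ : Ed d × ℝ → ℝ} (h : HomK d d Ψ) :
    DifferentiableAt ℝ (fun z => (2 / sphereVol d) * ∑ k, cv (fun w => w.2 * fderiv ℝ Ψ w (eb d k)) (fun y => f y k) z) z
    ∧ ∀ e, fderiv ℝ (fun z => (2 / sphereVol d) * ∑ k, cv (fun w => w.2 * fderiv ℝ Ψ w (eb d k)) (fun y => f y k) z) z e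
      = (2 / sphereVol d) * ∑ k, cv (DT e k Ψ) (fun y => f y k) z := by
  have h0 : ∀ k, DifferentiableAt ℝ (cv (fun w => w.2 * fderiv ℝ Ψ w (eb d k)) (fun y => f y k)) z := fun k =>
    cv_diff (TD_hom h k) hpq (dq hd hpq) (hf k) hz
  have h1 := (HasFDerivAt.fun_sum (u := Finset.univ) fun k _ => (h0 k).hasFDerivAt).const_mul (2 / sphereVol d)
  refine ⟨h1.differentiableAt, fun e => ?_⟩
  rw [h1.fderiv]
  simp only [ContinuousLinearMap.smul_apply, ContinuousLinearMap.sum_apply, smul_eq_mul]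
  congr 1
  refine Finset.sum_congr rfl fun k _ => ?_
  rw [cv_fderiv (TD_hom h k) hpq (dq hd hpq) (hf k) hz]
  rfl

lemma U_diff (hd : 0 < d) (hpq : p.HolderConjugate q)
    (hf : ∀ k, MemLp (fun y => f y k) (ENNReal.ofReal p) volume) {z : Ed d × ℝ} (hz : 0 < z.2) :
    DifferentiableAt ℝ (fun z : Ed d × ℝ => pConv d z.2 (appendZero d f) z.1) z := by
  rw [differentiableAt_euclidean]
  intro i
  refine Fin.lastCases ?_ (fun j => ?_) i
  · refine (sum_cv_has hd hpq hf hz (PK_hom d)).1.neg.congr_of_eventuallyEq ?_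
    filter_upwards [pos_nhds hz] with w hw using U_last hd hpq hf hw
  · refine (((cv_diff (PK_hom d) hpq (dq hd hpq) (hf j) hz).const_mul (2 / sphereVol d)).sub
      (sum_cv_has hd hpq hf hz (QK_hom d j)).1).congr_of_eventuallyEq ?_
    filter_upwards [pos_nhds hz] with w hw using U_cast hd hpq hf hw j

lemma main_est (hd : 0 < d) (hp : 1 < p) (hpq : p.HolderConjugate q)
    (hf : ∀ k, MemLp (fun y => f y k) (ENNReal.ofReal p) volume) {t : ℝ} (ht : 0 < t) (e : Ed d × ℝ) {C : ℝ}
    (hC : 0 < C) (hb : ∀ j : Fin d,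
      eLpNorm (fun x => ∑ k, cv (DT e k (QK d j)) (fun y => f y k) (x, t)) (ENNReal.ofReal p) volume
      ≤ ENNReal.ofReal C *
        eLpNorm (fun x => ∑ k, cv (DT e k (PK d)) (fun y => f y k) (x, t)) (ENNReal.ofReal p) volume) :
    eLpNorm (fun x => fderiv ℝ (fun z : Ed d × ℝ => poissonInt d (d+1) (appendZero d f) z.1 z.2) (x, t) e)
        (ENNReal.ofReal p) volume
      ≤ ENNReal.ofReal (d * (1 + C) + 1) *
        eLpNorm (fun x => fderiv ℝ (fun z : Ed d × ℝ => pConv d z.2 (appendZero d f) z.1) (x, t) e)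
        (ENNReal.ofReal p) volume := by
  have hdq : (d:ℝ) < ((d + 1 : ℕ) : ℝ) * q := by
    have := dq hd hpq
    have := hpq.symm.lt
    push_cast
    nlinarith
  have hz : ∀ x : Ed d, 0 < ((x, t) : Ed d × ℝ).2 := fun x => ht
  refine final_est hp _ _ (fun j x => cv (fun w => fderiv ℝ (PK d) w e) (fun y => f y j) (x, t))
    (fun j x => ∑ k, cv (DT e k (QK d j)) (fun y => f y k) (x, t))
    (fun x => ∑ k, cv (DT e k (PK d)) (fun y => f y k) (x, t)) (2 / sphereVol d) C hC ?_ ?_ ?_ ?_ ?_ ?_ hb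
  · exact fun j => cv_cont_slice ((PK_hom d).deriv e) hpq hdq (hf j) ht
  · exact fun j => continuous_finsetSum _ fun k _ =>
      cv_cont_slice (DT_hom (QK_hom d j) e k) hpq hdq (hf k) ht
  · intro x
    rw [fderiv_comp_apply (u_diff hd hpq hf (hz x))]
    have : (fun w : Ed d × ℝ => poissonInt d (d+1) (appendZero d f) w.1 w.2 (Fin.last d)) =ᶠ[𝓝 (x, t)]
        fun _ => (0:ℝ) := by
      filter_upwards [pos_nhds (hz x)] with w hw using u_last hd hpq hf hw
    rw [this.fderiv_eq]
    simp
  · intro x j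
    rw [fderiv_comp_apply (u_diff hd hpq hf (hz x))]
    have : (fun w : Ed d × ℝ => poissonInt d (d+1) (appendZero d f) w.1 w.2 j.castSucc) =ᶠ[𝓝 (x, t)]
        fun w => (2 / sphereVol d) * cv (PK d) (fun y => f y j) w := by
      filter_upwards [pos_nhds (hz x)] with w hw using u_cast hd hpq hf hw j
    rw [this.fderiv_eq, fderiv_const_mul (cv_diff (PK_hom d) hpq (dq hd hpq) (hf j) (hz x)),
      ContinuousLinearMap.smul_apply, cv_fderiv (PK_hom d) hpq (dq hd hpq) (hf j) (hz x), smul_eq_mul]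
  · intro x
    rw [fderiv_comp_apply (U_diff hd hpq hf (hz x))]
    have : (fun w : Ed d × ℝ => pConv d w.2 (appendZero d f) w.1 (Fin.last d)) =ᶠ[𝓝 (x, t)]
        fun z => -((2 / sphereVol d) * ∑ k, cv (fun w => w.2 * fderiv ℝ (PK d) w (eb d k)) (fun y => f y k) z) := by
      filter_upwards [pos_nhds (hz x)] with w hw using U_last hd hpq hf hw
    rw [this.fderiv_eq, fderiv_fun_neg, ContinuousLinearMap.neg_apply,
      (sum_cv_has hd hpq hf (hz x) (PK_hom d)).2 e]
  · intro x j
    rw [fderiv_comp_apply (U_diff hd hpq hf (hz x))]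
    have : (fun w : Ed d × ℝ => pConv d w.2 (appendZero d f) w.1 j.castSucc) =ᶠ[𝓝 (x, t)]
        fun z => (2 / sphereVol d) * cv (PK d) (fun y => f y j) z
       - (2 / sphereVol d) * ∑ k, cv (fun w => w.2 * fderiv ℝ (QK d j) w (eb d k)) (fun y => f y k) z := by
      filter_upwards [pos_nhds (hz x)] with w hw using U_cast hd hpq hf hw j
    have hP := cv_diff (PK_hom d) hpq (dq hd hpq) (hf j) (hz x)
    rw [this.fderiv_eq, fderiv_fun_sub (hP.const_mul _) (sum_cv_has hd hpq hf (hz x) (QK_hom d j)).1,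
      ContinuousLinearMap.sub_apply,
      (sum_cv_has hd hpq hf (hz x) (QK_hom d j)).2 e, fderiv_const_mul hP,
      ContinuousLinearMap.smul_apply, cv_fderiv (PK_hom d) hpq (dq hd hpq) (hf j) (hz x), smul_eq_mul]
end

lemma slice_t {d m : ℕ} {G : Ed d × ℝ → Ed m} {x : Ed d} {t : ℝ} (hG : DifferentiableAt ℝ G (x, t)) :
    deriv (fun τ => G (x, τ)) t = fderiv ℝ G (x, t) (0, 1) := by
  have h : HasDerivAt (fun τ : ℝ => ((x, τ) : Ed d × ℝ)) (0, 1) t :=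
    (hasDerivAt_const t x).prodMk (hasDerivAt_id t)
  exact (hG.hasFDerivAt.comp_hasDerivAt t h).deriv

lemma slice_x {d m : ℕ} {G : Ed d × ℝ → Ed m} {x : Ed d} {t : ℝ} (hG : DifferentiableAt ℝ G (x, t))
    (e : Ed d) : fderiv ℝ (fun z => G (z, t)) x e = fderiv ℝ G (x, t) (e, 0) := by
  have h := (hasFDerivAt_id (𝕜 := ℝ) x).prodMk (hasFDerivAt_const t x)
  have h2 := (hG.hasFDerivAt.comp x h).fderiv
  have h3 : fderiv ℝ (fun z => G (z, t)) x = _ := h2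
  rw [h3]
  rfl

theorem poisson_vs_pConv_derivatives (d : ℕ) (p : ℝ) (hp : 1 < p) :
    ∃ C : ℝ, 0 < C ∧
      ∀ f : Ed d → Ed d, MemLp f (ENNReal.ofReal p) volume →
        ∀ t : ℝ, 0 < t →
          (eLpNorm (fun x => deriv (fun τ => poissonInt d (d + 1) (appendZero d f) x τ) t)
              (ENNReal.ofReal p) volume ≤
            ENNReal.ofReal C *
              eLpNorm (fun x => deriv (fun τ => pConv d τ (appendZero d f) x) t)
                (ENNReal.ofReal p) volume) ∧
          ∀ k : Fin d,
            eLpNorm (fun x => fderiv ℝ (fun z => poissonInt d (d + 1) (appendZero d f) z t) x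
                (EuclideanSpace.single k 1))
              (ENNReal.ofReal p) volume ≤
              ENNReal.ofReal C *
                eLpNorm (fun x => fderiv ℝ (fun z => pConv d t (appendZero d f) z) x
                    (EuclideanSpace.single k 1))
                  (ENNReal.ofReal p) volume := by
  rcases Nat.eq_zero_or_pos d with rfl | hd
  · refine ⟨1, one_pos, fun f _ t _ => ⟨?_, fun k => k.elim0⟩⟩
    have h0 : appendZero 0 f = fun _ => 0 := by
      ext y i
      refine Fin.lastCases ?_ (fun j => j.elim0) i
      exact appendZero_last 0 f y
    have h1 : ∀ x τ, poissonInt 0 (0 + 1) (appendZero 0 f) x τ = 0 := by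
      intro x τ
      simp [poissonInt, h0]
    simp [h1]
  · obtain ⟨C, hC, hk⟩ := key_ineq d hd hp
    refine ⟨d * (1 + C) + 1, by positivity, fun f hf t ht => ?_⟩
    have hf2 : ∀ k, MemLp (fun y => f y k) (ENNReal.ofReal p) volume := fun k => hf.eval_piLp k
    have hpq : p.HolderConjugate (Real.conjExponent p) := Real.HolderConjugate.conjExponent hp
    have hu : ∀ x : Ed d, _ := fun x => u_diff hd hpq hf2 (z := (x, t)) ht
    have hU : ∀ x : Ed d, _ := fun x => U_diff hd hpq hf2 (z := (x, t)) ht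
    have hm := fun e => main_est hd hp hpq hf2 ht e hC fun j => hk (fun k y => f y k) hf2 e j t ht
    refine ⟨?_, fun k => ?_⟩
    · have e1 : ∀ x, deriv (fun τ => poissonInt d (d + 1) (appendZero d f) x τ) t = _ := fun x => slice_t (hu x)
      have e2 : ∀ x, deriv (fun τ => pConv d τ (appendZero d f) x) t = _ := fun x => slice_t (hU x)
      simp only [e1, e2]
      exact hm (0, 1)
    · have e1 : ∀ x, fderiv ℝ (fun z => poissonInt d (d + 1) (appendZero d f) z t) x
                (EuclideanSpace.single k 1) = _ := fun x => slice_x (hu x) _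
      have e2 : ∀ x, fderiv ℝ (fun z => pConv d t (appendZero d f) z) x
                (EuclideanSpace.single k 1) = _ := fun x => slice_x (hU x) _
      simp only [e1, e2]
      exact hm (EuclideanSpace.single k 1, 0)
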